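/- arXiv:2001.01951 — 2 statements merged into one kernel-verified Lean document; each statement's English description precedes it below -/
import Mathlib

section
/- (Ronkin, 1978.) Let f : ℝ^d → ℂ be a function that is an exponential polynomial in each variable separately: for each k ∈ {1,...,d} and each point (a_1,...,a_{k-1},a_{k+1},...,a_d) ∈ ℝ^{d-1}, the one-variable function x_k ↦ f(a_1,...,a_{k-1},x_k,a_{k+1},...,a_d) is an exponential polynomial on ℝ. Then f has the form f(x_1,...,x_d) = Σ_{k=1}^s P_k(x_1,...,x_d) exp(λ_k(x_1,...,x_d)), where each P_k is a polynomial in ℂ[x_1,...,x_d] and each λ_k is a polynomial in ℂ[x_1,...,x_d] of degree at most 1 in each variable separately. -/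
/-- `g : ℝ → ℂ` is an exponential polynomial: a finite sum of terms
`Q_j(t) * exp(μ_j t)` with `Q_j` complex polynomials and `μ_j ∈ ℂ`. -/
def IsExpPoly1 (g : ℝ → ℂ) : Prop :=
  ∃ (m : ℕ) (Q : Fin m → Polynomial ℂ) (mu : Fin m → ℂ),
    ∀ t : ℝ, g t = ∑ j, Polynomial.eval (t : ℂ) (Q j) * Complex.exp (mu j * t)

/-!
The proof is by induction on the number of variables: `f` is an exponential polynomial in `y` whose
values at fixed `y` are of the required form in the remaining variables `x`.

By Baire category and analyticity in `x`, the Hankel matrices `f (x, yᵢ + zⱼ)` have bounded rank.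
Where the rank is maximal, the translation `y ↦ y + h` acts on the translates of `f (x, ·)` by a
matrix whose entries depend continuously on `x` and whose eigenvalues are `exp (ν h)`, with `ν` the
frequencies of `f (x, ·)`. Hence these frequencies form, locally, finitely many continuous branches
`ν (x)`. Bounded Hankel rank along the direction of another variable `xᵢ` makes the exponents
`ν (x + t eᵢ) y` subject to linear dependences that force every branch to be affine in `xᵢ`. Thus
the branches are multi-affine polynomials, and locally `f = ∑ q_b(x) y ^ j_b exp (ν_b(x) y)`.
By Cramer's rule the `q_b` are quotients of exponential polynomials with a common denominator;
a grading argument shows that the divisions are exact, so the formula holds globally.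
-/

section PolynomialExponents

open Polynomial

/-- The operator `Q ↦ Q' + q' Q`, which describes the derivative of `Q * exp q`. -/
noncomputable def expDerivative {R : Type*} [CommRing R] (q Q : R[X]) : R[X] :=
  derivative Q + derivative q * Q

theorem expDerivative_ne_zero {R : Type*} [CommRing R] [NoZeroDivisors R] {q Q : R[X]}
    (hq : derivative q ≠ 0) (hQ : Q ≠ 0) : expDerivative q Q ≠ 0 := by
  intro h
  have hderiv : derivative Q = -(derivative q * Q) := eq_neg_of_add_eq_zero_left h
  have hdeg : (derivative Q).degree < Q.degree := degree_derivative_lt hQ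
  rw [hderiv, degree_neg, degree_mul] at hdeg
  exact absurd hdeg (not_lt.2 (le_add_of_nonneg_left (zero_le_degree_iff.2 hq)))

theorem iterate_expDerivative_ne_zero {R : Type*} [CommRing R] [NoZeroDivisors R] {q Q : R[X]}
    (hq : derivative q ≠ 0) (hQ : Q ≠ 0) (N : ℕ) : (expDerivative q)^[N] Q ≠ 0 := by
  induction N with
  | zero => exact hQ
  | succ N ih =>
    rw [Function.iterate_succ_apply']
    exact expDerivative_ne_zero hq ih

theorem hasDerivAt_eval_mul_exp (q Q : ℂ[X]) (t : ℝ) :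
    HasDerivAt (fun t : ℝ => Q.eval (t : ℂ) * Complex.exp (q.eval (t : ℂ)))
      ((expDerivative q Q).eval (t : ℂ) * Complex.exp (q.eval (t : ℂ))) t := by
  refine ((Q.hasDerivAt (t : ℂ)).comp_ofReal.mul
    (q.hasDerivAt (t : ℂ)).comp_ofReal.cexp).congr_deriv ?_
  simp only [expDerivative, eval_add, eval_mul]
  ring

theorem sum_iterate_expDerivative_mul_exp_eq_zero {ι : Type*} {s : Finset ι} {Q q : ι → ℂ[X]}
    (h : ∀ t : ℝ, ∑ i ∈ s, (Q i).eval (t : ℂ) * Complex.exp ((q i).eval (t : ℂ)) = 0)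
    (N : ℕ) (t : ℝ) :
    ∑ i ∈ s, ((expDerivative (q i))^[N] (Q i)).eval (t : ℂ) *
      Complex.exp ((q i).eval (t : ℂ)) = 0 := by
  induction N generalizing t with
  | zero => exact h t
  | succ N ih =>
    simp only [Function.iterate_succ_apply']
    refine (HasDerivAt.fun_sum (u := s) fun i _ => hasDerivAt_eval_mul_exp (q i)
      ((expDerivative (q i))^[N] (Q i)) t).unique ?_
    simpa only [funext ih] using hasDerivAt_const t (0 : ℂ)

theorem polynomial_eq_zero_of_eval_ofReal {Q : ℂ[X]} (h : ∀ t : ℝ, Q.eval (t : ℂ) = 0) : Q = 0 :=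
  Q.eq_zero_of_infinite_isRoot ((Set.infinite_range_of_injective Complex.ofReal_injective).mono
    (Set.range_subset_iff.2 h))

-- Divide by one exponential; enough derivatives then annihilate its coefficient but no other.
theorem forall_eq_zero_of_sum_mul_exp_eq_zero {ι : Type*} (s : Finset ι) (Q q : ι → ℂ[X])
    (hq : (s : Set ι).Pairwise fun i j => derivative (q i - q j) ≠ 0)
    (h : ∀ t : ℝ, ∑ i ∈ s, (Q i).eval (t : ℂ) * Complex.exp ((q i).eval (t : ℂ)) = 0) :
    ∀ i ∈ s, Q i = 0 := by
  classical
  induction s using Finset.induction_on generalizing Q q with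
  | empty => simp
  | insert a s ha ih =>
    have hshift (t : ℝ) : ∑ i ∈ insert a s,
        (Q i).eval (t : ℂ) * Complex.exp ((q i - q a).eval (t : ℂ)) = 0 := by
      simp only [eval_sub, Complex.exp_sub, ← mul_div_assoc, ← Finset.sum_div, h, zero_div]
    have hkill : (expDerivative (q a - q a))^[(Q a).natDegree + 1] (Q a) = 0 := by
      have hop : expDerivative (q a - q a) = derivative := by
        funext R
        rw [expDerivative, sub_self, derivative_zero, zero_mul, add_zero]
      rw [hop, iterate_derivative_eq_zero (Nat.lt_succ_self _)]
    have hrest : ∀ i ∈ s, (expDerivative (q i - q a))^[(Q a).natDegree + 1] (Q i) = 0 := by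
      refine ih _ (fun i => q i - q a) (fun i hi j hj hij => ?_) fun t => ?_
      · simpa only [sub_sub_sub_cancel_right] using
          hq (Finset.mem_insert_of_mem hi) (Finset.mem_insert_of_mem hj) hij
      · have hsum := sum_iterate_expDerivative_mul_exp_eq_zero hshift ((Q a).natDegree + 1) t
        rwa [Finset.sum_insert ha, hkill, eval_zero, zero_mul, zero_add] at hsum
    have hs : ∀ i ∈ s, Q i = 0 := fun i hi => by_contra fun hQ =>
      iterate_expDerivative_ne_zero (hq (Finset.mem_insert_of_mem hi) (Finset.mem_insert_self a s)
        (fun hia => ha (hia ▸ hi))) hQ _ (hrest i hi)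
    refine Finset.forall_mem_insert _ _ _ |>.2 ⟨polynomial_eq_zero_of_eval_ofReal fun t => ?_, hs⟩
    have hsum := h t
    rw [Finset.sum_insert ha, Finset.sum_eq_zero fun i hi => by rw [hs i hi, eval_zero, zero_mul],
      add_zero] at hsum
    exact (mul_eq_zero.1 hsum).resolve_right (Complex.exp_ne_zero _)

end PolynomialExponents

section ExponentialSums

open Polynomial

/-- The exponential polynomial `t ↦ ∑ ν, (p ν)(t) exp(ν t)` with the finitely many polynomial
coefficients `p`; its set of frequencies is `p.support`. -/
noncomputable def expSum : (ℂ →₀ ℂ[X]) →ₗ[ℂ] ℝ → ℂ :=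
  LinearMap.pi fun t => Finsupp.lsum ℂ fun ν => Complex.exp (ν * t) • leval (t : ℂ)

theorem expSum_apply (p : ℂ →₀ ℂ[X]) (t : ℝ) :
    expSum p t = ∑ ν ∈ p.support, (p ν).eval (t : ℂ) * Complex.exp (ν * t) := by
  simp [expSum, Finsupp.sum, mul_comm]

@[simp]
theorem expSum_single (ν : ℂ) (Q : ℂ[X]) (t : ℝ) :
    expSum (Finsupp.single ν Q) t = Q.eval (t : ℂ) * Complex.exp (ν * t) := by
  simp [expSum, mul_comm]

theorem expSum_injective : Function.Injective expSum := by
  refine (injective_iff_map_eq_zero _).2 fun p hp => ?_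
  have hcoeff := forall_eq_zero_of_sum_mul_exp_eq_zero p.support p (fun ν => C ν * X)
    (fun ν _ μ _ hνμ => by
      simpa only [← sub_mul, ← C_sub, derivative_C_mul, derivative_X, mul_one, Ne, C_eq_zero,
        sub_eq_zero] using hνμ)
    (fun t => by
      simpa only [eval_mul, eval_C, eval_X, ← expSum_apply, Pi.zero_apply] using congrFun hp t)
  exact Finsupp.support_eq_empty.1 (Finset.eq_empty_of_forall_notMem fun ν hν =>
    Finsupp.mem_support_iff.1 hν (hcoeff ν hν))

theorem IsExpPoly1.exists_expSum_eq {g : ℝ → ℂ} (hg : IsExpPoly1 g) : ∃ p, expSum p = g := by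
  obtain ⟨m, Q, μ, h⟩ := hg
  refine ⟨∑ j, Finsupp.single (μ j) (Q j), funext fun t => ?_⟩
  simp only [map_sum, Finset.sum_apply, expSum_single, h]

theorem exists_ne_of_sum_mul_exp_eq_zero {ι : Type*} [Fintype ι] {Q : ι → ℂ[X]} {μ : ι → ℂ}
    (h : ∀ t : ℝ, ∑ i, (Q i).eval (t : ℂ) * Complex.exp (μ i * t) = 0) {i₀ : ι}
    (hQ : Q i₀ ≠ 0) : ∃ i, i ≠ i₀ ∧ μ i = μ i₀ := by
  by_contra! hne
  have hsum : ∑ i, Finsupp.single (μ i) (Q i) = 0 :=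
    expSum_injective (funext fun t => by simpa using h t)
  have hcoeff := DFunLike.congr_fun hsum (μ i₀)
  rw [Finsupp.finsetSum_apply, Fintype.sum_eq_single i₀ fun i hi => by
    rw [Finsupp.single_eq_of_ne (hne i hi).symm], Finsupp.single_eq_same] at hcoeff
  exact hQ hcoeff

/-- The action on coefficients of the translation `g ↦ g (· + z)` of exponential polynomials. -/
noncomputable def expTranslate (z : ℂ) : (ℂ →₀ ℂ[X]) →ₗ[ℂ] ℂ →₀ ℂ[X] :=
  Finsupp.lsum ℂ fun ν => Complex.exp (ν * z) • Finsupp.lsingle ν ∘ₗ taylor z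

theorem expTranslate_apply (z : ℂ) (p : ℂ →₀ ℂ[X]) (ν : ℂ) :
    expTranslate z p ν = Complex.exp (ν * z) • taylor z (p ν) := by
  induction p using Finsupp.induction_linear with
  | zero => simp
  | add p q hp hq => simp [hp, hq]
  | single μ Q =>
    by_cases h : μ = ν
    · simp [expTranslate, h]
    · simp [expTranslate, Finsupp.single_eq_of_ne (Ne.symm h)]

theorem expSum_expTranslate (z : ℝ) (p : ℂ →₀ ℂ[X]) (y : ℝ) :
    expSum (expTranslate z p) y = expSum p (y + z) := by
  induction p using Finsupp.induction_linear with
  | zero => simp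
  | add p q hp hq => simp [hp, hq]
  | single μ Q =>
    have hexp : Complex.exp (μ * (y + z)) = Complex.exp (μ * z) * Complex.exp (μ * y) := by
      rw [← Complex.exp_add, mul_add, add_comm]
    simp [expTranslate, taylor_eval, hexp, mul_assoc, mul_left_comm]

theorem exp_eq_sum_of_translate_eq_sum {ι : Type*} [Fintype ι] {p : ℂ →₀ ℂ[X]} {w : ℝ}
    {c : ι → ℂ} {z : ι → ℝ} (h : ∀ y, expSum p (y + w) = ∑ j, c j * expSum p (y + z j)) {ν : ℂ}
    (hν : ν ∈ p.support) : Complex.exp (ν * w) = ∑ j, c j * Complex.exp (ν * z j) := by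
  have hformal : expTranslate w p = ∑ j, c j • expTranslate (z j) p :=
    expSum_injective (funext fun y => by simpa [expSum_expTranslate] using h y)
  have hlead := congrArg (fun Q : ℂ[X] => Q.coeff (p ν).natDegree) (DFunLike.congr_fun hformal ν)
  simp only [Finsupp.finsetSum_apply, Finsupp.smul_apply, expTranslate_apply, finsetSum_coeff,
    coeff_smul, coeff_taylor_natDegree, smul_eq_mul, ← mul_assoc, ← Finset.sum_mul] at hlead
  exact mul_right_cancel₀ (leadingCoeff_ne_zero.2 (Finsupp.mem_support_iff.1 hν)) hlead

/-- The function `t ↦ t ^ j * exp (ν t)`. -/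
noncomputable def expMonomial (j : ℕ) (ν : ℂ) (t : ℝ) : ℂ := (t : ℂ) ^ j * Complex.exp (ν * t)

theorem continuous_expMonomial (j : ℕ) (ν : ℂ) : Continuous (expMonomial j ν) := by
  unfold expMonomial
  fun_prop

theorem linearIndependent_expMonomial {ι : Type*} {j : ι → ℕ} {ν : ι → ℂ}
    (hinj : Function.Injective fun i => (j i, ν i)) {Y : Set ℝ} (hY : Dense Y) :
    LinearIndependent ℂ fun i (y : Y) => expMonomial (j i) (ν i) y := by
  have hcoeff : LinearIndependent ℂ fun i => Finsupp.single (ν i) (X ^ j i : ℂ[X]) := by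
    have hbasis := (Finsupp.basis fun _ : ℂ => basisMonomials ℂ).linearIndependent.comp
      (fun i => ⟨ν i, j i⟩) fun i i' h => hinj (by simpa [and_comm] using h)
    simpa [Function.comp_def, X_pow_eq_monomial] using hbasis
  refine linearIndependent_iff'.2 fun s c hc => ?_
  refine linearIndependent_iff'.1 hcoeff s c (expSum_injective ?_)
  have hexp : expSum (∑ i ∈ s, c i • Finsupp.single (ν i) (X ^ j i : ℂ[X])) =
      fun y => ∑ i ∈ s, c i * expMonomial (j i) (ν i) y := by
    funext y
    simp [expMonomial, mul_assoc]
  rw [hexp, map_zero]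
  refine (continuous_finsetSum s fun i _ => continuous_const.mul
    (continuous_expMonomial _ _)).ext_on hY continuous_const fun y hy => ?_
  simpa using congrFun hc ⟨y, hy⟩

end ExponentialSums

section MultiAffine

open MvPolynomial

variable {σ τ R : Type*} [CommSemiring R]

theorem mem_restrictDegree_iff_forall_degreeOf_le {p : MvPolynomial σ R} {n : ℕ} :
    p ∈ restrictDegree σ R n ↔ ∀ i, p.degreeOf i ≤ n := by
  simp only [mem_restrictDegree, degreeOf_le_iff]
  exact ⟨fun h i s hs => h s hs i, fun h s hs i => h i s hs⟩

theorem C_mem_restrictDegree (c : R) (n : ℕ) : C c ∈ restrictDegree σ R n :=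
  mem_restrictDegree_iff_forall_degreeOf_le.2 fun i => by simp

theorem mul_X_mem_restrictDegree {p : MvPolynomial σ R} {n : ℕ} {k : σ}
    (hp : p ∈ restrictDegree σ R n) (hk : p.degreeOf k < n) : p * X k ∈ restrictDegree σ R n := by
  rw [mem_restrictDegree_iff_forall_degreeOf_le] at hp ⊢
  intro i
  rcases eq_or_ne i k with rfl | hik
  · exact (degreeOf_mul_X_self i p).trans hk
  · exact (degreeOf_mul_X_of_ne p hik).trans_le (hp i)

theorem rename_mem_restrictDegree {p : MvPolynomial σ R} {n : ℕ} {e : σ → τ}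
    (he : Function.Injective e) (hp : p ∈ restrictDegree σ R n) :
    rename e p ∈ restrictDegree τ R n := by
  classical
  rw [mem_restrictDegree] at hp ⊢
  intro s hs i
  rw [support_rename_of_injective he, Finset.mem_image] at hs
  obtain ⟨m, hm, rfl⟩ := hs
  by_cases hi : i ∈ Set.range e
  · obtain ⟨k, rfl⟩ := hi
    exact (Finsupp.mapDomain_apply he m k).trans_le (hp m hm k)
  · exact (Finsupp.mapDomain_of_notMem_range m i hi).trans_le n.zero_le

/-- The space of polynomials of degree at most one in each variable and without constant term,
the exponents of the exponential polynomials considered here; removing the constant term makes the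
exponents of a sum determined by the function it defines. -/
noncomputable def multiAffine (σ : Type*) : Submodule ℂ (MvPolynomial σ ℂ) :=
  restrictDegree σ ℂ 1 ⊓ LinearMap.ker (lcoeff ℂ 0)

theorem exists_multiAffine_add_C_eq {p : MvPolynomial σ ℂ} (hp : p ∈ restrictDegree σ ℂ 1) :
    ∃ (α : multiAffine σ) (β : ℂ), (α : MvPolynomial σ ℂ) + C β = p := by
  refine ⟨⟨p - C (p.coeff 0), ?_, ?_⟩, p.coeff 0, sub_add_cancel _ _⟩
  · exact Submodule.sub_mem _ hp (C_mem_restrictDegree _ _)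
  · simp [lcoeff]

end MultiAffine

section RealEvaluation

variable {σ : Type*}

/-- Evaluation of a complex polynomial at a real point. -/
noncomputable abbrev realEval (x : σ → ℝ) : MvPolynomial σ ℂ →+* ℂ :=
  MvPolynomial.eval fun i => (x i : ℂ)

theorem exists_realEval_ne_zero {p : MvPolynomial σ ℂ} (hp : p ≠ 0) :
    ∃ x : σ → ℝ, realEval x p ≠ 0 := by
  by_contra! h
  refine hp (MvPolynomial.funext_set (fun _ => Set.range Complex.ofReal)
    (fun _ => Set.infinite_range_of_injective Complex.ofReal_injective) fun x hx => ?_)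
  choose y hy using fun i => hx i (Set.mem_univ i)
  obtain rfl : (fun i => (y i : ℂ)) = x := funext hy
  exact (h y).trans (map_zero _).symm

theorem realEval_zero_of_mem_multiAffine {p : MvPolynomial σ ℂ} (hp : p ∈ multiAffine σ) :
    realEval 0 p = 0 := by
  have hzero : (fun i => (((0 : σ → ℝ) i : ℝ) : ℂ)) = 0 :=
    funext fun _ => Complex.ofReal_zero
  rw [realEval, hzero, MvPolynomial.eval_zero]
  exact hp.2

theorem analyticOnNhd_realEval [Fintype σ] (p : MvPolynomial σ ℂ) :
    AnalyticOnNhd ℝ (fun x : σ → ℝ => realEval x p) Set.univ :=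
  AnalyticOnNhd.eval_continuousLinearMap' (𝕜 := ℝ) (E := σ → ℝ) (B := ℂ)
    (fun i => Complex.ofRealCLM.comp (ContinuousLinearMap.proj i)) p

open Polynomial in
/-- The restriction `t ↦ p (t • a)` of a polynomial to the line through `0` and `a`. -/
noncomputable def lineRestrict (a : σ → ℝ) : MvPolynomial σ ℂ →+* ℂ[X] :=
  MvPolynomial.eval₂Hom C fun i => C (a i : ℂ) * X

theorem eval_lineRestrict (a : σ → ℝ) (p : MvPolynomial σ ℂ) (t : ℝ) :
    (lineRestrict a p).eval (t : ℂ) = realEval (t • a) p := by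
  suffices hhom : (Polynomial.evalRingHom (t : ℂ)).comp (lineRestrict a) = realEval (t • a) from
    DFunLike.congr_fun hhom p
  refine MvPolynomial.ringHom_ext (fun r => ?_) fun i => ?_
  · simp [lineRestrict]
  · simp [lineRestrict, mul_comm (t : ℂ)]

theorem derivative_lineRestrict_ne_zero {a : σ → ℝ} {p : MvPolynomial σ ℂ}
    (hp : p ∈ multiAffine σ) (ha : realEval a p ≠ 0) :
    Polynomial.derivative (lineRestrict a p) ≠ 0 := by
  intro hderiv
  have hconst (t : ℝ) : realEval (t • a) p = (lineRestrict a p).coeff 0 := by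
    rw [← eval_lineRestrict, Polynomial.eq_C_of_derivative_eq_zero hderiv, Polynomial.eval_C,
      Polynomial.coeff_C_zero]
  refine ha ?_
  calc realEval a p = realEval ((0 : ℝ) • a) p := by rw [hconst 0, ← hconst 1, one_smul]
    _ = 0 := by rw [zero_smul, realEval_zero_of_mem_multiAffine hp]

end RealEvaluation

section ExpPolyRing

variable {σ τ : Type*}

/-- The ring of formal exponential polynomials `∑ P_k exp λ_k` with exponents in
`multiAffine σ`. -/
abbrev ExpPolyRing (σ : Type*) : Type _ := AddMonoidAlgebra (MvPolynomial σ ℂ) (multiAffine σ)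

/-- Evaluation of a formal exponential polynomial at a real point. -/
noncomputable def evalExp (x : σ → ℝ) : ExpPolyRing σ →+* ℂ :=
  AddMonoidAlgebra.liftNCRingHom (realEval x)
    { toFun := fun g => Complex.exp (realEval x (g.toAdd : MvPolynomial σ ℂ))
      map_one' := by simp
      map_mul' := fun g h => by simp [Complex.exp_add] }
    (fun _ _ => Commute.all _ _)

theorem evalExp_single (x : σ → ℝ) (g : multiAffine σ) (P : MvPolynomial σ ℂ) :
    evalExp x (.single g P) = realEval x P * Complex.exp (realEval x (g : MvPolynomial σ ℂ)) :=
  AddMonoidAlgebra.liftNCRingHom_single _ _ _ _ _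

theorem evalExp_eq_sum (x : σ → ℝ) (a : ExpPolyRing σ) :
    evalExp x a = ∑ g ∈ a.coeff.support,
      realEval x (a.coeff g) * Complex.exp (realEval x (g : MvPolynomial σ ℂ)) := by
  conv_lhs => rw [← AddMonoidAlgebra.sum_coeff_single a]
  rw [Finsupp.sum, map_sum]
  exact Finset.sum_congr rfl fun g _ => evalExp_single _ _ _

-- On a line avoiding the zeros of the coefficients and of the differences of exponents, the
-- one-variable independence result applies.
theorem eq_zero_of_forall_evalExp_eq_zero {a : ExpPolyRing σ} (h : ∀ x, evalExp x a = 0) :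
    a = 0 := by
  classical
  let s := a.coeff.support
  have hgeneric : (∏ g ∈ s, a.coeff g) *
      ∏ g ∈ s, ∏ g' ∈ s.erase g, ((g : MvPolynomial σ ℂ) - g') ≠ 0 := by
    refine mul_ne_zero (Finset.prod_ne_zero_iff.2 fun g hg => Finsupp.mem_support_iff.1 hg)
      (Finset.prod_ne_zero_iff.2 fun g _ => Finset.prod_ne_zero_iff.2 fun g' hg' => ?_)
    exact sub_ne_zero.2 fun e => Finset.ne_of_mem_erase hg' (Subtype.ext e.symm)
  obtain ⟨x, hx⟩ := exists_realEval_ne_zero hgeneric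
  simp only [map_mul, map_prod, mul_ne_zero_iff, Finset.prod_ne_zero_iff] at hx
  obtain ⟨hcoeff, hexponent⟩ := hx
  have hline := forall_eq_zero_of_sum_mul_exp_eq_zero s (fun g => lineRestrict x (a.coeff g))
    (fun g => lineRestrict x (g : MvPolynomial σ ℂ))
    (fun g hg g' hg' hne => by
      beta_reduce
      rw [← map_sub]
      exact derivative_lineRestrict_ne_zero (g - g').2
        (hexponent g hg g' (Finset.mem_erase.2 ⟨hne.symm, hg'⟩)))
    (fun t => by simpa only [eval_lineRestrict, evalExp_eq_sum] using h (t • x))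
  refine AddMonoidAlgebra.coeff_eq_zero.1 (Finsupp.support_eq_empty.1
    (Finset.eq_empty_of_forall_notMem fun g hg => hcoeff g hg ?_))
  rw [← one_smul ℝ x, ← eval_lineRestrict, hline g hg, Polynomial.eval_zero]

/-- The ring of functions of the form `∑ P_k exp λ_k` with multi-affine exponents. -/
noncomputable def expPolyFun (σ : Type*) : Subring ((σ → ℝ) → ℂ) :=
  (RingHom.pi evalExp : ExpPolyRing σ →+* ((σ → ℝ) → ℂ)).range

theorem mem_expPolyFun {f : (σ → ℝ) → ℂ} :
    f ∈ expPolyFun σ ↔ ∃ a : ExpPolyRing σ, ∀ x, evalExp x a = f x :=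
  exists_congr fun _ => funext_iff

theorem mul_exp_mem_expPolyFun (P : MvPolynomial σ ℂ) {p : MvPolynomial σ ℂ}
    (hp : p ∈ MvPolynomial.restrictDegree σ ℂ 1) :
    (fun x => realEval x P * Complex.exp (realEval x p)) ∈ expPolyFun σ := by
  obtain ⟨α, β, rfl⟩ := exists_multiAffine_add_C_eq hp
  refine mem_expPolyFun.2 ⟨.single α (P * MvPolynomial.C (Complex.exp β)), fun x => ?_⟩
  rw [evalExp_single, map_mul, map_add, MvPolynomial.eval_C, MvPolynomial.eval_C,
    Complex.exp_add, mul_assoc, mul_comm (Complex.exp β)]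

theorem const_mem_expPolyFun (c : ℂ) : (fun _ => c) ∈ expPolyFun σ := by
  simpa using mul_exp_mem_expPolyFun (MvPolynomial.C c : MvPolynomial σ ℂ) (zero_mem _)

theorem sum_mem_expPolyFun {ι : Type*} {s : Finset ι} {F : ι → (σ → ℝ) → ℂ}
    (h : ∀ i ∈ s, F i ∈ expPolyFun σ) : (fun x => ∑ i ∈ s, F i x) ∈ expPolyFun σ := by
  simpa only [Finset.sum_fn] using sum_mem h

theorem det_mem_expPolyFun {ι : Type*} [Fintype ι] [DecidableEq ι]
    {M : (σ → ℝ) → Matrix ι ι ℂ} (h : ∀ i j, (fun x => M x i j) ∈ expPolyFun σ) :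
    (fun x => (M x).det) ∈ expPolyFun σ := by
  choose A hA using fun i j => mem_expPolyFun.1 (h i j)
  refine mem_expPolyFun.2 ⟨(Matrix.of A).det, fun x => ?_⟩
  rw [RingHom.map_det]
  exact congrArg Matrix.det (Matrix.ext fun i j => hA i j x)

theorem comp_comp_mem_expPolyFun {f : (σ → ℝ) → ℂ} (hf : f ∈ expPolyFun σ) {e : σ → τ}
    (he : Function.Injective e) : (fun x : τ → ℝ => f (x ∘ e)) ∈ expPolyFun τ := by
  obtain ⟨a, ha⟩ := mem_expPolyFun.1 hf
  simp only [← ha, evalExp_eq_sum]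
  refine sum_mem_expPolyFun fun g _ => ?_
  simpa only [MvPolynomial.eval_rename, Function.comp_def] using
    mul_exp_mem_expPolyFun (MvPolynomial.rename e (a.coeff g)) (rename_mem_restrictDegree he g.2.1)

variable {f : (σ → ℝ) → ℂ}

theorem analyticOnNhd_of_mem_expPolyFun [Fintype σ] (hf : f ∈ expPolyFun σ) :
    AnalyticOnNhd ℝ f Set.univ := by
  obtain ⟨a, ha⟩ := mem_expPolyFun.1 hf
  rw [← show (fun x => evalExp x a) = f from funext ha]
  simp only [evalExp_eq_sum]
  exact Finset.analyticOnNhd_fun_sum _ fun g _ => (analyticOnNhd_realEval _).mul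
    ((analyticOnNhd_cexp.restrictScalars (𝕜 := ℝ)).comp (analyticOnNhd_realEval _)
      (Set.mapsTo_univ _ _))

theorem continuous_of_mem_expPolyFun [Finite σ] (hf : f ∈ expPolyFun σ) : Continuous f := by
  have := Fintype.ofFinite σ
  exact continuousOn_univ.1 (analyticOnNhd_of_mem_expPolyFun hf).continuousOn

theorem eq_zero_of_mem_expPolyFun [Finite σ] (hf : f ∈ expPolyFun σ) {S : Set (σ → ℝ)}
    (hS : (interior (closure S)).Nonempty) (h : ∀ x ∈ S, f x = 0) : f = 0 := by
  have := Fintype.ofFinite σ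
  obtain ⟨z, hz⟩ := hS
  have hzero : closure S ⊆ {x | f x = 0} := closure_minimal h
    (isClosed_singleton.preimage (continuous_of_mem_expPolyFun hf))
  exact (analyticOnNhd_of_mem_expPolyFun hf).eq_of_eventuallyEq analyticOnNhd_const
    (Filter.mem_of_superset (mem_interior_iff_mem_nhds.1 hz) hzero)

end ExpPolyRing

section Baire

theorem exists_nonempty_inter_interior_closure {X ι : Type*} [TopologicalSpace X] [BaireSpace X]
    [Countable ι] {U : Set X} (hU : IsOpen U) (hne : U.Nonempty) {S : ι → Set X}
    (h : U ⊆ ⋃ i, S i) : ∃ i, (U ∩ interior (closure (S i))).Nonempty := by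
  by_contra! hempty
  refine not_isMeagre_of_isOpen hU hne ?_
  have hcover : U = ⋃ i, U ∩ S i := by rw [← Set.inter_iUnion, Set.inter_eq_left.2 h]
  rw [hcover]
  refine isMeagre_iUnion fun i => IsNowhereDense.isMeagre ?_
  rw [IsNowhereDense, ← Set.not_nonempty_iff_eq_empty]
  intro hdense
  obtain ⟨y, hy, hyU⟩ := (closure_inter_open_nonempty_iff isOpen_interior).1
    (hdense.mono fun z hz => ⟨interior_subset hz, hz⟩)
  have hyint : y ∈ interior (closure (S i)) :=
    interior_mono (closure_mono Set.inter_subset_right) hyU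
  exact (hempty i).subset ⟨hy.1, hyint⟩

end Baire

section Hankel

theorem det_mul_eq_zero_of_card_lt {m n R : Type*} [CommRing R] [IsDomain R] [Fintype m]
    [DecidableEq m] [Fintype n] (A : Matrix m n R) (B : Matrix n m R)
    (h : Fintype.card n < Fintype.card m) : (A * B).det = 0 := by
  by_contra hdet
  have hrank := (Matrix.rank_mul_le_left A B).trans A.rank_le_card_width
  rw [Matrix.rank_of_det_ne_zero hdet] at hrank
  exact hrank.not_gt h

/-- The Hankel matrix of a function on an additive semigroup at the given nodes. -/
def hankel {G R ι κ : Type*} [Add G] (g : G → R) (a : ι → G) (b : κ → G) : Matrix ι κ R :=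
  Matrix.of fun i j => g (a i + b j)

@[simp]
theorem hankel_apply {G R ι κ : Type*} [Add G] (g : G → R) (a : ι → G) (b : κ → G) (i : ι)
    (j : κ) : hankel g a b i j = g (a i + b j) :=
  rfl

/-- All Hankel matrices of `g` have rank less than `n`, expressed by the vanishing of the Hankel
determinants of size `n`. -/
def HankelRankLT {G R : Type*} [Add G] [CommRing R] (n : ℕ) (g : G → R) : Prop :=
  ∀ a b : Fin n → G, (hankel g a b).det = 0

theorem HankelRankLT.det_eq_zero {G R ι : Type*} [Add G] [CommRing R] [Fintype ι] [DecidableEq ι]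
    {n : ℕ} {g : G → R} (hg : HankelRankLT n g) (hι : Fintype.card ι = n) (a b : ι → G) :
    (hankel g a b).det = 0 := by
  have e := Fintype.equivFinOfCardEq hι
  rw [← hg (a ∘ e.symm) (b ∘ e.symm), ← Matrix.det_submatrix_equiv_self e.symm]
  rfl

theorem HankelRankLT.comp_add_left {G R : Type*} [AddSemigroup G] [CommRing R] {n : ℕ} {g : G → R}
    (hg : HankelRankLT n g) (s : G) : HankelRankLT n fun t => g (s + t) := fun a b => by
  simpa only [hankel, add_assoc] using hg (fun i => s + a i) b

theorem hankelRankLT_of_eq_sum {G R κ : Type*} [Add G] [CommRing R] [IsDomain R] [Fintype κ]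
    {g : G → R} {u v : κ → G → R} (h : ∀ a b, g (a + b) = ∑ k, u k a * v k b) :
    HankelRankLT (Fintype.card κ + 1) g := by
  intro a b
  have hfactor : hankel g a b =
      (Matrix.of fun i k => u k (a i)) * Matrix.of fun k j => v k (b j) := by
    ext i j
    exact h (a i) (b j)
  rw [hfactor]
  exact det_mul_eq_zero_of_card_lt _ _ (by simp)

theorem exists_hankelRankLT_expSum (p : ℂ →₀ Polynomial ℂ) : ∃ n, HankelRankLT n (expSum p) := by
  let N := (p.support.sup fun ν => (p ν).natDegree) + 1
  have hdeg : ∀ ν ∈ p.support, ∀ b, (expTranslate b p ν).natDegree < N := fun ν hν b => by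
    rw [expTranslate_apply]
    refine Nat.lt_succ_of_le ((Polynomial.natDegree_smul_le _ _).trans ?_)
    rw [Polynomial.natDegree_taylor]
    exact Finset.le_sup (f := fun ν => (p ν).natDegree) hν
  have hsupport (b : ℂ) : (expTranslate b p).support ⊆ p.support := fun ν hν => by
    rw [Finsupp.mem_support_iff, expTranslate_apply] at hν
    exact Finsupp.mem_support_iff.2 fun h0 => hν (by rw [h0, map_zero, smul_zero])
  refine ⟨_, hankelRankLT_of_eq_sum (κ := p.support × Fin N)
    (u := fun k => expMonomial k.2 k.1) (v := fun k b => (expTranslate b p k.1).coeff k.2)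
    fun a b => ?_⟩
  rw [← expSum_expTranslate, expSum_apply, Fintype.sum_prod_type, Finset.sum_subset (hsupport b)
    fun ν _ hν => by rw [Finsupp.notMem_support_iff.1 hν, Polynomial.eval_zero, zero_mul],
    ← Finset.sum_coe_sort]
  refine Finset.sum_congr rfl fun ν _ => ?_
  rw [Polynomial.eval_eq_sum_range' (hdeg ν ν.2 b), Finset.sum_range, Finset.sum_mul]
  exact Finset.sum_congr rfl fun k _ => by rw [expMonomial]; ring

theorem exists_forall_hankelRankLT {σ : Type*} [Finite σ] {H : (σ → ℝ) → ℝ → ℂ}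
    (hmem : ∀ t, (fun x => H x t) ∈ expPolyFun σ) (hexp : ∀ x, IsExpPoly1 (H x)) :
    ∃ n, ∀ x, HankelRankLT n (H x) := by
  have hrank (x : σ → ℝ) : ∃ n, HankelRankLT n (H x) := by
    obtain ⟨p, hp⟩ := (hexp x).exists_expSum_eq
    exact hp ▸ exists_hankelRankLT_expSum p
  obtain ⟨n, hn⟩ := exists_nonempty_inter_interior_closure isOpen_univ
    (Set.univ_nonempty (α := σ → ℝ)) (S := fun n => {x | HankelRankLT n (H x)})
    (fun x _ => Set.mem_iUnion.2 (hrank x))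
  refine ⟨n, fun x a b => ?_⟩
  exact congrFun (eq_zero_of_mem_expPolyFun (det_mem_expPolyFun (M := fun x => hankel (H x) a b)
    fun i j => hmem (a i + b j)) (hn.mono Set.inter_subset_right) fun x hx => hx a b) x

theorem HankelRankLT.exists_translate_eq_sum {G K : Type*} [Add G] [Field K] {r : ℕ} {g : G → K}
    (hg : HankelRankLT (r + 1) g) {a b : Fin r → G} (hdet : (hankel g a b).det ≠ 0) (z : G) :
    ∃ c : Fin r → K, ∀ y, g (y + z) = ∑ j, c j * g (y + b j) := by
  have := Matrix.invertibleOfIsUnitDet (hankel g a b) (Ne.isUnit hdet)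
  refine ⟨(⅟(hankel g a b)).mulVec fun i => g (a i + z), fun y => ?_⟩
  have hbordered := hg.det_eq_zero (ι := Fin r ⊕ Unit) (by simp) (Sum.elim a fun _ => y)
    (Sum.elim b fun _ => z)
  have hblocks : hankel g (Sum.elim a fun _ : Unit => y) (Sum.elim b fun _ : Unit => z) =
      Matrix.fromBlocks (hankel g a b) (hankel g a fun _ => z) (hankel g (fun _ => y) b)
        (hankel g (fun _ => y) fun _ => z) := by
    ext (i | i) (j | j) <;> rfl
  rw [hblocks, Matrix.det_fromBlocks₁₁, mul_eq_zero, or_iff_right hdet, Matrix.det_unique,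
    Matrix.sub_apply, sub_eq_zero, Matrix.mul_assoc, Matrix.mul_apply, hankel_apply] at hbordered
  rw [hbordered]
  exact Finset.sum_congr rfl fun j _ => mul_comm _ _

/-- The matrix of translation by `h` in the coordinates given by the nodes `a` and `b`. -/
noncomputable def hankelShift {G K : Type*} [Add G] [Field K] {r : ℕ} (g : G → K) (a b : Fin r → G)
    (h : G) : Matrix (Fin r) (Fin r) K :=
  (hankel g a b)⁻¹ * hankel g a fun j => b j + h

theorem HankelRankLT.hankel_mul_hankelShift {G K ι : Type*} [AddSemigroup G] [Field K] {r : ℕ}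
    {g : G → K} (hg : HankelRankLT (r + 1) g) {a b : Fin r → G} (hdet : (hankel g a b).det ≠ 0)
    (h : G) (y : ι → G) :
    hankel g y b * hankelShift g a b h = hankel g y fun j => b j + h := by
  choose c hc using fun j => hg.exists_translate_eq_sum hdet (b j + h)
  have hrow (x : G) (j : Fin r) : (∑ k, g (x + b k) * c j k) = g (x + (b j + h)) := by
    rw [hc j]
    exact Finset.sum_congr rfl fun k _ => mul_comm _ _
  have hshift : hankelShift g a b h = Matrix.of fun k j => c j k := by
    have hmul : (hankel g a fun j => b j + h) = hankel g a b * Matrix.of fun k j => c j k :=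
      Matrix.ext fun i j => (hrow (a i) j).symm
    rw [hankelShift, hmul, Matrix.nonsing_inv_mul_cancel_left _ _ (Ne.isUnit hdet)]
  rw [hshift]
  exact Matrix.ext fun i j => hrow (y i) j

end Hankel

section HankelShift

variable {r : ℕ} {p : ℂ →₀ Polynomial ℂ} {a b : Fin r → ℝ} {h : ℝ}

theorem isRoot_charpoly_hankelShift_of_mem_support (hp : HankelRankLT (r + 1) (expSum p))
    (hdet : (hankel (expSum p) a b).det ≠ 0) {ν : ℂ} (hν : ν ∈ p.support) :
    (hankelShift (expSum p) a b h).charpoly.IsRoot (Complex.exp (ν * h)) := by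
  let v : Fin r → ℂ := fun k => Complex.exp (ν * b k)
  have hv : v ≠ 0 := by
    obtain ⟨c, hc⟩ := hp.exists_translate_eq_sum hdet 0
    intro hzero
    have hsymbol := exp_eq_sum_of_translate_eq_sum hc hν
    rw [Finset.sum_eq_zero fun k _ => by rw [show Complex.exp (ν * b k) = 0 from
      congrFun hzero k, mul_zero]] at hsymbol
    exact Complex.exp_ne_zero _ hsymbol
  rw [Polynomial.IsRoot, Matrix.eval_charpoly, Matrix.scalar_apply, ← Matrix.smul_one_eq_diagonal]
  refine Matrix.exists_vecMul_eq_zero_iff.1 ⟨v, hv, ?_⟩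
  ext j
  have htranslate (y : ℝ) : expSum p (y + (b j + h)) =
      ∑ k, hankelShift (expSum p) a b h k j * expSum p (y + b k) := by
    have hentry := congrFun (congrFun (hp.hankel_mul_hankelShift hdet h fun _ : Unit => y) ()) j
    rw [Matrix.mul_apply] at hentry
    exact hentry.symm.trans (Finset.sum_congr rfl fun k _ => mul_comm _ _)
  have hsymbol := exp_eq_sum_of_translate_eq_sum htranslate hν
  rw [Complex.ofReal_add, mul_add, Complex.exp_add, mul_comm] at hsymbol
  rw [Matrix.vecMul_sub, Matrix.vecMul_smul, Matrix.vecMul_one, Pi.sub_apply, Pi.smul_apply,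
    smul_eq_mul, Pi.zero_apply, sub_eq_zero, hsymbol]
  exact Finset.sum_congr rfl fun k _ => mul_comm (hankelShift (expSum p) a b h k j) _

-- An eigenvector gives a combination of translates of `expSum p` which is multiplied by `w` under
-- translation by `h`; its frequencies are among those of `p`.
theorem exists_mem_support_exp_eq (hp : HankelRankLT (r + 1) (expSum p))
    (hdet : (hankel (expSum p) a b).det ≠ 0) {w : ℂ}
    (hw : (hankelShift (expSum p) a b h).charpoly.IsRoot w) :
    ∃ ν ∈ p.support, Complex.exp (ν * h) = w := by
  rw [Polynomial.IsRoot, Matrix.eval_charpoly, Matrix.scalar_apply,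
    ← Matrix.smul_one_eq_diagonal] at hw
  obtain ⟨u, hu, hAu⟩ := Matrix.exists_mulVec_eq_zero_iff.2 hw
  rw [Matrix.sub_mulVec, Matrix.smul_mulVec, Matrix.one_mulVec, sub_eq_zero] at hAu
  let q := ∑ j, u j • expTranslate (b j) p
  have hq (y : ℝ) : expSum q y = (hankel (expSum p) (fun _ : Unit => y) b).mulVec u () := by
    simp [q, Matrix.mulVec, dotProduct, expSum_expTranslate, mul_comm]
  have hqh (y : ℝ) : expSum q (y + h) = ∑ _ : Unit, w * expSum q (y + (0 : ℝ)) := by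
    have hnodes : (hankel (expSum p) (fun _ : Unit => y + h) b) =
        hankel (expSum p) (fun _ => y) fun j => b j + h := by
      ext _ j
      exact congrArg (expSum p) (by ring)
    rw [hq, hnodes, ← hp.hankel_mul_hankelShift hdet, ← Matrix.mulVec_mulVec, ← hAu,
      Matrix.mulVec_smul]
    simp [hq]
  have hq_ne : q ≠ 0 := by
    intro hzero
    refine hdet (Matrix.exists_mulVec_eq_zero_iff.1 ⟨u, hu, funext fun i => ?_⟩)
    have hvanish := hq (a i)
    rw [hzero, map_zero] at hvanish
    exact hvanish.symm
  obtain ⟨ν, hν⟩ := Finsupp.support_nonempty_iff.2 hq_ne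
  refine ⟨ν, Finsupp.mem_support_iff.2 fun hzero => Finsupp.mem_support_iff.1 hν ?_, ?_⟩
  · simp [q, Finsupp.finsetSum_apply, expTranslate_apply, hzero]
  · simpa using exp_eq_sum_of_translate_eq_sum hqh hν

end HankelShift

section Frequencies

open Filter Topology Polynomial

theorem exists_isRoot_norm_sub_lt {K : Type*} [NormedField K] [IsAlgClosed K] {p : K[X]}
    (hp : p.Monic) {w₀ : K} {ε : ℝ} (hε : 0 < ε) (h : ‖p.eval w₀‖ < ε ^ p.natDegree) :
    ∃ w, p.IsRoot w ∧ ‖w₀ - w‖ < ε := by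
  by_contra! hfar
  have hsplit := IsAlgClosed.splits p
  refine h.not_ge ?_
  calc ε ^ p.natDegree = (p.roots.map fun _ => ε).prod := by
        rw [Multiset.map_const', Multiset.prod_replicate, hsplit.natDegree_eq_card_roots]
    _ ≤ (p.roots.map fun w => ‖w₀ - w‖).prod :=
        Multiset.prod_map_le_prod_map₀ _ _ (fun _ _ => hε.le)
          fun w hw => hfar w (isRoot_of_mem_roots hw)
    _ = ‖p.eval w₀‖ := by
        rw [hsplit.eval_eq_prod_roots_of_monic hp]
        exact (p.roots.prod_hom' (NormedField.toMulRingNorm K) fun w => w₀ - w)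

theorem exists_norm_sub_le_mul_norm_exp_mul_sub (R : ℝ) :
    ∃ (h : ℝ) (C : ℝ), 0 < C ∧ ∀ μ ν : ℂ, ‖μ‖ ≤ R → ‖ν‖ ≤ R →
      ‖μ - ν‖ ≤ C * ‖Complex.exp (μ * h) - Complex.exp (ν * h)‖ := by
  obtain ⟨C, hC, hbound⟩ := ((Complex.hasStrictDerivAt_exp 0).isTheta_sub
    (Complex.exp_ne_zero 0)).isBigO_symm.exists_pos
  rw [Asymptotics.isBigOWith_iff, Metric.eventually_nhds_iff_ball] at hbound
  obtain ⟨ε, hε, hball⟩ := hbound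
  have hR : 0 < |R| + 1 := by positivity
  have hh : 0 < ε / (|R| + 1) := div_pos hε hR
  have hsmall {μ : ℂ} (hμ : ‖μ‖ ≤ R) : μ * (ε / (|R| + 1) : ℝ) ∈ Metric.ball 0 ε := by
    rw [mem_ball_zero_iff, norm_mul, Complex.norm_real, Real.norm_of_nonneg hh.le,
      ← mul_div_assoc, div_lt_iff₀ hR, mul_comm]
    exact mul_lt_mul_of_pos_left (by linarith [le_abs_self R]) hε
  refine ⟨ε / (|R| + 1), C / (ε / (|R| + 1)), div_pos hC hh, fun μ ν hμ hν => ?_⟩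
  have hbound := hball (_, _) (by rw [← ball_prod_same]; exact ⟨hsmall hμ, hsmall hν⟩)
  rw [← sub_mul, norm_mul, Complex.norm_real, Real.norm_of_nonneg hh.le] at hbound
  rwa [div_mul_eq_mul_div, le_div_iff₀ hh]

variable {r : ℕ} {a b : Fin r → ℝ}

theorem card_support_le {p : ℂ →₀ ℂ[X]} (hp : HankelRankLT (r + 1) (expSum p))
    (hdet : (hankel (expSum p) a b).det ≠ 0) : p.support.card ≤ r := by
  obtain ⟨h, C, -, hC⟩ := exists_norm_sub_le_mul_norm_exp_mul_sub (∑ ν ∈ p.support, ‖ν‖)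
  have hbound (ν : ℂ) (hν : ν ∈ p.support) : ‖ν‖ ≤ ∑ ν ∈ p.support, ‖ν‖ :=
    Finset.single_le_sum (f := fun ν => ‖ν‖) (fun _ _ => norm_nonneg _) hν
  have hinj : Set.InjOn (fun ν : ℂ => Complex.exp (ν * h)) p.support := fun μ hμ ν hν heq => by
    have hle := hC μ ν (hbound μ hμ) (hbound ν hν)
    rwa [show Complex.exp (μ * h) = Complex.exp (ν * h) from heq, sub_self, norm_zero, mul_zero,
      norm_le_zero_iff, sub_eq_zero] at hle
  let χ := (hankelShift (expSum p) a b h).charpoly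
  have hroots : p.support.image (fun ν : ℂ => Complex.exp (ν * h)) ⊆ χ.roots.toFinset := by
    intro w hw
    obtain ⟨ν, hν, rfl⟩ := Finset.mem_image.1 hw
    exact Multiset.mem_toFinset.2 ((mem_roots (Matrix.charpoly_monic _).ne_zero).2
      (isRoot_charpoly_hankelShift_of_mem_support hp hdet hν))
  calc p.support.card = (p.support.image fun ν : ℂ => Complex.exp (ν * h)).card :=
        (Finset.card_image_of_injOn hinj).symm
    _ ≤ χ.roots.toFinset.card := Finset.card_le_card hroots
    _ ≤ χ.roots.card := Multiset.toFinset_card_le _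
    _ ≤ χ.natDegree := card_roots' _
    _ = r := by rw [Matrix.charpoly_natDegree_eq_dim, Fintype.card_fin]

variable {X : Type*} [TopologicalSpace X] {p : X → ℂ →₀ ℂ[X]}

theorem eventually_exists_norm_exp_sub_exp_lt (hcont : ∀ y, Continuous fun x => expSum (p x) y)
    (hp : ∀ x, HankelRankLT (r + 1) (expSum (p x))) {x : X}
    (hdet : (hankel (expSum (p x)) a b).det ≠ 0) {ν : ℂ} (hν : ν ∈ (p x).support) (h : ℝ) {ε : ℝ}
    (hε : 0 < ε) :
    ∀ᶠ x' in 𝓝 x, ∃ μ ∈ (p x').support, ‖Complex.exp (ν * h) - Complex.exp (μ * h)‖ < ε := by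
  have hhankel (b : Fin r → ℝ) : Continuous fun x => hankel (expSum (p x)) a b :=
    continuous_matrix fun i j => hcont _
  have hshift : ContinuousAt (fun x => hankelShift (expSum (p x)) a b h) x := by
    refine ContinuousAt.mul (ContinuousAt.comp (g := Inv.inv)
      (continuousAt_matrix_inv (R := ℂ) _ ?_) (hhankel b).continuousAt) (hhankel _).continuousAt
    exact NormedRing.inverse_continuousAt (Units.mk0 _ hdet)
  have hcharpoly : Tendsto (fun x' => ‖(hankelShift (expSum (p x')) a b h).charpoly.eval
      (Complex.exp (ν * h))‖) (𝓝 x) (𝓝 0) := by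
    rw [← norm_zero (E := ℂ), ← (isRoot_charpoly_hankelShift_of_mem_support (h := h) (hp x) hdet
      hν).eq_zero]
    simp only [Matrix.eval_charpoly]
    exact (Continuous.matrix_det continuous_id).continuousAt.comp
      (continuousAt_const.sub hshift) |>.norm
  filter_upwards [hcharpoly.eventually_lt_const (pow_pos hε r),
    (hhankel b).matrix_det.continuousAt.eventually_ne hdet] with x' hsmall hdet'
  obtain ⟨w, hw, hlt⟩ := exists_isRoot_norm_sub_lt (Matrix.charpoly_monic _) hε
    (hsmall.trans_eq (by rw [Matrix.charpoly_natDegree_eq_dim, Fintype.card_fin]))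
  obtain ⟨μ, hμ, rfl⟩ := exists_mem_support_exp_eq (hp x') hdet' hw
  exact ⟨μ, hμ, hlt⟩

theorem eventually_exists_norm_sub_lt_of_norm_le (hcont : ∀ y, Continuous fun x => expSum (p x) y)
    (hp : ∀ x, HankelRankLT (r + 1) (expSum (p x))) {x : X}
    (hdet : (hankel (expSum (p x)) a b).det ≠ 0) {ν : ℂ} (hν : ν ∈ (p x).support) {R : ℝ}
    (hR : ‖ν‖ ≤ R) {ε : ℝ} (hε : 0 < ε) :
    ∀ᶠ x' in 𝓝 x, (∀ μ ∈ (p x').support, ‖μ‖ ≤ R) → ∃ μ ∈ (p x').support, ‖ν - μ‖ < ε := by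
  obtain ⟨h, C, hC, hexp⟩ := exists_norm_sub_le_mul_norm_exp_mul_sub R
  filter_upwards [eventually_exists_norm_exp_sub_exp_lt hcont hp hdet hν h (div_pos hε hC)]
    with x' ⟨μ, hμ, hlt⟩ hbound
  exact ⟨μ, hμ, (hexp ν μ hR (hbound μ hμ)).trans_lt ((lt_div_iff₀' hC).1 hlt)⟩

theorem exists_isOpen_support_bounded [BaireSpace X]
    (hcont : ∀ y, Continuous fun x => expSum (p x) y)
    (hp : ∀ x, HankelRankLT (r + 1) (expSum (p x))) {U : Set X} (hU : IsOpen U) (hne : U.Nonempty)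
    (hdet : ∀ x ∈ U, (hankel (expSum (p x)) a b).det ≠ 0) :
    ∃ V ⊆ U, IsOpen V ∧ V.Nonempty ∧ ∃ N : ℕ, ∀ x ∈ V, ∀ ν ∈ (p x).support, ‖ν‖ ≤ N := by
  obtain ⟨N, hN⟩ := exists_nonempty_inter_interior_closure hU hne
    (S := fun N : ℕ => {x | ∀ ν ∈ (p x).support, ‖ν‖ ≤ N}) (fun x _ => by
      obtain ⟨N, hN⟩ := exists_nat_ge (∑ ν ∈ (p x).support, ‖ν‖)
      exact Set.mem_iUnion.2 ⟨N, fun ν hν =>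
        (Finset.single_le_sum (f := fun ν => ‖ν‖) (fun _ _ => norm_nonneg _) hν).trans hN⟩)
  refine ⟨_, Set.inter_subset_left, hU.inter isOpen_interior, hN, N, fun x hx ν hν => ?_⟩
  by_contra! hlarge
  have hfrequently := mem_closure_iff_frequently.1 (interior_subset hx.2)
  obtain ⟨x', hnear, hbound⟩ := (hfrequently.and_eventually
    (eventually_exists_norm_sub_lt_of_norm_le hcont hp (hdet x hx.1) hν le_rfl
      (sub_pos.2 hlarge))).exists
  obtain ⟨μ, hμ, hlt⟩ := hbound fun μ hμ => (hnear μ hμ).trans hlarge.le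
  linarith [norm_sub_norm_le ν μ, hnear μ hμ]

theorem lowerHemicontinuousOn_support (hcont : ∀ y, Continuous fun x => expSum (p x) y)
    (hp : ∀ x, HankelRankLT (r + 1) (expSum (p x))) {U : Set X}
    (hdet : ∀ x ∈ U, (hankel (expSum (p x)) a b).det ≠ 0) {R : ℝ}
    (hR : ∀ x ∈ U, ∀ ν ∈ (p x).support, ‖ν‖ ≤ R) :
    LowerHemicontinuousOn (fun x => ((p x).support : Set ℂ)) U := by
  refine lowerHemicontinuousOn_iff.2 fun x hx => lowerHemicontinuousWithinAt_iff.2 ?_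
  rintro O hO ⟨ν, hν, hνO⟩
  obtain ⟨ε, hε, hball⟩ := Metric.isOpen_iff.1 hO ν hνO
  filter_upwards [self_mem_nhdsWithin, nhdsWithin_le_nhds (eventually_exists_norm_sub_lt_of_norm_le
    hcont hp (hdet x hx) hν (hR x hx ν hν) hε)] with x' hx' hnear
  obtain ⟨μ, hμ, hlt⟩ := hnear (hR x' hx')
  exact ⟨μ, hμ, hball (by rwa [Metric.mem_ball', dist_eq_norm])⟩

end Frequencies

section Branches

open Filter Topology Polynomial

theorem exists_continuousOn_branches {X Y : Type*} [TopologicalSpace X] [TopologicalSpace Y]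
    [T2Space Y] {Λ : X → Finset Y} {U : Set X} (hU : IsOpen U)
    (hΛ : LowerHemicontinuousOn (fun x => (Λ x : Set Y)) U) {x₀ : X} (hx₀ : x₀ ∈ U)
    (hmax : ∀ x ∈ U, (Λ x).card ≤ (Λ x₀).card) :
    ∃ V ⊆ U, IsOpen V ∧ x₀ ∈ V ∧ ∃ L : Λ x₀ → X → Y, (∀ j, L j x₀ = j) ∧
      (∀ j, ContinuousOn (L j) V) ∧
      ∀ x ∈ V, Function.Injective (fun j => L j x) ∧ Set.range (fun j => L j x) = Λ x := by
  classical
  obtain ⟨O, hO, hdisj⟩ := (Λ x₀).finite_toSet.t2_separation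
  have hunique {j j' : Λ x₀} {y : Y} (hj : y ∈ O j) (hj' : y ∈ O j') : j = j' :=
    Subtype.ext (hdisj.elim_set j.2 j'.2 y hj hj')
  have hmeets {x : X} (hx : x ∈ U) {y : Y} (hy : y ∈ Λ x) {N : Set Y} (hN : IsOpen N)
      (hyN : y ∈ N) : ∀ᶠ x' in 𝓝 x, ∃ z ∈ Λ x', z ∈ N := by
    have hnear := lowerHemicontinuousWithinAt_iff.1 (hΛ x hx) N hN ⟨y, hy, hyN⟩
    rwa [hU.nhdsWithin_eq hx] at hnear
  obtain ⟨V, hV, hVopen, hx₀V⟩ := mem_nhds_iff.1 ((hU.eventually_mem hx₀).and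
    (eventually_all.2 fun j : Λ x₀ => hmeets hx₀ j.2 (hO j).2 (hO j).1))
  have hpoint (j : Λ x₀) (x : X) : ∃ y, x ∈ V → y ∈ Λ x ∧ y ∈ O j := by
    by_cases hx : x ∈ V
    · exact ((hV hx).2 j).imp fun _ hy _ => hy
    · exact ⟨j, fun hx' => absurd hx' hx⟩
  choose L hL using hpoint
  have hLmem (j : Λ x₀) (x : X) (hx : x ∈ V) : L j x ∈ Λ x := (hL j x hx).1
  have hLO (j : Λ x₀) (x : X) (hx : x ∈ V) : L j x ∈ O j := (hL j x hx).2
  have hinj (x : X) (hx : x ∈ V) : Function.Injective fun j => L j x := fun j j' heq =>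
    hunique (hLO j x hx) ((show L j x = L j' x from heq) ▸ hLO j' x hx)
  have himage (x : X) (hx : x ∈ V) : Finset.univ.image (fun j => L j x) = Λ x := by
    refine Finset.eq_of_subset_of_card_le (Finset.image_subset_iff.2 fun j _ => hLmem j x hx) ?_
    rw [Finset.card_image_of_injective _ (hinj x hx), Finset.card_univ, Fintype.card_coe]
    exact hmax x (hV hx).1
  have hmem {x : X} (hx : x ∈ V) {y : Y} (hy : y ∈ Λ x) : ∃ j, L j x = y := by
    simpa only [← himage x hx, Finset.mem_image, Finset.mem_univ, true_and] using hy
  refine ⟨V, fun x hx => (hV hx).1, hVopen, hx₀V, L, fun j => ?_, fun j x hx => ?_,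
    fun x hx => ⟨hinj x hx, ?_⟩⟩
  · obtain ⟨j', hj'⟩ := hmem hx₀V j.2
    rw [← hj', hunique (hO j).1 (hj' ▸ hLO j' x₀ hx₀V)]
  · refine ContinuousAt.continuousWithinAt (tendsto_nhds.2 fun N hN hxN => ?_)
    filter_upwards [hVopen.mem_nhds hx, hmeets (hV hx).1 (hLmem j x hx) (hN.inter (hO j).2)
      ⟨hxN, hLO j x hx⟩] with x' hx' ⟨y, hy, hyN, hyO⟩
    obtain ⟨j', rfl⟩ := hmem hx' hy
    exact hunique hyO (hLO j' x' hx') ▸ hyN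
  · rw [← himage x hx, Finset.coe_image, Finset.coe_univ, Set.image_univ]

/-- The functions `L j` are continuous branches over the nonempty open set `V` for the frequencies
of the exponential polynomials `expSum (p x)`, arranged in the order given by the linear form `l`.
The order allows the branches to be treated by induction. -/
structure IsFreqBranches {X J : Type*} [TopologicalSpace X] [LinearOrder J] (p : X → ℂ →₀ ℂ[X])
    (V : Set X) (l : ℂ →ₗ[ℝ] ℝ) (L : J → X → ℂ) : Prop where
  isOpen : IsOpen V
  nonempty : V.Nonempty
  continuousOn : ∀ j, ContinuousOn (L j) V
  strictMono : ∀ x ∈ V, StrictMono fun j => l (L j x)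
  range_eq : ∀ x ∈ V, Set.range (fun j => L j x) = (p x).support

section IsFreqBranches

variable {X J : Type*} [TopologicalSpace X] [LinearOrder J] {p : X → ℂ →₀ ℂ[X]} {V : Set X}
  {l : ℂ →ₗ[ℝ] ℝ} {L : J → X → ℂ}

theorem IsFreqBranches.injective (hL : IsFreqBranches p V l L) {x : X} (hx : x ∈ V) :
    Function.Injective fun j => L j x := fun _ _ heq =>
  (hL.strictMono x hx).injective (congrArg l heq)

theorem IsFreqBranches.mem_support (hL : IsFreqBranches p V l L) {x : X} (hx : x ∈ V) (j : J) :
    L j x ∈ (p x).support :=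
  (hL.range_eq x hx).subset ⟨j, rfl⟩

theorem IsFreqBranches.expSum_eq [Fintype J] (hL : IsFreqBranches p V l L) {x : X} (hx : x ∈ V)
    (y : ℝ) : expSum (p x) y = ∑ j, (p x (L j x)).eval (y : ℂ) * Complex.exp (L j x * y) := by
  have himage : Finset.univ.image (fun j => L j x) = (p x).support := by
    rw [← Finset.coe_inj, Finset.coe_image, Finset.coe_univ, Set.image_univ, hL.range_eq x hx]
  rw [expSum_apply, ← himage, Finset.sum_image (hL.injective hx).injOn]

end IsFreqBranches

theorem exists_dual_injOn (s : Finset ℂ) : ∃ l : ℂ →ₗ[ℝ] ℝ, Set.InjOn l s := by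
  obtain ⟨l, hl⟩ := Module.exists_dual_forall_apply_ne_zero (K := ℝ)
    (fun z : {z : s × s // z.1 ≠ z.2} => (z.1.1 - z.1.2 : ℂ))
    (fun z => sub_ne_zero.2 fun heq => z.2 (Subtype.ext heq))
  refine ⟨l, fun μ hμ ν hν heq => ?_⟩
  by_contra hne
  refine hl ⟨(⟨μ, hμ⟩, ⟨ν, hν⟩), fun heq => hne (congrArg Subtype.val heq)⟩ ?_
  rw [map_sub, heq, sub_self]

theorem exists_isFreqBranches_of_lowerHemicontinuousOn {X : Type*} [TopologicalSpace X]
    {p : X → ℂ →₀ ℂ[X]} {U : Set X} (hU : IsOpen U) (hne : U.Nonempty) {r : ℕ}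
    (hcard : ∀ x ∈ U, (p x).support.card ≤ r)
    (hp : LowerHemicontinuousOn (fun x => ((p x).support : Set ℂ)) U) :
    ∃ (J : Type) (_ : Fintype J) (_ : LinearOrder J) (V : Set X) (l : ℂ →ₗ[ℝ] ℝ) (L : J → X → ℂ),
      IsFreqBranches p V l L := by
  have hbdd : BddAbove ((fun x => (p x).support.card) '' U) :=
    ⟨r, Set.forall_mem_image.2 hcard⟩
  obtain ⟨x₀, hx₀, hsup⟩ := Nat.sSup_mem (hne.image _) hbdd
  obtain ⟨V, -, hV, hx₀V, L, hLx₀, hcont, hL⟩ := exists_continuousOn_branches hU hp hx₀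
    fun x hx => (le_csSup hbdd ⟨x, hx, rfl⟩).trans_eq hsup.symm
  obtain ⟨l, hl⟩ := exists_dual_injOn (p x₀).support
  let _ : LinearOrder (p x₀).support := LinearOrder.lift' (fun j => l j) hl.injective
  have horder : ∀ᶠ x in 𝓝 x₀, ∀ j j', j < j' → l (L j x) < l (L j' x) := by
    refine eventually_all.2 fun j => eventually_all.2 fun j' => eventually_imp_distrib_left.2 ?_
    intro hlt
    have hcontAt (j) : ContinuousAt (fun x => l (L j x)) x₀ :=
      l.continuous_of_finiteDimensional.continuousAt.comp
        ((hcont j).continuousAt (hV.mem_nhds hx₀V))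
    refine (hcontAt j).eventually_lt (hcontAt j') ?_
    rwa [hLx₀, hLx₀]
  obtain ⟨W, hW, hWopen, hx₀W⟩ := mem_nhds_iff.1 ((hV.eventually_mem hx₀V).and horder)
  exact ⟨(p x₀).support, inferInstance, inferInstance, W, l, L, hWopen, ⟨x₀, hx₀W⟩,
    fun j => (hcont j).mono fun x hx => (hW hx).1, fun x hx j j' => (hW hx).2 j j',
    fun x hx => (hL x (hW hx).1).2⟩

theorem exists_isFreqBranches {X : Type*} [TopologicalSpace X] [BaireSpace X] [Nonempty X]
    {p : X → ℂ →₀ ℂ[X]} (hcont : ∀ y, Continuous fun x => expSum (p x) y)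
    (hp : ∃ n, ∀ x, HankelRankLT n (expSum (p x))) :
    ∃ (J : Type) (_ : Fintype J) (_ : LinearOrder J) (V : Set X) (l : ℂ →ₗ[ℝ] ℝ) (L : J → X → ℂ),
      IsFreqBranches p V l L := by
  classical
  obtain ⟨r, hr⟩ : ∃ r, Nat.find hp = r + 1 := Nat.exists_eq_succ_of_ne_zero fun hzero => by
    refine one_ne_zero (α := ℂ) (Matrix.det_isEmpty (A := hankel (expSum (p
      (Classical.arbitrary X))) ![] ![]) |>.symm.trans ?_)
    exact (Nat.find_spec hp _).det_eq_zero (by simpa using hzero.symm) _ _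
  have hrank := Nat.find_spec hp
  rw [hr] at hrank
  have hmin := Nat.find_min hp (m := r) (by omega)
  simp only [HankelRankLT, not_forall] at hmin
  obtain ⟨x₁, a, b, hx₁⟩ := hmin
  have hdet : Continuous fun x => (hankel (expSum (p x)) a b).det :=
    (continuous_matrix fun i j => hcont _).matrix_det
  obtain ⟨U, hUdet, hU, hUne, N, hN⟩ := exists_isOpen_support_bounded hcont hrank
    (isOpen_ne_fun hdet continuous_const) ⟨x₁, hx₁⟩ fun _ hx => hx
  exact exists_isFreqBranches_of_lowerHemicontinuousOn hU hUne
    (fun x hx => card_support_le (hrank x) (hUdet hx))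
    (lowerHemicontinuousOn_support hcont hrank hUdet hN)

end Branches

section Directional

open Topology Polynomial

section AddAlongAt

variable {E : Type*} [AddCommGroup E] [Module ℝ E] [TopologicalSpace E] {L M : E → ℂ} {e z : E}

/-- Near `z`, the function `L` is additive up to a constant along the direction `e`. The condition
is required uniformly for base points close to `z`, so that it holds on an open set. -/
def AddAlongAt (L : E → ℂ) (e z : E) : Prop :=
  ∀ᶠ v : E × ℝ × ℝ in 𝓝 (z, 0, 0),
    L (v.1 + (v.2.1 + v.2.2) • e) + L v.1 = L (v.1 + v.2.1 • e) + L (v.1 + v.2.2 • e)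

theorem AddAlongAt.add (hL : AddAlongAt L e z) (hM : AddAlongAt M e z) :
    AddAlongAt (L + M) e z := by
  filter_upwards [hL, hM] with v hLv hMv
  simp only [Pi.add_apply]
  linear_combination hLv + hMv

theorem AddAlongAt.eventually_nhds (hL : AddAlongAt L e z) : ∀ᶠ z' in 𝓝 z, AddAlongAt L e z' :=
  (Continuous.prodMk_left ((0, 0) : ℝ × ℝ)).continuousAt.eventually
    (eventually_eventually_nhds.2 hL)

theorem isOpen_setOf_addAlongAt : IsOpen {z | AddAlongAt L e z} :=
  isOpen_iff_mem_nhds.2 fun _ hz => hz.eventually_nhds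

/-- The nodes of a Hankel matrix in the direction `e`; the point `w` consists of the base point and
of the row and column shifts. -/
def hankelNode {n : ℕ} (e : E) (w : E × (Fin n → ℝ) × (Fin n → ℝ)) (i j : Fin n) : E :=
  w.1 + (w.2.1 i + w.2.2 j) • e

variable [IsTopologicalAddGroup E] {n : ℕ}

theorem continuous_hankelNode [ContinuousSMul ℝ E] (e : E) (i j : Fin n) :
    Continuous fun w => hankelNode (n := n) e w i j := by
  unfold hankelNode
  fun_prop

/-- Moving the base point, the `i`-th row shift and the `j`-th column shift, the second mixed
difference of the sum only retains its `(i, j)` term. -/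
theorem addAlongAt_of_eventually_sum_hankelNode_eq_zero {c : Fin n → Fin n → E → ℂ}
    {w : E × (Fin n → ℝ) × (Fin n → ℝ)}
    (hc : ∀ᶠ w' in 𝓝 w, ∑ a, ∑ b, c a b (hankelNode e w' a b) = 0) (i j : Fin n) :
    AddAlongAt (c i j) e (hankelNode e w i j) := by
  let move (v : E × ℝ × ℝ) : E × (Fin n → ℝ) × (Fin n → ℝ) :=
    (w.1 + (v.1 - hankelNode e w i j), w.2.1 + Pi.single i v.2.1, w.2.2 + Pi.single j v.2.2)
  have hmove : Continuous move := by
    have hrows : Continuous fun v : E × ℝ × ℝ => (Pi.single i v.2.1 : Fin n → ℝ) :=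
      (continuous_single i).comp (by fun_prop)
    have hcols : Continuous fun v : E × ℝ × ℝ => (Pi.single j v.2.2 : Fin n → ℝ) :=
      (continuous_single j).comp (by fun_prop)
    fun_prop
  have hnode (v : E × ℝ × ℝ) (a b : Fin n) : hankelNode e (move v) a b = hankelNode e w a b +
      (v.1 - hankelNode e w i j) +
        ((Pi.single i v.2.1 : Fin n → ℝ) a + (Pi.single j v.2.2 : Fin n → ℝ) b) • e := by
    simp only [hankelNode, move, Pi.add_apply]
    module
  have hnear {φ : E × ℝ × ℝ → E × ℝ × ℝ} (hφ : Continuous φ)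
      (hφ₀ : φ (hankelNode e w i j, 0, 0) = (hankelNode e w i j, 0, 0)) :
      ∀ᶠ v in 𝓝 (hankelNode e w i j, (0 : ℝ), (0 : ℝ)),
        ∑ a, ∑ b, c a b (hankelNode e (move (φ v)) a b) = 0 := by
    refine ((hmove.comp hφ).tendsto' _ w ?_).eventually hc
    simp only [Function.comp_apply, hφ₀, move, sub_self, Pi.single_zero, add_zero]
  filter_upwards [hnear continuous_id rfl,
    hnear (φ := fun v => (v.1, v.2.1, 0)) (by fun_prop) rfl,
    hnear (φ := fun v => (v.1, 0, v.2.2)) (by fun_prop) rfl,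
    hnear (φ := fun v => (v.1, 0, 0)) (by fun_prop) rfl] with v hrowcol hrow hcol hbase
  have hmixed : ∑ a, ∑ b, (c a b (hankelNode e (move v) a b) -
      c a b (hankelNode e (move (v.1, v.2.1, 0)) a b) -
      c a b (hankelNode e (move (v.1, 0, v.2.2)) a b) +
      c a b (hankelNode e (move (v.1, 0, 0)) a b)) = 0 := by
    simp only [Finset.sum_add_distrib, Finset.sum_sub_distrib, hrow, hcol, hbase]
    simpa using hrowcol
  rw [Fintype.sum_eq_single i fun a ha => Finset.sum_eq_zero fun b _ => by simp [hnode, ha],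
    Fintype.sum_eq_single j fun b hb => by simp [hnode, hb]] at hmixed
  simp only [hnode, Pi.single_eq_same, add_sub_cancel, add_zero,
    zero_add, zero_smul] at hmixed
  linear_combination hmixed

end AddAlongAt

theorem exists_sum_frequencies_eq_of_det_eq_zero {J : Type*} [Fintype J] {n : ℕ}
    {A : Fin n → Fin n → ℝ → ℂ} {L : J → Fin n → Fin n → ℂ} {Q : J → Fin n → Fin n → ℂ[X]}
    (hQ : ∀ j a b, Q j a b ≠ 0)
    (hA : ∀ a b y, A a b y = ∑ j, (Q j a b).eval (y : ℂ) * Complex.exp (L j a b * y))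
    (hdet : ∀ y, (Matrix.of fun a b => A a b y).det = 0) (k : J) :
    ∃ π : Equiv.Perm (Fin n) × (Fin n → J), π ≠ (1, fun _ => k) ∧
      ∑ i, L (π.2 i) (π.1 i) i = ∑ i, L k i i := by
  refine exists_ne_of_sum_mul_exp_eq_zero (i₀ := (1, fun _ => k))
    (Q := fun π : Equiv.Perm (Fin n) × (Fin n → J) =>
      C ((Equiv.Perm.sign π.1 : ℤ) : ℂ) * ∏ i, Q (π.2 i) (π.1 i) i)
    (μ := fun π => ∑ i, L (π.2 i) (π.1 i) i) (fun y => ?_) ?_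
  · rw [← hdet y, Matrix.det_apply', Fintype.sum_prod_type]
    refine Finset.sum_congr rfl fun τ _ => ?_
    simp only [Matrix.of_apply, hA]
    rw [Finset.prod_univ_sum, Fintype.piFinset_univ, Finset.mul_sum]
    refine Finset.sum_congr rfl fun κ _ => ?_
    rw [eval_mul, eval_C, eval_prod, Finset.sum_mul, Complex.exp_sum, Finset.prod_mul_distrib,
      mul_assoc]
  · simp [Finset.prod_ne_zero_iff, hQ]

theorem IsFreqBranches.exists_ne_or_lt {X J : Type*} [TopologicalSpace X] [LinearOrder J]
    {p : X → ℂ →₀ ℂ[X]} {V : Set X} {l : ℂ →ₗ[ℝ] ℝ} {L : J → X → ℂ}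
    (hL : IsFreqBranches p V l L) {n : ℕ} {k : J} {τ : Equiv.Perm (Fin n)}
    {κ : Fin n → J} (hne : (τ, κ) ≠ (1, fun _ => k)) {x : Fin n → Fin n → X}
    (hx : ∀ i j, x i j ∈ V) (hrel : ∑ i, L (κ i) (x (τ i) i) = ∑ i, L k (x i i)) :
    ∃ i, τ i ≠ i ∨ k < κ i := by
  by_contra! hcon
  have hτ (i) : τ i = i := (hcon i).1
  obtain ⟨i₀, hi₀⟩ : ∃ i, κ i ≠ k := by
    by_contra! hκ
    exact hne (Prod.ext (Equiv.ext hτ) (funext hκ))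
  refine absurd (congrArg l hrel) (ne_of_lt ?_)
  simp only [map_sum, hτ]
  exact Finset.sum_lt_sum (fun i _ => (hL.strictMono _ (hx i i)).monotone (hcon i).2)
    ⟨i₀, Finset.mem_univ _, hL.strictMono _ (hx i₀ i₀) ((hcon i₀).2.lt_of_ne hi₀)⟩

namespace IsFreqBranches

variable {E J : Type*} [NormedAddCommGroup E] [NormedSpace ℝ E] [CompleteSpace E] [LinearOrder J]
  {p : E → ℂ →₀ ℂ[X]} {V : Set E} {l : ℂ →ₗ[ℝ] ℝ} {L : J → E → ℂ} {e : E} {n : ℕ}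

theorem exists_frequency_relation [Finite J] (hL : IsFreqBranches p V l L)
    (hH : ∀ x y, HankelRankLT n fun t : ℝ => expSum (p (x + t • e)) y) (k : J) {U : Set E}
    (hU : IsOpen U) (hne : U.Nonempty) (hUV : U ⊆ V) :
    ∃ (τ : Equiv.Perm (Fin n)) (κ : Fin n → J) (w : E × (Fin n → ℝ) × (Fin n → ℝ)),
      (τ, κ) ≠ (1, fun _ => k) ∧ (∀ i j, hankelNode e w i j ∈ U) ∧
      ∀ᶠ w' in 𝓝 w, ∑ i, L (κ i) (hankelNode e w' (τ i) i) = ∑ i, L k (hankelNode e w' i i) := by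
  have := Fintype.ofFinite J
  let O : Set (E × (Fin n → ℝ) × (Fin n → ℝ)) := {w | ∀ i j, hankelNode e w i j ∈ U}
  have hO : IsOpen O := by
    simp only [O, Set.ofPred_forall]
    exact isOpen_iInter_of_finite fun i => isOpen_iInter_of_finite fun j =>
      hU.preimage (continuous_hankelNode e i j)
  obtain ⟨x, hx⟩ := hne
  have hOne : O.Nonempty := ⟨(x, 0, 0), fun i j => by simpa [hankelNode] using hx⟩
  obtain ⟨⟨⟨τ, κ⟩, hτκ⟩, w, hwO, hw⟩ := exists_nonempty_inter_interior_closure hO hOne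
    (S := fun π : {π : Equiv.Perm (Fin n) × (Fin n → J) // π ≠ (1, fun _ => k)} =>
      {w | ∑ i, L (π.1.2 i) (hankelNode e w (π.1.1 i) i) = ∑ i, L k (hankelNode e w i i)})
    fun w hw => by
      obtain ⟨π, hπ, hrel⟩ := exists_sum_frequencies_eq_of_det_eq_zero
        (fun j a b => Finsupp.mem_support_iff.1 (hL.mem_support (hUV (hw a b)) j))
        (fun a b => hL.expSum_eq (hUV (hw a b))) (fun y => hH w.1 y _ _) k
      exact Set.mem_iUnion.2 ⟨⟨π, hπ⟩, hrel⟩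
  refine ⟨τ, κ, w, hτκ, hwO, ?_⟩
  filter_upwards [hO.mem_nhds hwO, mem_interior_iff_mem_nhds.1 hw] with w' hw'O hw'
  have hcont (j : J) (a b : Fin n) : ContinuousAt (fun w => L j (hankelNode e w a b)) w' :=
    ContinuousAt.comp' ((hL.continuousOn j).continuousAt (hL.isOpen.mem_nhds (hUV (hw'O a b))))
      (continuous_hankelNode e a b).continuousAt
  exact tendsto_nhds_unique_of_frequently_eq (tendsto_finsetSum _ fun i _ => hcont _ _ _)
    (tendsto_finsetSum _ fun i _ => hcont _ _ _) (mem_closure_iff_frequently.1 hw')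

/-- Downward induction on `k`: a nontrivial relation between the frequencies either isolates the
branch `L k`, or expresses it through a branch above it. -/
theorem exists_addAlongAt [Finite J] (hL : IsFreqBranches p V l L)
    (hH : ∀ x y, HankelRankLT n fun t : ℝ => expSum (p (x + t • e)) y) (k : J) {U : Set E}
    (hU : IsOpen U) (hne : U.Nonempty) (hUV : U ⊆ V) : ∃ z ∈ U, AddAlongAt (L k) e z := by
  induction k using WellFoundedGT.induction generalizing U with
  | _ k ih =>
    obtain ⟨τ, κ, w, hτκ, hwU, hrel⟩ := hL.exists_frequency_relation hH k hU hne hUV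
    have hadd := addAlongAt_of_eventually_sum_hankelNode_eq_zero (e := e) (w := w)
      (c := fun i j => (if i = j then L k else 0) - if i = τ j then L (κ j) else 0) <| by
      filter_upwards [hrel] with w' hw'
      simp only [Pi.sub_apply, ite_apply, Pi.zero_apply, Finset.sum_sub_distrib]
      rw [Finset.sum_comm (f := fun i j => ite (i = τ j) _ _)]
      simp [hw']
    obtain ⟨i, hi⟩ := hL.exists_ne_or_lt hτκ (fun i j => hUV (hwU i j)) hrel.self_of_nhds
    specialize hadd i i
    by_cases hτi : τ i = i
    · rw [if_pos rfl, if_pos hτi.symm] at hadd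
      obtain ⟨z, ⟨hzU, hz⟩, hzκ⟩ := ih (κ i) (hi.resolve_left (not_not_intro hτi))
        (hU.inter isOpen_setOf_addAlongAt) ⟨_, hwU i i, hadd⟩
        (Set.inter_subset_left.trans hUV)
      exact ⟨z, hzU, by simpa only [sub_add_cancel] using AddAlongAt.add hz hzκ⟩
    · rw [if_pos rfl, if_neg (Ne.symm hτi), sub_zero] at hadd
      exact ⟨_, hwU i i, hadd⟩

theorem exists_forall_addAlongAt [Finite J] (hL : IsFreqBranches p V l L) {ι : Type*} [Finite ι]
    {e : ι → E} (hH : ∀ i, ∃ n, ∀ x y, HankelRankLT n fun t : ℝ => expSum (p (x + t • e i)) y) :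
    ∃ z ∈ V, ∀ i j, AddAlongAt (L j) (e i) z := by
  by_contra! hcon
  obtain ⟨⟨i, j⟩, hne⟩ := exists_nonempty_inter_interior_closure hL.isOpen hL.nonempty
    (S := fun ij : ι × J => {z | AddAlongAt (L ij.2) (e ij.1) z}ᶜ) fun z hz => by
      obtain ⟨i, j, hij⟩ := hcon z hz
      exact Set.mem_iUnion.2 ⟨(i, j), hij⟩
  obtain ⟨n, hn⟩ := hH i
  obtain ⟨z, hz, hadd⟩ := hL.exists_addAlongAt hn j (hL.isOpen.inter isOpen_interior) hne
    Set.inter_subset_left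
  rw [isOpen_setOf_addAlongAt.isClosed_compl.closure_eq] at hz
  exact interior_subset hz.2 hadd

end IsFreqBranches

end Directional

section CoordinatewiseAffine

open Filter Topology MvPolynomial

/-- A maximum principle: where the norm is maximal, the midpoint relation with the closer end
of the interval bounds the norm by half of itself. -/
theorem eqOn_zero_of_midpoint {E : Type*} [NormedAddCommGroup E] [NormedSpace ℝ E] {g : ℝ → E}
    {a b : ℝ} (hg : ContinuousOn g (Set.Icc a b)) (hga : g a = 0) (hgb : g b = 0)
    (hmid : ∀ t s, t - s ∈ Set.Icc a b → t + s ∈ Set.Icc a b →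
      g (t - s) + g (t + s) = (2 : ℝ) • g t) :
    Set.EqOn g 0 (Set.Icc a b) := by
  intro t ht
  obtain ⟨m, hm, hmax⟩ := isCompact_Icc.exists_isMaxOn ⟨t, ht⟩ hg.norm
  suffices hgm : 2 * ‖g m‖ ≤ ‖g m‖ by
    have hle : ‖g t‖ ≤ ‖g m‖ := hmax ht
    exact norm_le_zero_iff.1 (by linarith)
  have hnorm {s : ℝ} (hl : m - s ∈ Set.Icc a b) (hr : m + s ∈ Set.Icc a b) :
      2 * ‖g m‖ = ‖g (m - s) + g (m + s)‖ := by
    rw [hmid m s hl hr, norm_smul, Real.norm_two]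
  rcases le_total (m - a) (b - m) with hle | hle
  · have hr : m + (m - a) ∈ Set.Icc a b := ⟨by linarith [hm.1], by linarith⟩
    rw [hnorm (s := m - a) (by simpa using hm.1.trans hm.2) hr, sub_sub_cancel, hga, zero_add]
    exact hmax hr
  · have hl : m - (b - m) ∈ Set.Icc a b := ⟨by linarith, by linarith [hm.2]⟩
    rw [hnorm (s := b - m) hl (by simpa using hm.1.trans hm.2), add_sub_cancel, hgb, add_zero]
    exact hmax hl

theorem eq_lineMap_of_midpoint {E : Type*} [NormedAddCommGroup E] [NormedSpace ℝ E] {g : ℝ → E}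
    {a b : ℝ} (hab : a < b) (hg : ContinuousOn g (Set.Icc a b))
    (hmid : ∀ t s, t - s ∈ Set.Icc a b → t + s ∈ Set.Icc a b →
      g (t - s) + g (t + s) = (2 : ℝ) • g t) {t : ℝ} (ht : t ∈ Set.Icc a b) :
    g t = AffineMap.lineMap (g a) (g b) ((t - a) / (b - a)) := by
  have hba : b - a ≠ 0 := (sub_pos.2 hab).ne'
  refine sub_eq_zero.1 (eqOn_zero_of_midpoint
    (g := fun t => g t - AffineMap.lineMap (g a) (g b) ((t - a) / (b - a)))
    (hg.sub ?_) (by simp) (by simp [div_self hba]) (fun t s hl hr => ?_) ht)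
  · simp only [AffineMap.lineMap_apply_module]
    fun_prop
  · rw [smul_sub, ← hmid t s hl hr]
    simp only [AffineMap.lineMap_apply_module]
    module

theorem update_mem_Icc {ι : Type*} [DecidableEq ι] {α : ι → Type*} [∀ i, Preorder (α i)]
    {a b x : ∀ i, α i} (hx : x ∈ Set.Icc a b) {i : ι} {t : α i} (ht : t ∈ Set.Icc (a i) (b i)) :
    Function.update x i t ∈ Set.Icc a b :=
  ⟨le_update_iff.2 ⟨ht.1, fun j _ => hx.1 j⟩, update_le_iff.2 ⟨ht.2, fun j _ => hx.2 j⟩⟩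

section Interpolation

variable {σ : Type*} [DecidableEq σ] {L : (σ → ℝ) → ℂ} {a b : σ → ℝ}

theorem exists_supported_of_lineMap (hab : a ≤ b)
    (hL : ∀ x ∈ Set.Icc a b, ∀ i, L x = AffineMap.lineMap (L (Function.update x i (a i)))
      (L (Function.update x i (b i))) ((x i - a i) / (b i - a i)))
    (s : Finset σ) {z : σ → ℝ} (hz : z ∈ Set.Icc a b) :
    ∃ P ∈ restrictDegree σ ℂ 1, P ∈ supported ℂ (s : Set σ) ∧
      ∀ x ∈ Set.Icc a b, L (s.piecewise x z) = realEval x P := by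
  induction s using Finset.induction_on generalizing z with
  | empty => exact ⟨C (L z), C_mem_restrictDegree _ _, Subalgebra.algebraMap_mem _ _, by simp⟩
  | insert i s hi ih =>
    obtain ⟨P, hP, hPs, hLP⟩ := ih (update_mem_Icc hz ⟨le_rfl, hab i⟩)
    obtain ⟨Q, hQ, hQs, hLQ⟩ := ih (update_mem_Icc hz ⟨hab i, le_rfl⟩)
    let D := C ((b i - a i : ℂ)⁻¹) * (Q - P)
    have hD : D ∈ restrictDegree σ ℂ 1 := by
      simpa only [D, ← smul_eq_C_mul] using Submodule.smul_mem _ _ (Submodule.sub_mem _ hQ hP)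
    have hDs : D ∈ supported ℂ (s : Set σ) :=
      mul_mem (Subalgebra.algebraMap_mem _ _) (sub_mem hQs hPs)
    have hDi : D.degreeOf i = 0 := by
      rw [degreeOf_def, Multiset.count_eq_zero, ← Multiset.mem_toFinset, ← vars_def]
      exact fun hmem => hi (mem_supported.1 hDs hmem)
    have hmono := supported_mono (R := ℂ) (Finset.coe_subset.2 (Finset.subset_insert i s))
    refine ⟨P - C (a i : ℂ) * D + D * X i, ?_, ?_, fun x hx => ?_⟩
    · refine Submodule.add_mem _ (Submodule.sub_mem _ hP ?_)
        (mul_X_mem_restrictDegree hD (hDi.trans_lt one_pos))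
      simpa only [← smul_eq_C_mul] using Submodule.smul_mem _ _ hD
    · exact add_mem (sub_mem (hmono hPs) (mul_mem (Subalgebra.algebraMap_mem _ _) (hmono hDs)))
        (mul_mem (hmono hDs) (X_mem_supported.2 (Finset.mem_insert_self i s)))
    · have hmem : (insert i s).piecewise x z ∈ Set.Icc a b :=
        ⟨Finset.le_piecewise_of_le_of_le _ hx.1 hz.1, Finset.piecewise_le_of_le_of_le _ hx.2 hz.2⟩
      have hcomm (t) : Function.update ((insert i s).piecewise x z) i t =
          s.piecewise x (Function.update z i t) := by
        rw [Finset.piecewise_insert, Function.update_idem,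
          Finset.update_piecewise_of_notMem _ _ _ hi]
      rw [hL _ hmem i, hcomm, hcomm, hLP x hx, hLQ x hx, AffineMap.lineMap_apply_module',
        Finset.piecewise_eq_of_mem _ _ _ (Finset.mem_insert_self i s), Complex.real_smul]
      simp only [D, map_add, map_sub, map_mul, eval_C, eval_X]
      push_cast
      ring

end Interpolation

theorem AddAlongAt.eventually_midpoint {E : Type*} [AddCommGroup E] [Module ℝ E]
    [TopologicalSpace E] [IsTopologicalAddGroup E] [ContinuousSMul ℝ E] {L : E → ℂ} {e z : E}
    (hL : AddAlongAt L e z) : ∀ᶠ v : E × ℝ in 𝓝 (z, 0),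
      L (v.1 - v.2 • e) + L (v.1 + v.2 • e) = (2 : ℝ) • L v.1 := by
  have hlim : Tendsto (fun v : E × ℝ => (v.1 - v.2 • e, v.2, v.2)) (𝓝 (z, 0)) (𝓝 (z, 0, 0)) :=
    Continuous.tendsto' (by fun_prop) _ _ (by simp)
  filter_upwards [hlim.eventually hL] with v hv
  rw [sub_add_cancel, add_smul, ← add_assoc, sub_add_cancel] at hv
  rw [add_comm, hv, two_smul]

theorem add_smul_single_one {ι R : Type*} [DecidableEq ι] [Semiring R] (x : ι → R) (i : ι) (r : R) :
    x + r • Pi.single i 1 = Function.update x i (x i + r) := by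
  ext k
  rcases eq_or_ne k i with rfl | hk <;> simp [*]

theorem exists_restrictDegree_eventually_eq {σ : Type*} [Finite σ] [DecidableEq σ]
    {L : (σ → ℝ) → ℂ} {x₀ : σ → ℝ} (hL : ∀ᶠ x in 𝓝 x₀, ContinuousAt L x)
    (hadd : ∀ i, AddAlongAt L (Pi.single i 1) x₀) :
    ∃ P ∈ restrictDegree σ ℂ 1, ∀ᶠ x in 𝓝 x₀, L x = realEval x P := by
  have := Fintype.ofFinite σ
  obtain ⟨ε, hε, hball⟩ := Metric.nhds_basis_closedBall.eventually_iff.1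
    (hL.prod_inl_nhds (0 : ℝ) |>.and (eventually_all.2 fun i => (hadd i).eventually_midpoint))
  have hIcc : Metric.closedBall x₀ ε = Set.Icc (fun i => x₀ i - ε) fun i => x₀ i + ε := by
    rw [closedBall_pi _ hε.le]
    simp only [Real.closedBall_eq_Icc, Set.pi_univ_Icc]
  rw [← closedBall_prod_same, hIcc, Real.closedBall_eq_Icc] at hball
  have hline {x} (hx : x ∈ Set.Icc (fun i => x₀ i - ε) fun i => x₀ i + ε) (i : σ) :
      L x = AffineMap.lineMap (L (Function.update x i (x₀ i - ε)))
        (L (Function.update x i (x₀ i + ε))) ((x i - (x₀ i - ε)) / (x₀ i + ε - (x₀ i - ε))) := by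
    have hupdate {t} (ht : t ∈ Set.Icc (x₀ i - ε) (x₀ i + ε)) : Function.update x i t ∈ Set.Icc
      (fun i => x₀ i - ε) fun i => x₀ i + ε := update_mem_Icc hx ht
    have haffine := eq_lineMap_of_midpoint (g := fun t => L (Function.update x i t))
      (by linarith) (fun t ht => ?_) (fun t s hl hr => ?_) (t := x i) ⟨hx.1 i, hx.2 i⟩
    · rwa [Function.update_eq_self] at haffine
    · have hcont : ContinuousAt L (Function.update x i t) :=
        (hball (x := (Function.update x i t, 0)) ⟨hupdate ht, by simp [hε.le]⟩).1
      exact (hcont.comp' (continuous_const.update i continuous_id').continuousAt).continuousWithinAt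
    · have ht : t ∈ Set.Icc (x₀ i - ε) (x₀ i + ε) := by
        constructor <;> linarith [hl.1, hl.2, hr.1, hr.2]
      have hs : s ∈ Set.Icc (0 - ε) (0 + ε) := by
        constructor <;> linarith [hl.1, hl.2, hr.1, hr.2]
      have hmid := (hball (x := (Function.update x i t, s)) ⟨hupdate ht, hs⟩).2 i
      simpa only [sub_eq_add_neg, ← neg_smul, add_smul_single_one, Function.update_self,
        Function.update_idem] using hmid
  obtain ⟨P, hP, -, hLP⟩ := exists_supported_of_lineMap (fun i => by linarith)
    (fun x hx i => hline hx i) Finset.univ (z := x₀)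
    ⟨fun i => by simp [hε.le], fun i => by simp [hε.le]⟩
  refine ⟨P, hP, ?_⟩
  filter_upwards [Metric.closedBall_mem_nhds x₀ hε] with x hx
  rw [← hLP x (hIcc ▸ hx), Finset.piecewise_univ]

end CoordinatewiseAffine

section LocalForm

open Filter Topology MvPolynomial Polynomial

variable {σ : Type*} [Finite σ] [DecidableEq σ] {p : (σ → ℝ) → ℂ →₀ ℂ[X]}

theorem exists_restrictDegree_branches (hcont : ∀ y, Continuous fun x => expSum (p x) y)
    (hp : ∃ n, ∀ x, HankelRankLT n (expSum (p x)))
    (hH : ∀ i, ∃ n, ∀ x y,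
      HankelRankLT n fun t : ℝ => expSum (p (x + t • Pi.single i 1)) y) :
    ∃ (J : Type) (_ : Fintype J) (W : Set (σ → ℝ)) (P : J → MvPolynomial σ ℂ),
      IsOpen W ∧ W.Nonempty ∧ (∀ j, P j ∈ restrictDegree σ ℂ 1) ∧
      ∀ x ∈ W, Function.Injective (fun j => realEval x (P j)) ∧
        ∀ y, expSum (p x) y =
          ∑ j, (p x (realEval x (P j))).eval (y : ℂ) * Complex.exp (realEval x (P j) * y) := by
  have := Fintype.ofFinite σ
  obtain ⟨J, _, _, V, l, L, hL⟩ := exists_isFreqBranches hcont hp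
  obtain ⟨z, hzV, hadd⟩ := hL.exists_forall_addAlongAt hH
  have hV : ∀ᶠ x in 𝓝 z, x ∈ V := hL.isOpen.mem_nhds hzV
  choose P hP hLP using fun j => exists_restrictDegree_eventually_eq
    (hV.mono fun x hx => (hL.continuousOn j).continuousAt (hL.isOpen.mem_nhds hx))
    fun i => hadd i j
  obtain ⟨W, hW, hWo, hzW⟩ := eventually_nhds_iff.1 (hV.and (eventually_all.2 hLP))
  refine ⟨J, inferInstance, W, P, hWo, ⟨z, hzW⟩, hP, fun x hx => ?_⟩
  obtain ⟨hxV, hPx⟩ := hW x hx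
  simp only [← hPx]
  exact ⟨hL.injective hxV, hL.expSum_eq hxV⟩

theorem exists_local_form (hcont : ∀ y, Continuous fun x => expSum (p x) y)
    (hp : ∃ n, ∀ x, HankelRankLT n (expSum (p x)))
    (hH : ∀ i, ∃ n, ∀ x y,
      HankelRankLT n fun t : ℝ => expSum (p (x + t • Pi.single i 1)) y) :
    ∃ (B : Type) (_ : Fintype B) (j : B → ℕ) (Λ : B → MvPolynomial σ ℂ) (S : Set (σ → ℝ)),
      (∀ b, Λ b ∈ restrictDegree σ ℂ 1) ∧ (interior (closure S)).Nonempty ∧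
      ∀ x ∈ S, Function.Injective (fun b => (j b, realEval x (Λ b))) ∧
        ∃ c : B → ℂ, ∀ y, expSum (p x) y = ∑ b, c b * expMonomial (j b) (realEval x (Λ b)) y := by
  obtain ⟨J, _, W, P, hW, hne, hP, hloc⟩ := exists_restrictDegree_branches hcont hp hH
  obtain ⟨N, hN⟩ := exists_nonempty_inter_interior_closure hW hne
    (S := fun N : ℕ => {x | x ∈ W ∧ ∀ j, (p x (realEval x (P j))).natDegree ≤ N}) fun x hx =>
      Set.mem_iUnion.2 ⟨_, hx, fun j => Finset.le_sup
        (f := fun j => (p x (realEval x (P j))).natDegree) (Finset.mem_univ j)⟩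
  refine ⟨J × Fin (N + 1), inferInstance, fun b => b.2, fun b => P b.1, _, fun b => hP b.1,
    hN.mono Set.inter_subset_right, fun x hx => ?_⟩
  obtain ⟨hxW, hdeg⟩ := hx
  obtain ⟨hinj, hsum⟩ := hloc x hxW
  refine ⟨?_, fun b => (p x (realEval x (P b.1))).coeff b.2, fun y => ?_⟩
  · rintro ⟨j, i⟩ ⟨j', i'⟩ h
    obtain ⟨hi, hj⟩ := Prod.mk.inj h
    exact Prod.ext (hinj hj) (Fin.ext hi)
  · rw [hsum, Fintype.sum_prod_type]
    refine Finset.sum_congr rfl fun j _ => ?_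
    simp only [Polynomial.eval_eq_sum_range' (Nat.lt_succ_of_le (hdeg j)), Finset.sum_range,
      Finset.sum_mul, expMonomial, mul_assoc]

end LocalForm

section IndependentFunctions

variable {K ι T : Type*} [Field K] {φ : ι → T → K}

theorem mem_of_forall_sum_smul_mem [Fintype ι] (hφ : LinearIndependent K φ)
    {V : Type*} [AddCommGroup V] [Module K V] {W : Submodule K V} {n : ι → V}
    (h : ∀ t, ∑ i, φ i t • n i ∈ W) (i : ι) : n i ∈ W := by
  classical
  have hspan : Submodule.span K (Set.range (flip φ)) ≤ W.comap (Fintype.linearCombination K n) :=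
    Submodule.span_le.2 (Set.range_subset_iff.2 h)
  rw [span_flip_eq_top_iff_linearIndependent.2 hφ] at hspan
  simpa using hspan (Submodule.mem_top (x := Pi.single i 1))

theorem exists_det_ne_zero_of_linearIndependent [Fintype ι] [DecidableEq ι]
    (hφ : LinearIndependent K φ) : ∃ t : ι → T, (Matrix.of fun a b => φ b (t a)).det ≠ 0 := by
  obtain ⟨κ, a, -, hspan, hind⟩ := exists_linearIndependent' K (flip φ)
  rw [span_flip_eq_top_iff_linearIndependent.2 hφ] at hspan
  let e := (Pi.basisFun K ι).indexEquiv (Module.Basis.mk hind hspan.ge)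
  exact ⟨a ∘ e, (Matrix.isUnit_iff_isUnit_det _ |>.1
    (Matrix.linearIndependent_rows_iff_isUnit.1 (hind.comp e e.injective))).ne_zero⟩

end IndependentFunctions

section Divisibility

theorem dvd_sum_filter_of_mul_eq_sum {ι A S B : Type*} [DecidableEq ι] [AddMonoid ι]
    [CommSemiring A] [SetLike S A] [AddSubmonoidClass S A] (𝒜 : ι → S) [GradedRing 𝒜] [Fintype B]
    {D f : A} {M : B → A} {k : B → ι} (hD : D ∈ 𝒜 0) (hM : ∀ b, M b ∈ 𝒜 (k b))
    (h : D * f = ∑ b, M b) (i : ι) : D ∣ ∑ b with k b = i, M b := by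
  refine ⟨GradedRing.proj 𝒜 i f, ?_⟩
  rw [GradedRing.proj_apply, ← DirectSum.coe_decompose_mul_of_left_mem_zero 𝒜 hD,
    ← GradedRing.proj_apply, h, map_sum, Finset.sum_filter]
  refine Finset.sum_congr rfl fun b _ => ?_
  rw [GradedRing.proj_apply]
  split_ifs with hb
  · exact (DirectSum.decompose_of_mem_same 𝒜 (hb ▸ hM b)).symm
  · exact (DirectSum.decompose_of_mem_ne 𝒜 (hM b) hb).symm

theorem countable_setOf_smul_mem {K G : Type*} [DivisionRing K] [AddCommGroup G] [Module K G]
    {Γ : Set G} (hΓ : Γ.Countable) {g : G} (hg : g ≠ 0) : {y : K | y • g ∈ Γ}.Countable :=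
  hΓ.preimage (f := fun y : K => y • g) (smul_left_injective K hg)

theorem dense_setOf_forall_smul_sub_mem_imp_eq {G B : Type*} [AddCommGroup G] [Module ℝ G]
    [Countable B] {Γ : Set G} (hΓ : Γ.Countable) (α : B → G) :
    Dense {y : ℝ | ∀ b b', y • (α b - α b') ∈ Γ → α b = α b'} := by
  have hcount : (⋃ v : {v : B × B // α v.1 ≠ α v.2},
      {y : ℝ | y • (α v.1.1 - α v.1.2) ∈ Γ}).Countable :=
    Set.countable_iUnion fun v => countable_setOf_smul_mem hΓ (sub_ne_zero.2 v.2)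
  refine (hcount.dense_compl ℝ).mono fun y hy b b' hb => ?_
  by_contra hne
  exact hy (Set.mem_iUnion.2 ⟨⟨(b, b'), hne⟩, hb⟩)

open AddMonoidAlgebra

theorem exists_countable_addSubgroup_mem_gradeBy {R G : Type*} [CommSemiring R]
    [AddCommGroup G] (s : Finset (AddMonoidAlgebra R G)) :
    ∃ Γ : AddSubgroup G, (Γ : Set G).Countable ∧
      ∀ a ∈ s, a ∈ gradeBy R (QuotientAddGroup.mk' Γ) 0 := by
  let T : Set G := ⋃ a ∈ s, a.coeff.support
  have hT : T.Countable := s.countable_toSet.biUnion fun a _ => a.coeff.support.countable_toSet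
  have : Countable T := hT.to_subtype
  refine ⟨(Submodule.span ℤ (Set.range ((↑) : T → G))).toAddSubgroup,
    Set.countable_coe_iff.1 (inferInstanceAs (Countable (Submodule.span ℤ _))), fun a ha g hg => ?_⟩
  exact (QuotientAddGroup.eq_zero_iff g).2
    (Submodule.subset_span ⟨⟨g, Set.mem_biUnion ha hg⟩, rfl⟩)

theorem dvd_sum_of_mul_eq_sum_single_mul {R G B : Type*} [CommSemiring R] [AddCommGroup G]
    [Fintype B] {Γ : AddSubgroup G} {D f : AddMonoidAlgebra R G} {N : B → AddMonoidAlgebra R G}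
    {g : B → G} (hD : D ∈ gradeBy R (QuotientAddGroup.mk' Γ) 0)
    (hN : ∀ b, N b ∈ gradeBy R (QuotientAddGroup.mk' Γ) 0)
    (h : D * f = ∑ b, single (g b) 1 * N b) {s : Finset B} {a : G} (hs : ∀ b ∈ s, g b = a)
    (hs' : ∀ b, g b - a ∈ Γ → b ∈ s) : D ∣ ∑ b ∈ s, N b := by
  classical
  let π := QuotientAddGroup.mk' Γ
  have hterm (b : B) : single (g b) 1 * N b ∈ gradeBy R π (π (g b)) := by
    simpa only [add_zero] using
      SetLike.mul_mem_graded (A := gradeBy R π) (single_mem_gradeBy π (g b) 1) (hN b)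
  have hfilter : ({b | π (g b) = π a} : Finset B) = s := by
    ext b
    rw [Finset.mem_filter_univ]
    exact ⟨fun hb => hs' b (QuotientAddGroup.eq_iff_sub_mem.1 hb), fun hb => by rw [hs b hb]⟩
  have hdvd : D ∣ single a 1 * ∑ b ∈ s, N b := by
    have hcomponent := dvd_sum_filter_of_mul_eq_sum (gradeBy R π) hD hterm h (π a)
    rwa [hfilter, Finset.sum_congr rfl fun b hb => by rw [hs b hb], ← Finset.mul_sum] at hcomponent
  have hunit : single (-a) (1 : R) * single a 1 = 1 := by
    rw [single_mul_single, neg_add_cancel, one_mul, one_def]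
  rw [← one_mul (∑ b ∈ s, N b), ← hunit, mul_assoc]
  exact hdvd.mul_left _

-- Modulo the group generated by the exponents of `D` and the `N b`, the terms are homogeneous, and
-- for all but countably many `y` two of them have the same degree only if their `α b` agree.
theorem dvd_of_forall_mul_eq_sum {K R G B : Type*} [Field K] [CommRing R] [Algebra K R]
    [AddCommGroup G] [Module ℝ G] [Fintype B] {α : B → G} {φ : B → ℝ → K}
    {D : AddMonoidAlgebra R G} {N : B → AddMonoidAlgebra R G} {f : ℝ → AddMonoidAlgebra R G}
    (h : ∀ y, D * f y = ∑ b, φ b y • single (y • α b) 1 * N b)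
    (hφ : ∀ a, ∀ Y : Set ℝ, Dense Y →
      LinearIndependent K fun (b : {b // α b = a}) (y : Y) => φ b y) (b : B) : D ∣ N b := by
  classical
  obtain ⟨Γ, hΓ, hmem⟩ := exists_countable_addSubgroup_mem_gradeBy (insert D (Finset.univ.image N))
  have hN (b : B) : N b ∈ gradeBy R (QuotientAddGroup.mk' Γ) 0 :=
    hmem _ (Finset.mem_insert_of_mem (Finset.mem_image_of_mem _ (Finset.mem_univ b)))
  refine Ideal.mem_span_singleton.1 (mem_of_forall_sum_smul_mem
    (hφ (α b) _ (dense_setOf_forall_smul_sub_mem_imp_eq hΓ α))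
    (W := (Ideal.span {D}).restrictScalars K) (n := fun b' => N b') (fun ⟨y, hy⟩ => ?_) ⟨b, rfl⟩)
  have hdvd : D ∣ ∑ b' with α b' = α b, φ b' y • N b' := by
    refine dvd_sum_of_mul_eq_sum_single_mul (hmem D (Finset.mem_insert_self _ _))
      (f := f y) (g := fun b' => y • α b') (a := y • α b)
      (fun b' => ?_) ?_ (fun b' hb' => ?_) fun b' hb' => ?_
    · exact (gradeBy R (QuotientAddGroup.mk' Γ) 0).smul_of_tower_mem (φ b' y) (hN b')
    · simp only [h, mul_smul_comm, smul_mul_assoc]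
    · rw [(Finset.mem_filter_univ _).1 hb']
    · exact (Finset.mem_filter_univ _).2 (hy b' b (by rwa [smul_sub]))
  rw [Finset.sum_subtype (p := fun b' => α b' = α b) _ (by simp)] at hdvd
  exact Ideal.mem_span_singleton.2 hdvd

end Divisibility

section GlobalForm

variable {σ : Type*}

-- Cramer's rule, stated without dividing by the determinant.
theorem map_det_mul_eq_map_sum_mul_adjugate_mulVec {A K B : Type*} [CommRing A] [CommRing K]
    [Fintype B] [DecidableEq B] (φ : A →+* K) {M : Matrix B B A} {v e : B → A} {g : A} {c : B → K}
    (hv : ∀ a, φ (v a) = ∑ b, c b * φ (M a b)) (hg : φ g = ∑ b, c b * φ (e b)) :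
    φ (M.det * g) = φ (∑ b, e b * M.adjugate.mulVec v b) := by
  have hsolve : φ ∘ M.adjugate.mulVec v = (φ M.det) • c := by
    have hvc : φ ∘ v = (M.map φ).mulVec c := by
      funext a
      simp only [Function.comp_apply, hv, Matrix.mulVec, dotProduct, Matrix.map_apply, mul_comm]
    funext b
    rw [Function.comp_apply, RingHom.map_mulVec, hvc, ← RingHom.mapMatrix_apply,
      ← RingHom.mapMatrix_apply, RingHom.map_adjugate, Matrix.mulVec_mulVec, Matrix.adjugate_mul,
      Matrix.smul_mulVec, Matrix.one_mulVec, RingHom.map_det]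
  have hsolve_apply (b : B) : φ (M.adjugate.mulVec v b) = φ M.det * c b := congrFun hsolve b
  simp only [map_mul, map_sum, hg, hsolve_apply, Finset.mul_sum]
  exact Finset.sum_congr rfl fun b _ => by ring

/-- The formal exponential polynomial in `x` which represents `y ^ j * exp ((α(x) + β) y)`. -/
noncomputable def expTerm (j : ℕ) (α : multiAffine σ) (β : ℂ) (y : ℝ) : ExpPolyRing σ :=
  expMonomial j β y • AddMonoidAlgebra.single (y • α) 1

theorem evalExp_expTerm (x : σ → ℝ) (j : ℕ) (α : multiAffine σ) (β : ℂ) (y : ℝ) :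
    evalExp x (expTerm j α β y) = expMonomial j (realEval x (α : MvPolynomial σ ℂ) + β) y := by
  have hsmul : ((y • α : multiAffine σ) : MvPolynomial σ ℂ) =
      MvPolynomial.C (y : ℂ) * (α : MvPolynomial σ ℂ) := by
    rw [← MvPolynomial.smul_eq_C_mul]
    rfl
  rw [expTerm, AddMonoidAlgebra.smul_single, evalExp_single, hsmul, MvPolynomial.smul_eq_C_mul,
    mul_one, MvPolynomial.eval_C, map_mul, MvPolynomial.eval_C, expMonomial, expMonomial, mul_assoc,
    ← Complex.exp_add]
  ring_nf

section Coefficients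

variable [Finite σ] {B : Type*} [Fintype B] {F : (σ → ℝ) → ℝ → ℂ} {j : B → ℕ}
  {α : B → multiAffine σ} {β : B → ℂ} {S : Set (σ → ℝ)}

theorem det_mul_eq_sum_expTerm_mul [DecidableEq B] (hS : (interior (closure S)).Nonempty)
    (hloc : ∀ x ∈ S, ∃ c : B → ℂ, ∀ y,
      F x y = ∑ b, c b * expMonomial (j b) (realEval x (α b : MvPolynomial σ ℂ) + β b) y)
    {f : ℝ → ExpPolyRing σ} (hf : ∀ x y, evalExp x (f y) = F x y) (t : B → ℝ) (y : ℝ) :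
    (Matrix.of fun a b => expTerm (j b) (α b) (β b) (t a)).det * f y =
      ∑ b, expTerm (j b) (α b) (β b) y *
        (Matrix.of fun a b => expTerm (j b) (α b) (β b) (t a)).adjugate.mulVec
          (fun a => f (t a)) b := by
  refine sub_eq_zero.1 (eq_zero_of_forall_evalExp_eq_zero fun x => congrFun
    (eq_zero_of_mem_expPolyFun (mem_expPolyFun.2 ⟨_, fun _ => rfl⟩) hS fun x hx => ?_) x)
  obtain ⟨c, hc⟩ := hloc x hx
  rw [map_sub, sub_eq_zero]
  apply map_det_mul_eq_map_sum_mul_adjugate_mulVec (evalExp x) (c := c)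
  · intro a
    simp only [Matrix.of_apply, evalExp_expTerm, hf, hc]
  · simp only [evalExp_expTerm, hf, hc]

theorem exists_coeff_of_local_form (hF : ∀ y, (fun x => F x y) ∈ expPolyFun σ)
    (hS : (interior (closure S)).Nonempty)
    (hinj : ∀ x ∈ S, Function.Injective
      fun b => (j b, realEval x (α b : MvPolynomial σ ℂ) + β b))
    (hloc : ∀ x ∈ S, ∃ c : B → ℂ, ∀ y,
      F x y = ∑ b, c b * expMonomial (j b) (realEval x (α b : MvPolynomial σ ℂ) + β b) y) :
    ∃ q : B → (σ → ℝ) → ℂ, (∀ b, q b ∈ expPolyFun σ) ∧ ∀ x y,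
      F x y = ∑ b, q b x * expMonomial (j b) (realEval x (α b : MvPolynomial σ ℂ) + β b) y := by
  classical
  obtain ⟨x₁, hx₁⟩ : S.Nonempty := closure_nonempty_iff.1 (hS.mono interior_subset)
  choose f hf using fun y => mem_expPolyFun.1 (hF y)
  obtain ⟨t, ht⟩ := exists_det_ne_zero_of_linearIndependent
    (linearIndependent_expMonomial (hinj x₁ hx₁) dense_univ)
  let M : Matrix B B (ExpPolyRing σ) := .of fun a b => expTerm (j b) (α b) (β b) (t a)
  have hM : M.det ≠ 0 := by
    intro hzero
    refine ht (.trans ?_ ((congrArg (evalExp x₁) hzero).trans (map_zero _)))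
    rw [RingHom.map_det]
    exact congrArg Matrix.det (Matrix.ext fun a b => (evalExp_expTerm _ _ _ _ _).symm)
  have hdet := det_mul_eq_sum_expTerm_mul hS hloc (fun x y => hf y x) fun a => t a
  choose q hq using dvd_of_forall_mul_eq_sum hdet fun a Y hY =>
    linearIndependent_expMonomial (ι := {b // α b = a}) (fun b b' hbb' => Subtype.ext
      (hinj x₁ hx₁ (by simpa only [b.2, b'.2, Prod.mk.injEq, add_right_inj] using hbb'))) hY
  have hfq (y : ℝ) : f y = ∑ b, expTerm (j b) (α b) (β b) y * q b := by
    refine mul_left_cancel₀ hM ((hdet y).trans ?_)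
    rw [Finset.mul_sum]
    exact Finset.sum_congr rfl fun b _ => by rw [hq b, mul_left_comm]
  refine ⟨fun b x => evalExp x (q b), fun b => mem_expPolyFun.2 ⟨_, fun _ => rfl⟩, fun x y => ?_⟩
  simp only [← hf, hfq, map_sum, map_mul, evalExp_expTerm, mul_comm]

end Coefficients

open MvPolynomial in
theorem exists_global_form [Finite σ] [DecidableEq σ] {F : (σ → ℝ) → ℝ → ℂ}
    (hF : ∀ y, (fun x => F x y) ∈ expPolyFun σ) (hexp : ∀ x, IsExpPoly1 (F x))
    (hH : ∀ i, ∃ n, ∀ x y, HankelRankLT n fun t : ℝ => F (x + t • Pi.single i 1) y) :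
    ∃ (B : Type) (_ : Fintype B) (j : B → ℕ) (Λ : B → MvPolynomial σ ℂ) (q : B → (σ → ℝ) → ℂ),
      (∀ b, Λ b ∈ restrictDegree σ ℂ 1) ∧ (∀ b, q b ∈ expPolyFun σ) ∧
      ∀ x y, F x y = ∑ b, q b x * expMonomial (j b) (realEval x (Λ b)) y := by
  choose p hp using fun x => (hexp x).exists_expSum_eq
  obtain rfl : (fun x => expSum (p x)) = F := funext hp
  obtain ⟨B, _, j, Λ, S, hΛ, hS, hloc⟩ := exists_local_form
    (fun y => continuous_of_mem_expPolyFun (hF y)) (exists_forall_hankelRankLT hF hexp) hH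
  choose α β hαβ using fun b => exists_multiAffine_add_C_eq (hΛ b)
  have hΛ_eval (x : σ → ℝ) (b : B) : realEval x (Λ b) =
      realEval x (α b : MvPolynomial σ ℂ) + β b := by
    rw [← hαβ, map_add, eval_C]
  simp only [hΛ_eval] at hloc ⊢
  obtain ⟨q, hq, hFq⟩ := exists_coeff_of_local_form hF hS (fun x hx => (hloc x hx).1)
    fun x hx => (hloc x hx).2
  exact ⟨B, inferInstance, j, Λ, q, hΛ, hq, by simpa only [hΛ_eval] using hFq⟩

end GlobalForm

section Separately

open MvPolynomial

variable {d : ℕ}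

theorem degreeOf_rename_of_notMem_range {σ τ R : Type*} [CommSemiring R] {g : σ → τ} {i : τ}
    (p : MvPolynomial σ R) (hi : i ∉ Set.range g) : (rename g p).degreeOf i = 0 := by
  classical
  by_contra h
  obtain ⟨k, -, hk⟩ := Finset.mem_image.1 (vars_rename g p (mem_vars_iff_degreeOf_ne_zero.2 h))
  exact hi ⟨k, hk⟩

theorem mem_expPolyFun_of_cons_eq_sum {f : (Fin (d + 1) → ℝ) → ℂ} {B : Type*} [Fintype B]
    {j : B → ℕ} {Λ : B → MvPolynomial (Fin d) ℂ} {q : B → (Fin d → ℝ) → ℂ}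
    (hΛ : ∀ b, Λ b ∈ restrictDegree (Fin d) ℂ 1) (hq : ∀ b, q b ∈ expPolyFun (Fin d))
    (hf : ∀ (y : ℝ) (x : Fin d → ℝ),
      f (Fin.cons y x) = ∑ b, q b x * expMonomial (j b) (realEval x (Λ b)) y) :
    f ∈ expPolyFun (Fin (d + 1)) := by
  have hsum : f = fun x => ∑ b, q b (x ∘ Fin.succ) *
      (realEval x (X 0 ^ j b) * Complex.exp (realEval x (rename Fin.succ (Λ b) * X 0))) := by
    funext x
    rw [← Fin.cons_self_tail x, hf]
    simp only [expMonomial, map_pow, map_mul, eval_X, eval_rename, Function.comp_def, Fin.cons_zero,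
      Fin.cons_succ]
  rw [hsum]
  refine sum_mem_expPolyFun fun b _ => mul_mem
    (comp_comp_mem_expPolyFun (hq b) (Fin.succ_injective d)) (mul_exp_mem_expPolyFun _ ?_)
  exact mul_X_mem_restrictDegree (rename_mem_restrictDegree (Fin.succ_injective d) (hΛ b))
    (Nat.lt_one_iff.2 (degreeOf_rename_of_notMem_range _ (by simp)))

theorem mem_expPolyFun_of_separately {f : (Fin d → ℝ) → ℂ}
    (hf : ∀ k a, IsExpPoly1 fun t => f (Function.update a k t)) : f ∈ expPolyFun (Fin d) := by
  induction d with
  | zero =>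
    have hconst : f = fun _ => f 0 := funext fun x => congrArg f (Subsingleton.elim x 0)
    rw [hconst]
    exact const_mem_expPolyFun _
  | succ d ih =>
    have hslice (k : Fin (d + 1)) (t : ℝ) :
        (fun x : Fin d → ℝ => f (k.insertNth t x)) ∈ expPolyFun (Fin d) := by
      refine ih fun i a => ?_
      simp only [Fin.insertNth_update]
      exact hf _ _
    have hexp (k : Fin (d + 1)) (x : Fin d → ℝ) : IsExpPoly1 fun t => f (k.insertNth t x) := by
      simpa only [Fin.update_insertNth] using hf k (k.insertNth 0 x)
    have hhankel (i : Fin d) : ∃ n, ∀ (x : Fin d → ℝ) y,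
        HankelRankLT n fun t : ℝ => f (Fin.insertNth 0 y (x + t • Pi.single i 1)) := by
      obtain ⟨n, hn⟩ := exists_forall_hankelRankLT (hslice i.succ) (hexp i.succ)
      refine ⟨n, fun x y => ?_⟩
      simpa only [add_smul_single_one, Fin.insertNth_zero', Fin.cons_update,
        Fin.insertNth_removeNth] using
        (hn (i.succ.removeNth (Fin.cons y x : Fin (d + 1) → ℝ))).comp_add_left (x i)
    obtain ⟨B, _, j, Λ, q, hΛ, hq, hsum⟩ := exists_global_form (hslice 0) (hexp 0) hhankel
    simp only [Fin.insertNth_zero'] at hsum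
    exact mem_expPolyFun_of_cons_eq_sum hΛ hq fun y x => hsum x y

end Separately

theorem ronkin_1978
    {d : ℕ} (f : (Fin d → ℝ) → ℂ)
    (hsep : ∀ (k : Fin d) (a : Fin d → ℝ),
      IsExpPoly1 (fun t : ℝ => f (Function.update a k t))) :
    ∃ (s : ℕ) (P lam : Fin s → MvPolynomial (Fin d) ℂ),
      (∀ k i, MvPolynomial.degreeOf i (lam k) ≤ 1) ∧
      ∀ x : Fin d → ℝ,
        f x = ∑ k, MvPolynomial.eval (fun i => (x i : ℂ)) (P k) *
          Complex.exp (MvPolynomial.eval (fun i => (x i : ℂ)) (lam k)) := by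
  obtain ⟨a, ha⟩ := mem_expPolyFun.1 (mem_expPolyFun_of_separately hsep)
  let e := a.coeff.support.equivFin.symm
  refine ⟨a.coeff.support.card, fun k => a.coeff (e k), fun k => ((e k).1 : MvPolynomial _ ℂ),
    fun k => mem_restrictDegree_iff_forall_degreeOf_le.1 (e k).1.2.1, fun x => ?_⟩
  rw [← ha, evalExp_eq_sum, ← Finset.sum_coe_sort, ← e.sum_comp]
end

section
/- (Solution of the Popoviciu–Ionescu functional equation in several variables.) Let n be a positive integer and let f : ℝ^d → ℂ be a continuous function such that for all x, h ∈ ℝ^d, the determinant of the (n+1)×(n+1) matrix whose (i,j) entry is f(x + (i+j)h), for 0 ≤ i, j ≤ n, equals zero. Then f is an exponential polynomial. -/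
/-- `f : ℝ^d → ℂ` is an exponential polynomial: a finite sum of terms
`P_k(x) * exp(⟨λ_k, x⟩)` with `P_k` complex polynomials and `λ_k ∈ ℂ^d`. -/
def IsExpPoly {d : ℕ} (f : (Fin d → ℝ) → ℂ) : Prop :=
  ∃ (m : ℕ) (P : Fin m → MvPolynomial (Fin d) ℂ) (lam : Fin m → Fin d → ℂ),
    ∀ x : Fin d → ℝ,
      f x = ∑ k, MvPolynomial.eval (fun i => (x i : ℂ)) (P k) *
        Complex.exp (∑ i, lam k i * x i)

/-!
Along a progression `x, x + h, x + 2h, …` the vanishing of the Hankel determinants of size `n + 1`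
gives a linear recurrence of order `n`. If the determinants of size `n` do not vanish it is unique,
so it is the same all along the progression, but a priori it depends on `x`. Along a line the
restrictions of `f` extend to entire functions, so the value at `μ` of the characteristic polynomial
becomes a quotient `D / B` of entire functions of the base point. By Baire the solutions grow at a
uniform exponential rate for an open set of steps; this bounds the characteristic roots, hence
`D / B`, and Liouville's theorem makes it constant. A fixed monic polynomial in the translation by
`h` then annihilates `f`, for every step `h` near a generic one, so lattices of mesh tending to zero
produce at most `n ^ (d + 1)` independent translates of `f`. In the limit all translates of `f` span
a finite-dimensional space, and `f` is a matrix coefficient of a continuous representation of `ℝ^d`,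
whose entries are exponential polynomials.
-/

namespace IsExpPoly

variable {d : ℕ} {f g : (Fin d → ℝ) → ℂ}

theorem of_fintype {ι : Type*} [Fintype ι] (P : ι → MvPolynomial (Fin d) ℂ) (lam : ι → Fin d → ℂ)
    (h : ∀ x : Fin d → ℝ, f x = ∑ k, MvPolynomial.eval (fun i => (x i : ℂ)) (P k) *
      Complex.exp (∑ i, lam k i * x i)) : IsExpPoly f := by
  let e := Fintype.equivFin ι
  refine ⟨Fintype.card ι, P ∘ e.symm, lam ∘ e.symm, fun x => ?_⟩
  rw [h, ← e.symm.sum_comp]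
  rfl

theorem term (P : MvPolynomial (Fin d) ℂ) (lam : Fin d → ℂ) :
    IsExpPoly fun x => MvPolynomial.eval (fun i => (x i : ℂ)) P *
      Complex.exp (∑ i, lam i * x i) :=
  of_fintype (fun _ : Unit => P) (fun _ => lam) fun x => by simp

theorem const (c : ℂ) : IsExpPoly fun _ : Fin d → ℝ => c := by
  simpa using term (MvPolynomial.C c) (0 : Fin d → ℂ)

theorem coord_pow (j : Fin d) (n : ℕ) : IsExpPoly fun x => (x j : ℂ) ^ n := by
  simpa using term (MvPolynomial.X j ^ n) 0

theorem exp_coord (j : Fin d) (μ : ℂ) : IsExpPoly fun x => Complex.exp (μ * x j) := by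
  simpa [Pi.single_apply] using term 1 (Pi.single j μ)

theorem add (hf : IsExpPoly f) (hg : IsExpPoly g) : IsExpPoly fun x => f x + g x := by
  obtain ⟨m, P, lam, hf⟩ := hf
  obtain ⟨m', P', lam', hg⟩ := hg
  refine of_fintype (Sum.elim P P') (Sum.elim lam lam') fun x => ?_
  rw [hf, hg, Fintype.sum_sum_type]
  rfl

theorem mul (hf : IsExpPoly f) (hg : IsExpPoly g) : IsExpPoly fun x => f x * g x := by
  obtain ⟨m, P, lam, hf⟩ := hf
  obtain ⟨m', P', lam', hg⟩ := hg
  refine of_fintype (fun p : Fin m × Fin m' => P p.1 * P' p.2)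
    (fun p => lam p.1 + lam' p.2) fun x => ?_
  rw [hf, hg, Finset.sum_mul_sum, Fintype.sum_prod_type]
  refine Finset.sum_congr rfl fun i _ => Finset.sum_congr rfl fun j _ => ?_
  simp only [map_mul, Pi.add_apply, add_mul, Finset.sum_add_distrib, Complex.exp_add]
  ring

theorem sum {ι : Type*} (s : Finset ι) {f : ι → (Fin d → ℝ) → ℂ}
    (hf : ∀ i ∈ s, IsExpPoly (f i)) : IsExpPoly fun x => ∑ i ∈ s, f i x := by
  classical
  induction s using Finset.induction_on with
  | empty => simpa using const 0
  | insert a s ha ih =>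
    simp only [Finset.sum_insert ha]
    exact (hf a (s.mem_insert_self a)).add (ih fun i hi => hf i (Finset.mem_insert_of_mem hi))

end IsExpPoly

namespace PopoviciuIonescu

open Matrix Polynomial Filter Topology
open scoped Pointwise

section Translation

variable {G k : Type*} [AddCommGroup G] [CommSemiring k]

variable (k) in
/-- The translation operator `f ↦ f (· + g)` on functions `G → k`. -/
def translation (g : G) : Module.End k (G → k) :=
  LinearMap.funLeft k k (· + g)

@[simp]
theorem translation_apply (g : G) (f : G → k) (x : G) : translation k g f x = f (x + g) :=
  rfl

theorem translation_mul_translation (g h : G) :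
    translation k g * translation k h = translation k (g + h) := by
  ext f x
  simp [add_assoc]

theorem translation_pow (h : G) (m : ℕ) : translation k h ^ m = translation k (m • h) := by
  induction m with
  | zero => ext f x; simp
  | succ m ih => rw [pow_succ, ih, translation_mul_translation, succ_nsmul]

theorem translation_injective (h : G) : Function.Injective (translation k h) :=
  LinearMap.funLeft_injective_of_surjective _ _ _ (add_right_surjective h)

theorem degree_lt_natDegree_add_one (p : k[X]) : p.degree < (p.natDegree + 1 : ℕ) :=
  p.degree_le_natDegree.trans_lt (WithBot.coe_lt_coe.mpr p.natDegree.lt_succ_self)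

theorem aeval_translation_apply {p : k[X]} {n : ℕ} (hp : p.degree < n) (h : G) (f : G → k)
    (x : G) : aeval (translation k h) p f x = ∑ j : Fin n, p.coeff j * f (x + (j : ℕ) • h) := by
  rcases eq_or_ne p 0 with rfl | hp₀
  · simp
  rw [aeval_eq_sum_range' ((natDegree_lt_iff_degree_lt hp₀).mpr hp), Finset.sum_range]
  simp [translation_pow]

/-- The values of `f` along the arithmetic progression with origin `x` and step `h`. -/
def sample (f : G → k) (x h : G) : ℤ → k :=
  fun m => f (x + m • h)

theorem aeval_translation_sample (p : k[X]) (f : G → k) (x h : G) (m : ℤ) :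
    aeval (translation k 1) p (sample f x h) m = aeval (translation k h) p f (x + m • h) := by
  simp only [aeval_translation_apply (degree_lt_natDegree_add_one p), sample, nsmul_one, add_smul,
    natCast_zsmul, add_assoc]

end Translation

section Hankel

variable {k : Type*} [CommRing k] {u : ℤ → k} {n : ℕ} {m : ℤ}

theorem adjugate_mul_adjugate_of_det_eq_zero {ι R : Type*} [Fintype ι] [DecidableEq ι]
    [CommRing R] [IsDomain R] {A : Matrix ι ι R} (hA : A.det = 0) (a b c d : ι) :
    A.adjugate a b * A.adjugate c d = A.adjugate a d * A.adjugate c b := by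
  have of_ne_zero : ∀ b d, A.adjugate a b ≠ 0 →
      A.adjugate a b * A.adjugate c d = A.adjugate a d * A.adjugate c b := fun b d hab => by
    let v : ι → R := A.adjugate a b • A.adjugate.col d - A.adjugate a d • A.adjugate.col b
    have hAv : A *ᵥ v = 0 := by
      have hcol : ∀ j, A *ᵥ A.adjugate.col j = 0 := fun j => by
        ext i
        have h := congrFun₂ A.mul_adjugate i j
        rwa [hA, zero_smul] at h
      simp [v, mulVec_sub, mulVec_smul, hcol]
    have hBv : A.updateRow b (Pi.single a 1) *ᵥ v = 0 := by
      ext i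
      rcases eq_or_ne i b with rfl | hi
      · simp [mulVec, v, mul_comm]
      · simpa [mulVec, hi] using congrFun hAv i
    rw [adjugate_apply] at hab
    exact sub_eq_zero.mp (congrFun (eq_zero_of_mulVec_eq_zero hab hBv) c)
  by_cases hb : A.adjugate a b = 0
  · by_cases hd : A.adjugate a d = 0
    · simp [hb, hd]
    · exact (of_ne_zero d b hd).symm
  · exact of_ne_zero b d hb

/-- The Hankel matrix of size `n` of the two-sided sequence `u`, read from the index `m` on. -/
def hankel (u : ℤ → k) (n : ℕ) (m : ℤ) : Matrix (Fin n) (Fin n) k :=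
  Matrix.of fun i j => u (m + (i : ℕ) + (j : ℕ))

/-- The Desnanot–Jacobi identity, for a singular Hankel matrix. -/
theorem det_hankel_mul_det_hankel [IsDomain k] (h : (hankel u (n + 1) m).det = 0) :
    (hankel u n m).det * (hankel u n (m + 2)).det = (hankel u n (m + 1)).det ^ 2 := by
  have minors : ∀ (a b : ℕ) (r c : Fin n → Fin (n + 1)), (∀ i, (r i : ℕ) = i + a) →
      (∀ j, (c j : ℕ) = j + b) → ((hankel u (n + 1) m).submatrix r c).det =
        (hankel u n (m + (a + b : ℕ))).det := fun a b r c hr hc => by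
    congr 1
    ext i j
    simp only [hankel, submatrix_apply, of_apply, hr, hc]
    congr 1
    push_cast
    ring
  have key := adjugate_mul_adjugate_of_det_eq_zero h (Fin.last n) (Fin.last n) 0 0
  simp only [adjugate_fin_succ_eq_det_submatrix] at key
  have last : ∀ i : Fin n, ((Fin.last n).succAbove i : ℕ) = i + 0 := by simp
  have zero : ∀ i : Fin n, ((0 : Fin (n + 1)).succAbove i : ℕ) = i + 1 := by simp
  rw [minors 0 0 _ _ last last, minors 1 1 _ _ zero zero, minors 0 1 _ _ last zero,
    minors 1 0 _ _ zero last] at key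
  have sign : ((-1 : k) ^ n) * (-1) ^ n = 1 := by rw [← mul_pow]; simp
  simp only [Fin.val_last, Fin.val_zero, pow_add] at key
  push_cast at key
  ring_nf at key sign ⊢
  simpa [sign] using key

theorem det_hankel_ne_zero [IsDomain k] (h : ∀ m, (hankel u (n + 1) m).det = 0) {m₀ : ℤ}
    (h₀ : (hankel u n m₀).det ≠ 0) (m : ℤ) : (hankel u n m).det ≠ 0 := by
  have neighbours : ∀ m, (hankel u n (m + 1)).det ≠ 0 →
      (hankel u n m).det ≠ 0 ∧ (hankel u n (m + 2)).det ≠ 0 := fun m hm =>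
    mul_ne_zero_iff.mp (det_hankel_mul_det_hankel (h m) ▸ pow_ne_zero 2 hm)
  induction m using Int.inductionOn' (b := m₀) with
  | zero => exact h₀
  | succ j _ ih => simpa [sub_add] using (neighbours (j - 1) (by simpa using ih)).2
  | pred j _ ih => exact (neighbours (j - 1) (by simpa using ih)).1

theorem hankel_mulVec_coeff {p : k[X]} (hp : p.degree < n) (u : ℤ → k) (m : ℤ) (i : Fin n) :
    (hankel u n m *ᵥ fun j => p.coeff j) i = aeval (translation k 1) p u (m + (i : ℕ)) := by
  simp [aeval_translation_apply hp, mulVec, dotProduct, hankel, mul_comm]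

theorem det_hankel_eq_zero_iff [IsDomain k] : (hankel u n m).det = 0 ↔ ∃ p : k[X], p ≠ 0 ∧
    p.degree < n ∧ ∀ i < n, aeval (translation k 1) p u (m + (i : ℕ)) = 0 := by
  classical
  rw [← exists_mulVec_eq_zero_iff]
  constructor
  · rintro ⟨v, hv, h⟩
    have hdeg := ofFn_degree_lt v
    have hcoeff : (fun j : Fin n => (ofFn n v).coeff j) = v := by
      ext j
      simp [ofFn_coeff_eq_val_of_lt]
    refine ⟨ofFn n v, fun h₀ => hv ?_, hdeg, fun i hi => ?_⟩
    · simpa [h₀, funext_iff, eq_comm] using hcoeff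
    · rw [← hankel_mulVec_coeff hdeg u m ⟨i, hi⟩, hcoeff, h, Pi.zero_apply]
  · rintro ⟨p, hp, hdeg, h⟩
    refine ⟨fun j => p.coeff j, fun h₀ => hp ?_, funext fun i => ?_⟩
    · ext j
      rcases lt_or_ge j n with hj | hj
      · exact congrFun h₀ ⟨j, hj⟩
      · exact coeff_eq_zero_of_degree_lt (hdeg.trans_le (mod_cast hj))
    · rw [hankel_mulVec_coeff hdeg, h i i.2, Pi.zero_apply]

theorem eq_zero_of_det_hankel_ne_zero [IsDomain k] (h : (hankel u n m).det ≠ 0) {p : k[X]}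
    (hdeg : p.degree < n) (hp : ∀ i < n, aeval (translation k 1) p u (m + (i : ℕ)) = 0) : p = 0 :=
  of_not_not fun hp₀ => h (det_hankel_eq_zero_iff.mpr ⟨p, hp₀, hdeg, hp⟩)

/-- The Hankel matrix of size `n + 1` with last row replaced by `1, μ, …, μ ^ n`. Its determinant
is, up to the factor `det (hankel u n m)`, the value at `μ` of the characteristic polynomial of the
recurrence satisfied by `u`. -/
def borderedHankel (u : ℤ → k) (n : ℕ) (m : ℤ) (μ : k) : Matrix (Fin (n + 1)) (Fin (n + 1)) k :=
  (hankel u (n + 1) m).updateRow (Fin.last n) fun j => μ ^ (j : ℕ)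

theorem det_borderedHankel {p : k[X]} (hmonic : p.Monic) (hdeg : p.natDegree = n)
    (hp : aeval (translation k 1) p u = 0) (m : ℤ) (μ : k) :
    (borderedHankel u n m μ).det = p.eval μ * (hankel u n m).det := by
  have hdeg' : p.degree < (n + 1 : ℕ) := hdeg ▸ degree_lt_natDegree_add_one p
  have hmulVec : borderedHankel u n m μ *ᵥ (fun j => p.coeff j) =
      Pi.single (Fin.last n) (p.eval μ) := by
    ext i
    rcases eq_or_ne i (Fin.last n) with rfl | hi
    · simp [borderedHankel, mulVec, dotProduct, eval_eq_sum_range, hdeg, Finset.sum_range, mul_comm]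
    · have h := hankel_mulVec_coeff hdeg' u m i
      rw [hp, Pi.zero_apply] at h
      simpa [borderedHankel, mulVec, hi] using h
  have hadj : (borderedHankel u n m μ).adjugate (Fin.last n) (Fin.last n) =
      (hankel u n m).det := by
    rw [adjugate_fin_succ_eq_det_submatrix, Even.neg_one_pow ⟨_, rfl⟩, one_mul]
    congr 1
    ext i j
    simp [borderedHankel, hankel]
  have h := congrFun (congrArg ((borderedHankel u n m μ).adjugate *ᵥ ·) hmulVec) (Fin.last n)
  simp only [mulVec_mulVec, adjugate_mul, smul_mulVec, one_mulVec, mulVec_single] at h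
  simpa [← hdeg, hmonic, hadj, mul_comm] using h

end Hankel

section Recurrence

variable {k : Type*} [Field k] {u : ℤ → k} {n : ℕ} {m : ℤ}

theorem exists_monic_of_det_hankel (h : (hankel u (n + 1) m).det = 0)
    (h₀ : (hankel u n m).det ≠ 0) : ∃ p : k[X], p.Monic ∧ p.degree = n ∧
      ∀ i < n + 1, aeval (translation k 1) p u (m + (i : ℕ)) = 0 := by
  obtain ⟨p, hp₀, hdeg, hp⟩ := det_hankel_eq_zero_iff.mp h
  refine ⟨p * C p.leadingCoeff⁻¹, monic_mul_leadingCoeff_inv hp₀, ?_, fun i hi => ?_⟩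
  · rw [degree_mul_leadingCoeff_inv p hp₀]
    refine le_antisymm (degree_le_of_natDegree_le <|
      Nat.lt_succ_iff.mp <| (natDegree_lt_iff_degree_lt hp₀).mpr hdeg) (not_lt.mp fun hlt => hp₀ ?_)
    exact eq_zero_of_det_hankel_ne_zero h₀ hlt fun i hi => hp i (hi.trans n.lt_succ_self)
  · rw [mul_comm, ← smul_eq_C_mul, map_smul, LinearMap.smul_apply, Pi.smul_apply, hp i hi,
      smul_zero]

theorem exists_recurrence_of_det_hankel_ne_zero (h : ∀ m, (hankel u (n + 1) m).det = 0) {m₀ : ℤ}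
    (h₀ : (hankel u n m₀).det ≠ 0) :
    ∃ p : k[X], p.Monic ∧ p.natDegree = n ∧ aeval (translation k 1) p u = 0 := by
  have hne := det_hankel_ne_zero h h₀
  choose p hmonic hdeg hp using fun m => exists_monic_of_det_hankel (h m) (hne m)
  have constant : ∀ m, p (m + 1) = p m := fun m => by
    refine sub_eq_zero.mp (eq_zero_of_det_hankel_ne_zero (hne (m + 1)) ?_ fun i hi => ?_)
    · rw [← hdeg (m + 1)]
      exact degree_sub_lt_left ((hdeg _).trans (hdeg _).symm) (hmonic _).ne_zero
        (by rw [hmonic (m + 1), hmonic m])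
    · have hm := hp m (i + 1) (Nat.succ_lt_succ hi)
      rw [Nat.cast_succ, add_comm (i : ℤ), ← add_assoc] at hm
      simp [hp (m + 1) i (hi.trans n.lt_succ_self), hm]
  have hp₀ : ∀ m, p m = p 0 := fun m => by
    induction m using Int.inductionOn' (b := 0) with
    | zero => rfl
    | succ j _ ih => rw [constant, ih]
    | pred j _ ih => rw [← ih, ← constant (j - 1), sub_add_cancel]
  refine ⟨p 0, hmonic 0, natDegree_eq_of_degree_eq_some (hdeg 0), funext fun m => ?_⟩
  simpa [hp₀ m] using hp m 0 n.succ_pos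

theorem exists_recurrence_of_det_hankel (h : ∀ m, (hankel u (n + 1) m).det = 0) :
    ∃ p : k[X], p.Monic ∧ p.natDegree ≤ n ∧ aeval (translation k 1) p u = 0 := by
  induction n with
  | zero =>
    obtain ⟨p, hmonic, hdeg, hp⟩ := exists_recurrence_of_det_hankel_ne_zero (m₀ := 0) h (by simp)
    exact ⟨p, hmonic, hdeg.le, hp⟩
  | succ n ih =>
    by_cases hdet : ∀ m, (hankel u (n + 1) m).det = 0
    · obtain ⟨p, hmonic, hdeg, hp⟩ := ih hdet
      exact ⟨p, hmonic, hdeg.trans n.le_succ, hp⟩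
    · obtain ⟨m₀, h₀⟩ := not_forall.mp hdet
      obtain ⟨p, hmonic, hdeg, hp⟩ := exists_recurrence_of_det_hankel_ne_zero h h₀
      exact ⟨p, hmonic, hdeg.le, hp⟩

end Recurrence

section IsSolution

variable {G k : Type*} [AddCommGroup G] {f : G → k} {n : ℕ}

theorem hankel_sample (f : G → k) (x h : G) (n : ℕ) (m : ℤ) :
    hankel (sample f x h) n m = hankel (sample f (x + m • h) h) n 0 := by
  ext i j
  simp [hankel, sample, add_smul, add_assoc]

variable [CommRing k]

/-- The Popoviciu–Ionescu equation of size `n`: all Hankel determinants of size `n` built on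
arithmetic progressions vanish. -/
def IsSolution (f : G → k) (n : ℕ) : Prop :=
  ∀ x h : G, (hankel (sample f x h) n 0).det = 0

theorem IsSolution.det_hankel (hf : IsSolution f n) (x h : G) (m : ℤ) :
    (hankel (sample f x h) n m).det = 0 := by
  rw [hankel_sample]
  exact hf _ h

end IsSolution

section TranslateRank

variable {G k : Type*} [AddCommGroup G] [CommSemiring k] {f : G → k} {S T : Set G} {N M : ℕ}

/-- The translates of `f` by the elements of `S` lie in the span of at most `N` translates of `f`.
The translations in the spanning family need not belong to `S`. -/
def TranslateRankLE (f : G → k) (S : Set G) (N : ℕ) : Prop :=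
  ∃ s : Finset G, s.card ≤ N ∧
    ∀ g ∈ S, translation k g f ∈ Submodule.span k ((translation k · f) '' (s : Set G))

theorem TranslateRankLE.mono (h : TranslateRankLE f S N) (hNM : N ≤ M) : TranslateRankLE f S M :=
  let ⟨s, hs, hspan⟩ := h
  ⟨s, hs.trans hNM, hspan⟩

theorem TranslateRankLE.add (hS : TranslateRankLE f S N) (hT : TranslateRankLE f T M) :
    TranslateRankLE f (S + T) (N * M) := by
  classical
  obtain ⟨s, hsN, hs⟩ := hS
  obtain ⟨t, htM, ht⟩ := hT
  refine ⟨s + t, Finset.card_add_le.trans (Nat.mul_le_mul hsN htM), ?_⟩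
  rintro _ ⟨g, hg, g', hg', rfl⟩
  set W := Submodule.span k ((translation k · f) '' ((s + t : Finset G) : Set G))
  have translate_mem : ∀ a ∈ t, translation k (g + a) f ∈ W := fun a ha => by
    have h := Submodule.mem_map_of_mem (f := translation k a) (hs g hg)
    rw [← Module.End.mul_apply, translation_mul_translation, add_comm] at h
    refine (Submodule.map_span_le _ _ _).mpr ?_ h
    rintro _ ⟨b, hb, rfl⟩
    rw [← Module.End.mul_apply, translation_mul_translation, add_comm]
    exact Submodule.subset_span ⟨b + a, Finset.coe_add s t ▸ Set.add_mem_add hb ha, rfl⟩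
  have h := Submodule.mem_map_of_mem (f := translation k g) (ht g' hg')
  rw [← Module.End.mul_apply, translation_mul_translation] at h
  refine (Submodule.map_span_le _ _ _).mpr ?_ h
  rintro _ ⟨a, ha, rfl⟩
  rw [← Module.End.mul_apply, translation_mul_translation]
  exact translate_mem a ha

theorem TranslateRankLE.sum {ι : Type*} (s : Finset ι) {S : ι → Set G}
    (h : ∀ i ∈ s, TranslateRankLE f (S i) N) : TranslateRankLE f (∑ i ∈ s, S i) (N ^ s.card) := by
  classical
  induction s using Finset.induction_on with
  | empty =>
    refine ⟨{0}, by simp, ?_⟩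
    rintro g rfl
    exact Submodule.subset_span ⟨0, by simp, rfl⟩
  | insert i s hi ih =>
    rw [Finset.sum_insert hi, Finset.card_insert_of_notMem hi, pow_succ']
    exact (h i (s.mem_insert_self i)).add (ih fun j hj => h j (Finset.mem_insert_of_mem hj))

theorem aeval_mem_span_pow {k V : Type*} [CommRing k] [Nontrivial k] [AddCommGroup V] [Module k V]
    {L : Module.End k V} {v : V} {p : k[X]} (hmonic : p.Monic) (hp : aeval L p v = 0) (q : k[X]) :
    aeval L q v ∈ Submodule.span k ((fun j : ℕ => (L ^ j) v) '' Set.Iio p.natDegree) := by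
  have hmod : aeval L q v = aeval L (q %ₘ p) v := by
    conv_lhs => rw [← modByMonic_add_div q p, mul_comm]
    simp [hp]
  rw [hmod, aeval_eq_sum_range, LinearMap.sum_apply]
  refine Submodule.sum_mem _ fun j _ => ?_
  by_cases hj : (q %ₘ p).coeff j = 0
  · simp [hj]
  · refine Submodule.smul_mem _ _ (Submodule.subset_span ⟨j, ?_, rfl⟩)
    have hdeg := (le_degree_of_ne_zero hj).trans_lt (degree_modByMonic_lt q hmonic)
    rwa [degree_eq_natDegree hmonic.ne_zero, Nat.cast_lt] at hdeg

theorem translateRankLE_zmultiples {k : Type*} [Field k] {f : G → k} {h : G} {p : k[X]}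
    (hmonic : p.Monic) (hp : aeval (translation k h) p f = 0) :
    TranslateRankLE f (AddSubgroup.zmultiples h : Set G) p.natDegree := by
  classical
  refine ⟨(Finset.range p.natDegree).image (· • h), Finset.card_image_le.trans (by simp), ?_⟩
  have himage : (translation k · f) '' ((Finset.range p.natDegree).image (· • h) : Finset G) =
      (fun j : ℕ => (translation k h ^ j) f) '' Set.Iio p.natDegree := by
    simp [Set.image_image, translation_pow]
  rw [himage]
  set W := Submodule.span k ((fun j : ℕ => (translation k h ^ j) f) '' Set.Iio p.natDegree)
  have aeval_mem : ∀ q, aeval (translation k h) q f ∈ W := aeval_mem_span_pow hmonic hp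
  have hmap_le : W.map (translation k h) ≤ W := by
    refine (Submodule.map_span_le _ _ _).mpr ?_
    rintro _ ⟨j, -, rfl⟩
    simpa [pow_succ'] using aeval_mem (X ^ (j + 1))
  have : FiniteDimensional k W :=
    FiniteDimensional.span_of_finite k ((Set.finite_Iio _).image _)
  have hmap : W.map (translation k h) = W := Submodule.eq_of_le_of_finrank_eq hmap_le
    (Submodule.equivMapOfInjective _ (translation_injective h) W).finrank_eq.symm
  have translation_zsmul : ∀ m : ℤ,
      translation k h (translation k (m • h) f) = translation k ((m + 1) • h) f := fun m => by
    rw [← Module.End.mul_apply, translation_mul_translation, add_smul, one_smul, add_comm]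
  rintro _ ⟨m, rfl⟩
  simp only
  induction m using Int.induction_on with
  | zero =>
    convert aeval_mem 1 using 1
    ext x
    simp
  | succ j ih => exact translation_zsmul j ▸ hmap_le (Submodule.mem_map_of_mem ih)
  | pred j ih =>
    rw [← sub_add_cancel (-(j : ℤ)) 1, ← translation_zsmul, ← hmap] at ih
    obtain ⟨g, hg, hgT⟩ := ih
    exact translation_injective h hgT ▸ hg

end TranslateRank

section VanishingMinors

variable {X Y k : Type*} [CommRing k] {K : X → Y → k} {N : ℕ}

/-- All minors of size `N` of the kernel `K` vanish. -/
def VanishingMinors (K : X → Y → k) (N : ℕ) : Prop :=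
  ∀ (x : Fin N → X) (y : Fin N → Y), (Matrix.of fun i j => K (x i) (y j)).det = 0

theorem VanishingMinors.comp {X' Y' : Type*} (h : VanishingMinors K N) (φ : X' → X)
    (ψ : Y' → Y) : VanishingMinors (fun x y => K (φ x) (ψ y)) N :=
  fun x y => h (φ ∘ x) (ψ ∘ y)

theorem VanishingMinors.of_tendsto [TopologicalSpace k] [IsTopologicalRing k] [T2Space k]
    {α : Type*} {l : Filter α} [l.NeBot] {K' : α → X → Y → k}
    (hlim : ∀ x y, Tendsto (fun a => K' a x y) l (𝓝 (K x y)))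
    (h : ∀ᶠ a in l, VanishingMinors (K' a) N) : VanishingMinors K N := by
  intro x y
  have hdet : Continuous (Matrix.det : Matrix (Fin N) (Fin N) k → k) :=
    Continuous.matrix_det continuous_id
  have htendsto : Tendsto (fun a => Matrix.of fun i j => K' a (x i) (y j)) l
      (𝓝 (Matrix.of fun i j => K (x i) (y j))) :=
    tendsto_pi_nhds.mpr fun i => tendsto_pi_nhds.mpr fun j => hlim _ _
  refine tendsto_nhds_unique ((hdet.tendsto _).comp htendsto) (tendsto_const_nhds.congr' ?_)
  filter_upwards [h] with a ha
  exact (ha x y).symm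

end VanishingMinors

section FiniteRank

variable {X Y k : Type*} [Field k] {K : X → Y → k} {N : ℕ}

theorem VanishingMinors.of_mem {W : Submodule k (Y → k)} [FiniteDimensional k W]
    (hN : Module.finrank k W < N) (hK : ∀ x, K x ∈ W) : VanishingMinors K N := by
  intro x y
  have hdep : ¬ LinearIndependent k (fun i => (⟨K (x i), hK _⟩ : W)) := fun hli =>
    hN.not_ge (by simpa using hli.fintype_card_le_finrank)
  obtain ⟨g, hg, i, hi⟩ := Fintype.not_linearIndependent_iff.mp hdep
  refine Matrix.exists_vecMul_eq_zero_iff.mp ⟨g, fun h => hi (congrFun h i), funext fun j => ?_⟩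
  simpa [Matrix.vecMul, dotProduct] using congrFun (congrArg Subtype.val hg) (y j)

theorem TranslateRankLE.vanishingMinors {G : Type*} [AddCommGroup G] {f : G → k} {S : Set G}
    (h : TranslateRankLE f S N) : VanishingMinors (fun (x : S) y => f (x + y)) (N + 1) := by
  classical
  obtain ⟨s, hsN, hs⟩ := h
  simp_rw [← Finset.coe_image] at hs
  refine VanishingMinors.of_mem (W := Submodule.span k (s.image (translation k · f) : Finset _))
    (Nat.lt_succ_of_le ?_) fun x => ?_
  · exact (finrank_span_finset_le_card _).trans (Finset.card_image_le.trans hsN)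
  · exact (funext fun y => congrArg f (add_comm (x : G) y)) ▸ hs x x.2

theorem VanishingMinors.schur_expansion (h : VanishingMinors K (N + 1)) (x : Fin N → X)
    (y : Fin N → Y) (hP : (Matrix.of fun i j => K (x i) (y j)).det ≠ 0) (a : X) (b : Y) :
    K a b = ∑ i, ∑ j, K a (y j) * (Matrix.of fun i j => K (x i) (y j))⁻¹ j i * K (x i) b := by
  set P : Matrix (Fin N) (Fin N) k := Matrix.of fun i j => K (x i) (y j) with hPdef
  let e : Fin N ⊕ Fin 1 ≃ Fin (N + 1) := finSumFinEquiv
  have hdet := h (Sum.elim x (fun _ => a) ∘ e.symm) (Sum.elim y (fun _ => b) ∘ e.symm)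
  rw [← Matrix.det_submatrix_equiv_self e] at hdet
  have hblocks : (Matrix.of fun i j => K ((Sum.elim x (fun _ => a) ∘ e.symm) i)
      ((Sum.elim y (fun _ => b) ∘ e.symm) j)).submatrix e e =
      fromBlocks P (Matrix.of fun i (_ : Fin 1) => K (x i) b)
        (Matrix.of fun (_ : Fin 1) j => K a (y j)) (Matrix.of fun _ _ => K a b) := by
    ext i j
    rcases i with i | i <;> rcases j with j | j <;> simp [hPdef]
  let _ := P.invertibleOfIsUnitDet (isUnit_iff_ne_zero.mpr hP)
  rw [hblocks, det_fromBlocks₁₁, mul_eq_zero, or_iff_right hP, det_fin_one,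
    Matrix.sub_apply, sub_eq_zero, Matrix.of_apply] at hdet
  simp [hdet, Matrix.mul_apply, Finset.sum_mul]

theorem VanishingMinors.exists_expansion (h : VanishingMinors K N) :
    ∃ (r : ℕ) (x : Fin r → X) (y : Fin r → Y) (Q : Matrix (Fin r) (Fin r) k),
      (Matrix.of fun i j => K (x i) (y j)) * Q = 1 ∧
      ∀ a b, K a b = ∑ i, ∑ j, K a (y j) * Q j i * K (x i) b := by
  induction N with
  | zero => simpa using h Fin.elim0
  | succ N ih =>
    by_cases hN : VanishingMinors K N
    · exact ih hN
    · simp only [VanishingMinors, not_forall] at hN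
      obtain ⟨x, y, hP⟩ := hN
      exact ⟨N, x, y, _, Matrix.mul_nonsing_inv _ (isUnit_iff_ne_zero.mpr hP),
        h.schur_expansion x y hP⟩

theorem VanishingMinors.exists_matrix_coeff [TopologicalSpace k] [IsTopologicalRing k] {G : Type*}
    [AddCommGroup G] [TopologicalSpace G] [ContinuousAdd G] {u : G → k} (hu : Continuous u)
    (h : VanishingMinors (fun a b => u (a + b)) N) :
    ∃ (r : ℕ) (M : G → Matrix (Fin r) (Fin r) k) (a b : Fin r → k), Continuous M ∧ M 0 = 1 ∧
      (∀ g g', M (g + g') = M g * M g') ∧ ∀ g, u g = a ⬝ᵥ (M g *ᵥ b) := by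
  obtain ⟨r, s, t, Q, hQ, hexp⟩ := h.exists_expansion
  refine ⟨r, fun g => (Matrix.of fun i j => u (s i + g + t j)) * Q, fun i => ∑ j, u (t j) * Q j i,
    fun i => u (s i), ?_, by simpa using hQ, fun g g' => ?_, fun g => ?_⟩
  · exact (continuous_matrix fun i j => hu.comp (by fun_prop)).matrix_mul continuous_const
  · rw [← Matrix.mul_assoc]
    refine congrArg (· * Q) (Matrix.ext fun i l => ?_)
    simpa only [Matrix.mul_apply, Matrix.of_apply, Finset.sum_mul, add_assoc]
      using hexp (s i + g) (g' + t l)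
  · have hrow : ∀ i, u (s i + g) = ∑ i', ∑ j, u (s i + g + t j) * Q j i' * u (s i') :=
      fun i => by simpa using hexp (s i + g) 0
    have hg := hexp 0 g
    simp only [zero_add] at hg
    simp only [hg, dotProduct, Matrix.mulVec, Matrix.mul_apply, Matrix.of_apply, Finset.sum_mul,
      hrow]

end FiniteRank

section RealLine

theorem tendsto_intFloor_mul_div (t : ℝ) :
    Tendsto (fun q : ℕ => (⌊t * q⌋ : ℝ) / q) atTop (𝓝 t) := by
  have hlower : Tendsto (fun q : ℕ => t - 1 / (q : ℝ)) atTop (𝓝 t) := by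
    simpa using tendsto_const_nhds.sub (tendsto_one_div_atTop_nhds_zero_nat (𝕜 := ℝ))
  refine tendsto_of_tendsto_of_tendsto_of_le_of_le' hlower tendsto_const_nhds ?_ ?_
  all_goals
    filter_upwards [eventually_gt_atTop 0] with q hq
    have hq' : (0 : ℝ) < q := by exact_mod_cast hq
  · rw [le_div_iff₀ hq', sub_mul, div_mul_cancel₀ _ hq'.ne']
    linarith [Int.lt_floor_add_one (t * q)]
  · rw [div_le_iff₀ hq']
    exact Int.floor_le _

theorem IsSolution.vanishingMinors_real {k : Type*} [Field k] [TopologicalSpace k]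
    [IsTopologicalRing k] [T2Space k] {u : ℝ → k} {n : ℕ} (hf : IsSolution u (n + 1))
    (hu : Continuous u) : VanishingMinors (fun s t => u (s + t)) (n + 1) := by
  refine VanishingMinors.of_tendsto (l := atTop) (K' := fun (q : ℕ) s t =>
    sample u 0 (q : ℝ)⁻¹ (⌊s * q⌋ + ⌊t * q⌋)) (fun s t => ?_) (Eventually.of_forall fun q => ?_)
  · refine (hu.tendsto _).comp (((tendsto_intFloor_mul_div s).add
      (tendsto_intFloor_mul_div t)).congr fun q => ?_)
    simp [add_mul, div_eq_mul_inv]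
  · obtain ⟨p, hmonic, hdeg, hp⟩ := exists_recurrence_of_det_hankel (hf.det_hankel 0 (q : ℝ)⁻¹)
    exact ((translateRankLE_zmultiples hmonic hp).mono hdeg).vanishingMinors.comp
      (fun s : ℝ => ⟨⌊s * q⌋, Int.mem_zmultiples_iff.mpr (one_dvd _)⟩) (fun t : ℝ => ⌊t * q⌋)

theorem exists_hasDerivAt_of_continuous_hom {𝔸 : Type*} [NormedRing 𝔸] [NormedAlgebra ℝ 𝔸]
    [CompleteSpace 𝔸] {M : ℝ → 𝔸} (hM : Continuous M) (h0 : M 0 = 1)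
    (hadd : ∀ s t, M (s + t) = M s * M t) : ∃ A : 𝔸, ∀ t, HasDerivAt M (M t * A) t := by
  let Φ : ℝ → 𝔸 := fun t => ∫ s in (0 : ℝ)..t, M s
  have hΦ : ∀ t, HasDerivAt Φ (M t) t := fun t => (hM.integral_hasStrictDerivAt 0 t).hasDerivAt
  have hlim : Tendsto (fun ε : ℝ => ε⁻¹ • Φ ε) (𝓝[≠] 0) (𝓝 1) := by
    simpa [Φ, h0] using (hΦ 0).tendsto_slope_zero
  obtain ⟨ε, hε⟩ := (hlim.eventually (Units.isOpen.mem_nhds isUnit_one)).exists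
  obtain ⟨B, hB⟩ := hε.exists_right_inv
  have mul_integral : ∀ t, M t * Φ ε = Φ (t + ε) - Φ t := fun t => calc
    M t * Φ ε = ∫ s in (0 : ℝ)..ε, M (t + s) := by
      simp only [hadd]
      exact ((ContinuousLinearMap.mul ℝ 𝔸 (M t)).intervalIntegral_comp_comm
        (hM.intervalIntegrable 0 ε (μ := MeasureTheory.volume))).symm
    _ = Φ (t + ε) - Φ t := by
      rw [intervalIntegral.integral_comp_add_left, add_zero]
      exact (intervalIntegral.integral_interval_sub_left (hM.intervalIntegrable _ _)
        (hM.intervalIntegrable _ _)).symm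
  have hMB : M = fun t => (ε⁻¹ • (Φ (t + ε) - Φ t)) * B := funext fun t => by
    rw [← mul_integral, ← mul_smul_comm, mul_assoc, hB, mul_one]
  refine ⟨(ε⁻¹ • (M ε - 1)) * B, fun t => ?_⟩
  have hderiv : HasDerivAt (fun t => (ε⁻¹ • (Φ (t + ε) - Φ t)) * B)
      ((ε⁻¹ • (M (t + ε) - M t)) * B) t :=
    ((((hΦ (t + ε)).comp_add_const t ε).sub (hΦ t)).const_smul ε⁻¹).mul_const B
  rw [← hMB] at hderiv
  refine hderiv.congr_deriv ?_
  rw [hadd, ← mul_assoc, mul_smul_comm, mul_sub, mul_one]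

theorem eq_exp_smul_of_hasDerivAt {𝔸 : Type*} [NormedRing 𝔸] [NormedAlgebra ℝ 𝔸]
    [CompleteSpace 𝔸] {M : ℝ → 𝔸} (h0 : M 0 = 1) {A : 𝔸}
    (hM : ∀ t, HasDerivAt M (M t * A) t) (t : ℝ) : M t = NormedSpace.exp (t • A) := by
  let : NormedAlgebra ℚ 𝔸 := NormedAlgebra.restrictScalars ℚ ℝ 𝔸
  have hderiv : ∀ t, HasDerivAt (fun t => M t * NormedSpace.exp (t • -A)) 0 t := fun t => by
    refine ((hM t).mul (hasDerivAt_exp_smul_const' (𝕂 := ℝ) (-A) t)).congr_deriv ?_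
    rw [mul_assoc, neg_mul, mul_neg, add_neg_cancel]
  have hconst : M t * NormedSpace.exp (t • -A) = 1 := by
    simpa [h0] using is_const_of_deriv_eq_zero (fun t => (hderiv t).differentiableAt)
      (fun t => (hderiv t).deriv) t 0
  have hinv : NormedSpace.exp (t • -A) * NormedSpace.exp (t • A) = 1 := by
    rw [smul_neg, ← NormedSpace.exp_add_of_commute (Commute.refl _).neg_left, neg_add_cancel,
      NormedSpace.exp_zero]
  calc M t = M t * (NormedSpace.exp (t • -A) * NormedSpace.exp (t • A)) := by rw [hinv, mul_one]
    _ = NormedSpace.exp (t • A) := by rw [← mul_assoc, hconst, one_mul]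

theorem exists_exp_smul_of_continuous_hom {𝔸 : Type*} [NormedRing 𝔸] [NormedAlgebra ℝ 𝔸]
    [CompleteSpace 𝔸] {M : ℝ → 𝔸} (hM : Continuous M) (h0 : M 0 = 1)
    (hadd : ∀ s t, M (s + t) = M s * M t) : ∃ A : 𝔸, ∀ t, M t = NormedSpace.exp (t • A) :=
  (exists_hasDerivAt_of_continuous_hom hM h0 hadd).imp fun _ hA => eq_exp_smul_of_hasDerivAt h0 hA

open scoped Matrix.Norms.Operator in
theorem VanishingMinors.exists_entire_extension {u : ℝ → ℂ} {N : ℕ}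
    (h : VanishingMinors (fun s t => u (s + t)) N) (hu : Continuous u) :
    ∃ U : ℂ → ℂ, Differentiable ℂ U ∧ ∀ t : ℝ, U t = u t := by
  obtain ⟨r, M, a, b, hM, h0, hadd, hMu⟩ := h.exists_matrix_coeff hu
  obtain ⟨A, hA⟩ := exists_exp_smul_of_continuous_hom hM h0 hadd
  refine ⟨fun z => a ⬝ᵥ (NormedSpace.exp (z • A) *ᵥ b), ?_, fun t => ?_⟩
  · let L : Matrix (Fin r) (Fin r) ℂ →ₗ[ℂ] ℂ := dotProductBilin ℂ ℂ a ∘ₗ (mulVecBilin ℂ ℂ).flip b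
    exact L.toContinuousLinearMap.differentiable.comp
      (differentiable_exp_smul_const (𝕂 := ℂ) A)
  · have hsmul : (t : ℂ) • A = t • A := Complex.coe_smul t A
    beta_reduce
    rw [hMu, hA, ← hsmul]
    rfl

end RealLine

section Growth

variable {k : Type*} [NormedField k] {u : ℤ → k} {p : k[X]}

theorem exists_norm_le_pow_of_recurrence (hmonic : p.Monic)
    (hp : aeval (translation k 1) p u = 0) : ∃ R : ℝ, ∀ m : ℕ, ‖u m‖ ≤ R ^ (m + 1) := by
  set n := p.natDegree with hn
  have recurrence : ∀ m : ℕ, u ↑(m + n) = -∑ j : Fin n, p.coeff j * u ↑(m + j) := fun m => by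
    have h := congrFun hp m
    rw [aeval_translation_apply (degree_lt_natDegree_add_one p), ← hn, Fin.sum_univ_castSucc,
      Fin.val_last, hn, hmonic.coeff_natDegree, one_mul] at h
    simpa [add_comm] using eq_neg_of_add_eq_zero_right h
  set R : ℝ := 1 + ∑ j : Fin n, ‖p.coeff j‖ + ∑ j : Fin n, ‖u (j : ℕ)‖ with hR
  have one_le : 1 ≤ R := by rw [hR, add_assoc, le_add_iff_nonneg_right]; positivity
  refine ⟨R, fun m => ?_⟩
  induction m using Nat.strong_induction_on with
  | _ m ih =>
    rcases lt_or_ge m n with hm | hm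
    · calc ‖u m‖ ≤ ∑ j : Fin n, ‖u (j : ℕ)‖ :=
          Finset.single_le_sum (f := fun j : Fin n => ‖u (j : ℕ)‖) (fun _ _ => norm_nonneg _)
            (Finset.mem_univ ⟨m, hm⟩)
        _ ≤ R := by rw [hR, le_add_iff_nonneg_left]; positivity
        _ ≤ R ^ (m + 1) := le_self_pow₀ one_le m.succ_ne_zero
    · obtain ⟨m, rfl⟩ := Nat.exists_eq_add_of_le' hm
      calc ‖u ↑(m + n)‖ ≤ ∑ j : Fin n, ‖p.coeff j‖ * ‖u ↑(m + j)‖ := by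
            rw [recurrence, norm_neg]
            exact (norm_sum_le _ _).trans_eq (by simp only [norm_mul])
        _ ≤ ∑ j : Fin n, ‖p.coeff j‖ * R ^ (m + n) := by
            gcongr with j
            exact (ih _ (by lia)).trans (pow_le_pow_right₀ one_le (by lia))
        _ ≤ R * R ^ (m + n) := by
            rw [← Finset.sum_mul]
            gcongr
            rw [hR, add_assoc, add_left_comm, le_add_iff_nonneg_right]
            positivity
        _ = R ^ (m + n + 1) := (pow_succ' _ _).symm

theorem le_of_eventually_pow_le_mul_pow {a b c : ℝ} (hb : 0 < b)
    (h : ∀ᶠ m : ℕ in atTop, a ^ m ≤ c * b ^ m) : a ≤ b := by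
  by_contra! hab
  have hlim := tendsto_pow_atTop_atTop_of_one_lt ((one_lt_div hb).mpr hab)
  obtain ⟨m, hle, hlt⟩ := (h.and (hlim.eventually_gt_atTop c)).exists
  rw [div_pow, lt_div_iff₀ (pow_pos hb m)] at hlt
  exact hlt.not_ge hle

theorem eq_pow_mul_of_aeval_X_sub_C {k : Type*} [CommRing k] {u : ℤ → k} {z : k}
    (hu : aeval (translation k 1) (X - C z) u = 0) (m : ℕ) : u m = z ^ m * u 0 := by
  induction m with
  | zero => simp
  | succ m ih =>
    have h := congrFun hu m
    rw [map_sub, aeval_X, aeval_C, LinearMap.sub_apply, Pi.sub_apply, translation_apply,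
      Module.algebraMap_end_apply, Pi.zero_apply, sub_eq_zero] at h
    rw [Nat.cast_succ, h, pow_succ', mul_assoc, ← ih, Pi.smul_apply, smul_eq_mul]

theorem norm_le_of_isRoot {R : ℝ} (hR : 0 < R) (hu : ∀ᶠ m : ℕ in atTop, ‖u m‖ ≤ R ^ (m + 1))
    (hdet : (hankel u p.natDegree 0).det ≠ 0) (hp₀ : p ≠ 0)
    (hp : aeval (translation k 1) p u = 0) {z : k} (hz : p.IsRoot z) : ‖z‖ ≤ R := by
  obtain ⟨q, rfl⟩ := dvd_iff_isRoot.mpr hz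
  have hq₀ : q ≠ 0 := right_ne_zero_of_mul hp₀
  set w := aeval (translation k 1) q u with hw
  have geometric : ∀ m : ℕ, w m = z ^ m * w 0 :=
    eq_pow_mul_of_aeval_X_sub_C (by rw [hw, ← Module.End.mul_apply, ← map_mul, hp])
  have hw₀ : w 0 ≠ 0 := fun h₀ => by
    refine hq₀ (eq_zero_of_det_hankel_ne_zero hdet (degree_lt_degree ?_ |>.trans_le
      degree_le_natDegree) fun i _ => ?_)
    · rw [natDegree_mul (X_sub_C_ne_zero z) hq₀, natDegree_X_sub_C]
      exact Nat.lt_one_add_iff.mpr le_rfl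
    · rw [zero_add, ← hw, geometric, h₀, mul_zero]
  set n := q.natDegree + 1
  have hbound : ∀ᶠ m : ℕ in atTop,
      ‖w m‖ ≤ (∑ j : Fin n, ‖q.coeff j‖ * R ^ ((j : ℕ) + 1)) * R ^ m := by
    filter_upwards [eventually_all.mpr fun j : Fin n => (tendsto_add_atTop_nat j).eventually hu]
      with m hm
    rw [hw, aeval_translation_apply (degree_lt_natDegree_add_one q), Finset.sum_mul]
    refine norm_sum_le_of_le _ fun j _ => ?_
    rw [norm_mul, mul_assoc, ← pow_add]
    gcongr
    simpa [add_comm, add_left_comm, ← add_assoc] using hm j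
  refine le_of_eventually_pow_le_mul_pow hR (hbound.mono fun m hm => ?_)
    (c := (∑ j : Fin n, ‖q.coeff j‖ * R ^ ((j : ℕ) + 1)) / ‖w 0‖)
  rwa [div_mul_eq_mul_div, le_div_iff₀ (norm_pos_iff.mpr hw₀), ← norm_pow, ← norm_mul,
    ← geometric]

theorem norm_eval_le_of_norm_roots_le [IsAlgClosed k] (hmonic : p.Monic) {R : ℝ}
    (hR : ∀ z, p.IsRoot z → ‖z‖ ≤ R) (μ : k) : ‖p.eval μ‖ ≤ (‖μ‖ + R) ^ p.natDegree := by
  have hsplits := IsAlgClosed.splits p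
  calc ‖p.eval μ‖ = (p.roots.map fun z => ‖μ - z‖).prod := by
        rw [hsplits.eval_eq_prod_roots_of_monic hmonic, ← normHom_apply, map_multiset_prod,
          Multiset.map_map]
        rfl
    _ ≤ (p.roots.map fun _ => ‖μ‖ + R).prod :=
        Multiset.prod_map_le_prod_map₀ _ _ (fun _ _ => norm_nonneg _) fun z hz =>
          (norm_sub_le μ z).trans (add_le_add_right (hR z (isRoot_of_mem_roots hz)) _)
    _ = (‖μ‖ + R) ^ p.natDegree := by
        rw [Multiset.map_const', Multiset.prod_replicate, hsplits.natDegree_eq_card_roots]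

theorem norm_det_borderedHankel_le [IsAlgClosed k] {n : ℕ}
    (h : ∀ m, (hankel u (n + 1) m).det = 0) (hdet : (hankel u n 0).det ≠ 0) {R : ℝ} (hR : 0 < R)
    (hu : ∀ᶠ m : ℕ in atTop, ‖u m‖ ≤ R ^ (m + 1)) (μ : k) :
    ‖(borderedHankel u n 0 μ).det‖ ≤ (‖μ‖ + R) ^ n * ‖(hankel u n 0).det‖ := by
  obtain ⟨p, hmonic, rfl, hp⟩ := exists_recurrence_of_det_hankel_ne_zero h hdet
  rw [det_borderedHankel hmonic rfl hp, norm_mul]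
  gcongr
  exact norm_eval_le_of_norm_roots_le hmonic
    (fun z hz => norm_le_of_isRoot hR hu hdet hmonic.ne_zero hp hz) μ

end Growth

section Liouville

theorem exists_eq_const_mul_of_norm_div_le {D B : ℂ → ℂ} (hD : Differentiable ℂ D)
    (hB : Differentiable ℂ B) (hB₀ : B ≠ 0) {K : ℝ} (h : ∀ z, ‖D z / B z‖ ≤ K) :
    ∃ a, ∀ z, D z = a * B z := by
  have analytic : ∀ {g : ℂ → ℂ}, Differentiable ℂ g → AnalyticOnNhd ℂ g Set.univ :=
    fun hg z _ => hg.analyticAt z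
  have hmero : MeromorphicOn (D / B) Set.univ := fun z _ =>
    (hD.analyticAt z).meromorphicAt.div (hB.analyticAt z).meromorphicAt
  set Q := toMeromorphicNFOn (D / B) Set.univ
  have hQ_eq : ∀ c, Q =ᶠ[𝓝[≠] c] D / B := fun c =>
    hmero.toMeromorphicNFOn_eq_self_on_nhdsNE (Set.mem_univ c)
  have hQ_le : ∀ c, ∀ᶠ z in 𝓝[≠] c, ‖Q z‖ ≤ K := fun c => (hQ_eq c).mono fun z hz => hz ▸ h z
  have hQ_diff : Differentiable ℂ Q := fun c => by
    have hNF := meromorphicNFOn_toMeromorphicNFOn (D / B) Set.univ (Set.mem_univ c)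
    refine AnalyticAt.differentiableAt <|
      hNF.meromorphicOrderAt_nonneg_iff_analyticAt.mp <| not_lt.mp fun hneg => ?_
    exact not_isBoundedUnder_of_tendsto_atTop (tendsto_norm_atTop_iff_cobounded.mpr
      (tendsto_cobounded_of_meromorphicOrderAt_neg hneg)) ⟨K, hQ_le c⟩
  have hQ_bdd : Bornology.IsBounded (Set.range Q) :=
    isBounded_iff_forall_norm_le.mpr ⟨K, Set.forall_mem_range.mpr fun c =>
      le_of_tendsto (hQ_diff.continuous.norm.continuousAt.mono_left nhdsWithin_le_nhds) (hQ_le c)⟩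
  obtain ⟨z₀, hz₀⟩ := Function.ne_iff.mp hB₀
  refine ⟨Q z₀, congrFun ((analytic hD).eq_of_frequently_eq (z₀ := z₀)
    (analytic (hB.const_mul _)) (Eventually.frequently ?_))⟩
  filter_upwards [hQ_eq z₀,
    (hB.continuous.continuousAt.eventually_ne hz₀).filter_mono nhdsWithin_le_nhds] with z hz hBz
  rw [hQ_diff.apply_eq_apply_of_bounded hQ_bdd z₀ z, hz, Pi.div_apply, div_mul_cancel₀ _ hBz]

end Liouville

section SlantedSample

/-- The values `U m (z + m • s)` of a sequence of functions along an arithmetic progression. For the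
restrictions `U m = fun t => f (x + t • y + m • h)` of `f` to parallel lines, these are the values
of `f` along a progression with step `h + s • y`. -/
def slantedSample {E F : Type*} [AddCommGroup E] (U : ℤ → E → F) (z s : E) : ℤ → F :=
  fun m => U m (z + m • s)

theorem exists_eventually_norm_slantedSample_le {E F : Type*} [NormedAddCommGroup E]
    [NormedSpace ℝ E] [CompleteSpace E] [SeminormedAddCommGroup F] {U : ℤ → E → F}
    (hU : ∀ m, Continuous (U m))
    (h : ∀ z s, ∃ R : ℝ, ∀ m : ℕ, ‖slantedSample U z s m‖ ≤ R ^ (m + 1)) :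
    ∃ R > 0, ∃ s₀, ∀ᶠ s in 𝓝 s₀, ∀ z, ∀ᶠ m : ℕ in atTop,
      ‖slantedSample U z s m‖ ≤ R ^ (m + 1) := by
  let S : ℕ → Set (E × E) := fun N => {p | ∀ m : ℕ, ‖U m (p.1 + m • p.2)‖ ≤ (N + 1 : ℝ) ^ (m + 1)}
  have hclosed : ∀ N, IsClosed (S N) := fun N => by
    simp only [S, Set.ofPred_forall]
    exact isClosed_iInter fun m =>
      isClosed_le ((hU m).comp (by fun_prop)).norm continuous_const
  have hcover : ⋃ N, S N = Set.univ := Set.eq_univ_of_forall fun p => by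
    obtain ⟨R, hR⟩ := h p.1 p.2
    obtain ⟨N, hN⟩ := exists_nat_ge R
    have hR₀ : 0 ≤ R := (norm_nonneg _).trans (by simpa using hR 0)
    refine Set.mem_iUnion.mpr ⟨N, fun m => ?_⟩
    simpa [slantedSample] using (hR m).trans (pow_le_pow_left₀ hR₀ (by linarith) _)
  obtain ⟨N, ⟨z₀, s₀⟩, hN⟩ := nonempty_interior_of_iUnion_of_closed hclosed hcover
  have hnhds : ∀ᶠ s in 𝓝 s₀, (z₀, s) ∈ S N :=
    (Continuous.prodMk_right z₀).continuousAt.eventually_mem (mem_interior_iff_mem_nhds.mp hN)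
  refine ⟨N + 1, by positivity, s₀, hnhds.eventually_nhds.mono fun s hs z => ?_⟩
  have hlim : Tendsto (fun m : ℕ => s + (m : ℝ)⁻¹ • (z - z₀)) atTop (𝓝 s) := by
    simpa using (tendsto_inv_atTop_nhds_zero_nat (𝕜 := ℝ)).smul_const (z - z₀) |>.const_add s
  filter_upwards [hlim.eventually hs, eventually_ne_atTop 0] with m hm hm₀
  have hpoint : z₀ + m • (s + (m : ℝ)⁻¹ • (z - z₀)) = z + m • s := by
    rw [smul_add, ← Nat.cast_smul_eq_nsmul ℝ m ((m : ℝ)⁻¹ • _),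
      smul_inv_smul₀ (Nat.cast_ne_zero.mpr hm₀)]
    abel
  simpa only [hpoint, slantedSample, natCast_zsmul] using hm m

variable {𝕜 : Type*} [NontriviallyNormedField 𝕜] {v : 𝕜 → ℤ → 𝕜}

theorem differentiable_det {ι : Type*} [Fintype ι] [DecidableEq ι] {A : 𝕜 → Matrix ι ι 𝕜}
    (hA : ∀ i j, Differentiable 𝕜 fun z => A z i j) : Differentiable 𝕜 fun z => (A z).det := by
  simp only [det_apply]
  exact Differentiable.fun_sum fun σ _ =>
    (Differentiable.fun_finsetProd fun i _ => hA _ _).const_smul _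

theorem differentiable_det_hankel (hv : ∀ m, Differentiable 𝕜 fun z => v z m) (n : ℕ) (m : ℤ) :
    Differentiable 𝕜 fun z => (hankel (v z) n m).det :=
  differentiable_det fun _ _ => hv _

theorem differentiable_det_borderedHankel (hv : ∀ m, Differentiable 𝕜 fun z => v z m) (n : ℕ)
    (m : ℤ) (μ : 𝕜) : Differentiable 𝕜 fun z => (borderedHankel (v z) n m μ).det := by
  refine differentiable_det fun i j => ?_
  rcases eq_or_ne i (Fin.last n) with rfl | hi
  · simp [borderedHankel]
  · simpa [borderedHankel, hi, hankel] using hv _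

variable {U : ℤ → ℂ → ℂ} {n : ℕ}

theorem differentiable_slantedSample_left (hU : ∀ m, Differentiable ℂ (U m)) (s : ℂ) (m : ℤ) :
    Differentiable ℂ fun z => slantedSample U z s m :=
  (hU m).comp (by fun_prop)

theorem differentiable_slantedSample_right (hU : ∀ m, Differentiable ℂ (U m)) (z : ℂ) (m : ℤ) :
    Differentiable ℂ fun s => slantedSample U z s m :=
  (hU m).comp (by fun_prop)

theorem eq_zero_of_eventually_ofReal {g : ℂ → ℂ} (hg : Differentiable ℂ g)
    (h : ∀ᶠ t : ℝ in 𝓝 0, g t = 0) (z : ℂ) : g z = 0 := by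
  have hlim : Tendsto ((↑) : ℝ → ℂ) (𝓝[≠] 0) (𝓝[≠] ((0 : ℝ) : ℂ)) :=
    Complex.continuous_ofReal.continuousWithinAt.tendsto_nhdsWithin fun t ht => by simpa using ht
  exact congrFun (AnalyticOnNhd.eq_of_frequently_eq (fun z _ => hg.analyticAt z)
    (fun _ _ => analyticAt_const) (hlim.frequently (h.filter_mono nhdsWithin_le_nhds).frequently)) z

theorem det_hankel_slantedSample_eq_zero (hU : ∀ m, Differentiable ℂ (U m)) {m : ℤ}
    (h : ∀ z s : ℝ, (hankel (slantedSample U z s) n m).det = 0) (z s : ℂ) :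
    (hankel (slantedSample U z s) n m).det = 0 := by
  have real_step : ∀ (s : ℝ) (z : ℂ), (hankel (slantedSample U z s) n m).det = 0 := fun s =>
    eq_zero_of_eventually_ofReal
      (differentiable_det_hankel (differentiable_slantedSample_left hU _) n m)
      (Eventually.of_forall fun z => h z s)
  exact eq_zero_of_eventually_ofReal
    (differentiable_det_hankel (differentiable_slantedSample_right hU z) n m)
    (Eventually.of_forall fun s => real_step s z) s

theorem det_borderedHankel_slantedSample_mul (hU : ∀ m, Differentiable ℂ (U m))
    (h : ∀ (z s : ℂ) (m : ℤ), (hankel (slantedSample U z s) (n + 1) m).det = 0) (z w s μ : ℂ) :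
    (borderedHankel (slantedSample U z s) n 0 μ).det * (hankel (slantedSample U w s) n 0).det =
      (borderedHankel (slantedSample U w s) n 0 μ).det *
        (hankel (slantedSample U z s) n 0).det := by
  let D : ℂ → ℂ → ℂ := fun z s => (borderedHankel (slantedSample U z s) n 0 μ).det
  let B : ℂ → ℂ → ℂ := fun z s => (hankel (slantedSample U z s) n 0).det
  obtain ⟨R, hR, s₀, hgrowth⟩ := exists_eventually_norm_slantedSample_le
    (fun m => (hU m).continuous) fun z s => by
      obtain ⟨p, hmonic, -, hp⟩ := exists_recurrence_of_det_hankel (h z s)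
      exact exists_norm_le_pow_of_recurrence hmonic hp
  have near : ∀ᶠ s in 𝓝 s₀, D z s * B w s = D w s * B z s := hgrowth.mono fun s hs => by
    by_cases hB : (fun z => B z s) = 0
    · simp [congrFun hB z, congrFun hB w]
    have bounded : ∀ z, ‖D z s / B z s‖ ≤ (‖μ‖ + R) ^ n := fun z => by
      rcases eq_or_ne (B z s) 0 with hz | hz
      · rw [hz, div_zero, norm_zero]
        positivity
      · rw [norm_div, div_le_iff₀ (norm_pos_iff.mpr hz)]
        exact norm_det_borderedHankel_le (h z s) hz hR (hs z) μ
    obtain ⟨a, ha⟩ := exists_eq_const_mul_of_norm_div_le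
      (differentiable_det_borderedHankel (differentiable_slantedSample_left hU s) n 0 μ)
      (differentiable_det_hankel (differentiable_slantedSample_left hU s) n 0) hB bounded
    simp only [D, B, ha]
    ring
  have hD := fun z => differentiable_det_borderedHankel
    (differentiable_slantedSample_right hU z) n 0 μ
  have hB := fun z => differentiable_det_hankel (differentiable_slantedSample_right hU z) n 0
  exact congrFun (AnalyticOnNhd.eq_of_eventuallyEq
    (fun s _ => ((hD z).mul (hB w)).analyticAt s)
    (fun s _ => ((hD w).mul (hB z)).analyticAt s) near) s

end SlantedSample

section CommonRecurrence

theorem continuous_det_hankel_sample {X G k : Type*} [TopologicalSpace X] [AddCommGroup G]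
    [TopologicalSpace G] [IsTopologicalAddGroup G] [CommRing k] [TopologicalSpace k]
    [IsTopologicalRing k] {f : G → k} (hf : Continuous f) {x h : X → G} (hx : Continuous x)
    (hh : Continuous h) (n : ℕ) (m : ℤ) :
    Continuous fun t => (hankel (sample f (x t) (h t)) n m).det :=
  Continuous.matrix_det <| continuous_matrix fun _ _ => hf.comp (hx.add (hh.zsmul _))

variable {E : Type*} [AddCommGroup E] [Module ℝ E] {f : E → ℂ} {n : ℕ}

theorem IsSolution.comp_line (hf : IsSolution f n) (x y : E) :
    IsSolution (fun t : ℝ => f (x + t • y)) n := fun t h => by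
  convert hf (x + t • y) (h • y) using 2
  ext i j
  simp only [hankel, sample, of_apply, add_smul, smul_assoc, add_assoc]

variable [TopologicalSpace E] [IsTopologicalAddGroup E] [ContinuousSMul ℝ E]

theorem IsSolution.exists_entire_extension (hf : IsSolution f (n + 1)) (hc : Continuous f)
    (x y : E) : ∃ U : ℂ → ℂ, Differentiable ℂ U ∧ ∀ t : ℝ, U t = f (x + t • y) := by
  have hline : Continuous fun t : ℝ => f (x + t • y) := hc.comp (by fun_prop)
  exact ((hf.comp_line x y).vanishingMinors_real hline).exists_entire_extension hline

theorem IsSolution.det_borderedHankel_mul (hf : IsSolution f (n + 1)) (hc : Continuous f)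
    (x y h : E) (μ : ℂ) :
    (borderedHankel (sample f x h) n 0 μ).det * (hankel (sample f y h) n 0).det =
      (borderedHankel (sample f y h) n 0 μ).det * (hankel (sample f x h) n 0).det := by
  choose U hU hUf using fun m : ℤ => hf.exists_entire_extension hc (x + m • h) (y - x)
  have slanted_eq : ∀ z s : ℝ,
      slantedSample U z s = sample f (x + z • (y - x)) (h + s • (y - x)) := fun z s => by
    ext m
    have hm := hUf m (z + m * s)
    push_cast at hm
    rw [slantedSample, zsmul_eq_mul, hm, sample, add_smul, smul_add, mul_smul,
      Int.cast_smul_eq_zsmul]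
    congr 1
    abel
  have key := det_borderedHankel_slantedSample_mul hU (n := n)
    (fun z s m => det_hankel_slantedSample_eq_zero hU
      (fun z s => by rw [slanted_eq]; exact hf.det_hankel _ _ m) z s) (0 : ℝ) (1 : ℝ) (0 : ℝ) μ
  rw [slanted_eq, slanted_eq] at key
  simpa using key

theorem IsSolution.aeval_translation_eq_zero (hf : IsSolution f (n + 1)) (hc : Continuous f)
    {p : ℂ[X]} {x₀ h : E} (hp : ∀ᶠ x in 𝓝 x₀, aeval (translation ℂ h) p f x = 0) :
    aeval (translation ℂ h) p f = 0 := by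
  ext x
  choose U hU hUf using fun m : ℕ => hf.exists_entire_extension hc (x₀ + m • h) (x - x₀)
  let g : ℂ → ℂ := fun z => ∑ j : Fin (p.natDegree + 1), p.coeff j * U j z
  have hg : ∀ t : ℝ, g t = aeval (translation ℂ h) p f (x₀ + t • (x - x₀)) := fun t => by
    simp only [g, aeval_translation_apply (degree_lt_natDegree_add_one p), hUf, add_right_comm]
  have hline : Tendsto (fun t : ℝ => x₀ + t • (x - x₀)) (𝓝 0) (𝓝 x₀) :=
    Continuous.tendsto' (by fun_prop) _ _ (by simp)
  have hzero := eq_zero_of_eventually_ofReal (g := g)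
    (Differentiable.fun_sum fun j _ => (hU j).const_mul (p.coeff j))
    ((hline.eventually hp).mono fun t ht => (hg t).trans ht) (1 : ℝ)
  rwa [hg, one_smul, add_sub_cancel] at hzero

theorem IsSolution.exists_recurrence (hf : IsSolution f (n + 1)) (hc : Continuous f) {x₀ h : E}
    (h₀ : (hankel (sample f x₀ h) n 0).det ≠ 0) :
    ∃ p : ℂ[X], p.Monic ∧ p.natDegree = n ∧ aeval (translation ℂ h) p f = 0 := by
  obtain ⟨p, hmonic, hdeg, hp⟩ := exists_recurrence_of_det_hankel_ne_zero (hf.det_hankel x₀ h) h₀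
  refine ⟨p, hmonic, hdeg, hf.aeval_translation_eq_zero hc (x₀ := x₀) ?_⟩
  filter_upwards [(continuous_det_hankel_sample hc continuous_id' (continuous_const (y := h)) n
    0).continuousAt.eventually_ne h₀] with x hx
  obtain ⟨q, hqmonic, hqdeg, hq⟩ := exists_recurrence_of_det_hankel_ne_zero (hf.det_hankel x h) hx
  have hqp : q = p := Polynomial.funext fun μ => by
    have key := hf.det_borderedHankel_mul hc x x₀ h μ
    rw [det_borderedHankel hqmonic hqdeg hq, det_borderedHankel hmonic hdeg hp] at key
    refine mul_right_cancel₀ (mul_ne_zero hx h₀) ?_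
    linear_combination key
  rw [← hqp]
  simpa [aeval_translation_sample] using congrFun hq 0

end CommonRecurrence

section Translates

theorem sum_smul_mem_zmultiples_add_sum {ι G : Type*} [AddCommGroup G] (s : Finset ι)
    (m : ι → ℤ) (h : G) (e : ι → G) :
    ∑ i ∈ s, m i • e i ∈ (AddSubgroup.zmultiples h : Set G) +
      ∑ i ∈ s, (AddSubgroup.zmultiples (h + e i) : Set G) := by
  refine ⟨-(∑ i ∈ s, m i) • h, ⟨_, rfl⟩, ∑ i ∈ s, m i • (h + e i), ?_, ?_⟩
  · exact Set.finsetSum_mem_finsetSum s _ _ fun i _ => ⟨m i, rfl⟩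
  · simp [smul_add, Finset.sum_add_distrib, Finset.sum_smul]

variable {E ι : Type*} [AddCommGroup E] [Module ℝ E] [TopologicalSpace E]
  [IsTopologicalAddGroup E] [ContinuousSMul ℝ E] [Fintype ι] {f : E → ℂ} {n : ℕ}

theorem tendsto_sum_intFloor_smul (b : Module.Basis ι ℝ E) (y : E) :
    Tendsto (fun q : ℕ => ∑ i, ⌊b.repr y i * q⌋ • (q : ℝ)⁻¹ • b i) atTop (𝓝 y) := by
  have hlim := tendsto_finsetSum Finset.univ fun i _ =>
    (tendsto_intFloor_mul_div (b.repr y i)).smul_const (b i)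
  rw [b.sum_repr] at hlim
  refine hlim.congr fun q => Finset.sum_congr rfl fun i _ => ?_
  rw [← Int.cast_smul_eq_zsmul ℝ, smul_smul, div_eq_mul_inv]

theorem IsSolution.vanishingMinors_of_det_ne_zero (hf : IsSolution f (n + 1)) (hc : Continuous f)
    {x₀ h₀ : E} (hdet : (hankel (sample f x₀ h₀) n 0).det ≠ 0) (b : Module.Basis ι ℝ E) :
    VanishingMinors (fun y x => f (y + x)) (n * n ^ Fintype.card ι + 1) := by
  let e : ℕ → ι → E := fun q i => (q : ℝ)⁻¹ • b i
  have near : ∀ᶠ q in atTop, ∀ i, (hankel (sample f x₀ (h₀ + e q i)) n 0).det ≠ 0 := by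
    refine eventually_all.mpr fun i => ?_
    have hlim : Tendsto (fun q => h₀ + e q i) atTop (𝓝 h₀) := by
      simpa [e] using ((tendsto_inv_atTop_nhds_zero_nat (𝕜 := ℝ)).smul_const (b i)).const_add h₀
    exact hlim.eventually ((continuous_det_hankel_sample hc (continuous_const (y := x₀))
      continuous_id' n 0).continuousAt.eventually_ne hdet)
  have rank_zmultiples : ∀ h : E, (hankel (sample f x₀ h) n 0).det ≠ 0 →
      TranslateRankLE f (AddSubgroup.zmultiples h : Set E) n := fun h hh => by
    obtain ⟨p, hmonic, rfl, hp⟩ := hf.exists_recurrence hc hh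
    exact translateRankLE_zmultiples hmonic hp
  refine VanishingMinors.of_tendsto (l := atTop) (fun y x => (hc.tendsto _).comp
    ((tendsto_sum_intFloor_smul b y).add_const x)) (near.mono fun q hq => ?_)
  exact ((rank_zmultiples h₀ hdet).add
    (.sum Finset.univ fun i _ => rank_zmultiples _ (hq i))).vanishingMinors.comp
      (fun y => ⟨_, sum_smul_mem_zmultiples_add_sum _ (fun i => ⌊b.repr y i * q⌋) h₀ (e q)⟩) id

theorem IsSolution.exists_vanishingMinors [FiniteDimensional ℝ E] (hf : IsSolution f n)
    (hc : Continuous f) : ∃ N, VanishingMinors (fun y x => f (y + x)) N := by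
  classical
  induction n with
  | zero => simpa using hf 0 0
  | succ n ih =>
    by_cases hn : IsSolution f n
    · exact ih hn
    · simp only [IsSolution, not_forall] at hn
      obtain ⟨x₀, h₀, hdet⟩ := hn
      exact ⟨_, hf.vanishingMinors_of_det_ne_zero hc hdet (Module.finBasis ℝ E)⟩

end Translates

section ExponentialPolynomials

variable {ι : Type*} [Fintype ι] [DecidableEq ι] {d : ℕ}

open scoped Matrix.Norms.Operator in
theorem exp_mulVec_of_pow_mulVec_eq_zero {B : Matrix ι ι ℂ} {N : ℕ} {v : ι → ℂ}
    (hv : B ^ N *ᵥ v = 0) :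
    NormedSpace.exp B *ᵥ v =
      ∑ k ∈ Finset.range N, (k.factorial : ℂ)⁻¹ • (B ^ k *ᵥ v) := by
  have hzero : ∀ k ∉ Finset.range N, B ^ k *ᵥ v = 0 := fun k hk => by
    rw [← Nat.sub_add_cancel (not_lt.mp (mt Finset.mem_range.mpr hk)), pow_add, ← mulVec_mulVec,
      hv, mulVec_zero]
  have hseries := (NormedSpace.exp_series_hasSum_exp' (𝕂 := ℂ) B).map
    (AddMonoidHom.mk' (· *ᵥ v) fun X Y => add_mulVec X Y v)
    (Continuous.matrix_mulVec continuous_id continuous_const)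
  refine hseries.unique ((hasSum_sum_of_ne_finset_zero fun k hk => ?_).congr_fun fun k =>
    smul_mulVec _ _ v)
  rw [hzero k hk, smul_zero]

open scoped Matrix.Norms.Operator in
theorem exp_smul_mulVec_of_pow_mulVec_eq_zero {A : Matrix ι ι ℂ} {μ : ℂ} {N : ℕ} {v : ι → ℂ}
    (hv : (A - algebraMap ℂ _ μ) ^ N *ᵥ v = 0) (t : ℂ) :
    NormedSpace.exp (t • A) *ᵥ v = Complex.exp (μ * t) • ∑ k ∈ Finset.range N,
      ((k.factorial : ℂ)⁻¹ * t ^ k) • ((A - algebraMap ℂ _ μ) ^ k *ᵥ v) := by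
  set B := A - algebraMap ℂ (Matrix ι ι ℂ) μ with hB
  have hA : t • A = algebraMap ℂ _ (μ * t) + t • B := by
    rw [hB, smul_sub, mul_comm μ t, map_mul, ← Algebra.smul_def, add_sub_cancel]
  have hscalar : NormedSpace.exp (algebraMap ℂ (Matrix ι ι ℂ) (μ * t)) =
      algebraMap ℂ _ (Complex.exp (μ * t)) := by
    rw [Complex.exp_eq_exp_ℂ]
    exact (NormedSpace.algebraMap_exp_comm _).symm
  have htv : (t • B) ^ N *ᵥ v = 0 := by rw [_root_.smul_pow, smul_mulVec, hv, smul_zero]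
  rw [hA, exp_add_of_commute _ _ (Algebra.commute_algebraMap_left _ _), hscalar,
    ← Algebra.smul_def, smul_mulVec, exp_mulVec_of_pow_mulVec_eq_zero htv]
  simp only [_root_.smul_pow, smul_mulVec, smul_smul]

theorem isExpPoly_exp_smul_mulVec (A : Matrix ι ι ℂ) (j : Fin d) (v : ι → ℂ) (i : ι) :
    IsExpPoly fun x => (NormedSpace.exp ((x j : ℂ) • A) *ᵥ v) i := by
  have hv : v ∈ ⨆ μ, Module.End.maxGenEigenspace (toLinAlgEquiv' A) μ :=
    Module.End.iSup_maxGenEigenspace_eq_top (toLinAlgEquiv' A) ▸ Submodule.mem_top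
  induction hv using Submodule.iSup_induction' with
  | zero => simpa using IsExpPoly.const 0
  | add v w _ _ hv hw => simpa only [mulVec_add, Pi.add_apply] using hv.add hw
  | mem μ v hv =>
    obtain ⟨N, hN⟩ := (Module.End.mem_maxGenEigenspace _ _ _).mp hv
    have hpow : (A - algebraMap ℂ _ μ) ^ N *ᵥ v = 0 := by
      rwa [← map_one (toLinAlgEquiv' (R := ℂ) (n := ι)), ← map_smul, ← map_sub, ← map_pow,
        toLinAlgEquiv'_apply, ← Algebra.algebraMap_eq_smul_one] at hN
    simp only [exp_smul_mulVec_of_pow_mulVec_eq_zero hpow, Pi.smul_apply, Finset.sum_apply,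
      smul_eq_mul]
    exact (IsExpPoly.exp_coord j μ).mul <| .sum _ fun k _ =>
      ((IsExpPoly.const _).mul (.coord_pow j k)).mul (.const _)

open scoped Matrix.Norms.Operator in
theorem isExpPoly_of_continuous_hom {M : (Fin d → ℝ) → Matrix ι ι ℂ} (hM : Continuous M)
    (h0 : M 0 = 1) (hadd : ∀ x y, M (x + y) = M x * M y) (i k : ι) :
    IsExpPoly fun x => M x i k := by
  have axis : ∀ (j : Fin d) (i k : ι), IsExpPoly fun x => M (Pi.single j (x j)) i k :=
    fun j i k => by
      obtain ⟨A, hA⟩ := exists_exp_smul_of_continuous_hom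
        (hM.comp (continuous_single (A := fun _ => ℝ) j)) (by simpa using h0)
        fun s t => by simp only [Function.comp_apply, Pi.single_add, hadd]
      have hA' : ∀ t : ℝ, M (Pi.single j t) = NormedSpace.exp ((t : ℂ) • A) := fun t =>
        (hA t).trans (congrArg _ (Complex.coe_smul t A).symm)
      simpa [hA'] using isExpPoly_exp_smul_mulVec A j (Pi.single k 1) i
  have face : ∀ (s : Finset (Fin d)) (i k : ι),
      IsExpPoly fun x => M (∑ j ∈ s, Pi.single j (x j)) i k := fun s => by
    induction s using Finset.induction_on with
    | empty => exact fun i k => by simpa [h0] using IsExpPoly.const _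
    | insert j s hj ih =>
      intro i k
      simp only [Finset.sum_insert hj, hadd, mul_apply]
      exact .sum _ fun l _ => (axis j i l).mul (ih l k)
  simpa only [Finset.univ_sum_single] using face Finset.univ i k

theorem isExpPoly_of_vanishingMinors {f : (Fin d → ℝ) → ℂ} (hc : Continuous f) {N : ℕ}
    (h : VanishingMinors (fun y x => f (y + x)) N) : IsExpPoly f := by
  obtain ⟨r, M, a, b, hM, h0, hadd, hf⟩ := h.exists_matrix_coeff hc
  have expand : f = fun x => ∑ i, a i * ∑ k, M x i k * b k := funext hf
  rw [expand]
  exact .sum _ fun i _ => (IsExpPoly.const _).mul <| .sum _ fun k _ =>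
    (isExpPoly_of_continuous_hom hM h0 hadd i k).mul (.const _)

end ExponentialPolynomials

end PopoviciuIonescu

theorem popoviciu_ionescu_several_variables
    {d n : ℕ} (hn : 1 ≤ n) (f : (Fin d → ℝ) → ℂ) (hf : Continuous f)
    (heq : ∀ x h : Fin d → ℝ,
      Matrix.det (fun i j : Fin (n + 1) => f (x + ((i : ℕ) + (j : ℕ)) • h)) = 0) :
    IsExpPoly f := by
  have hsol : PopoviciuIonescu.IsSolution f (n + 1) := fun x h => by
    refine (congrArg Matrix.det (Matrix.ext fun i j => ?_)).trans (heq x h)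
    simp only [PopoviciuIonescu.hankel, PopoviciuIonescu.sample, Matrix.of_apply, zero_add,
      ← Nat.cast_add, natCast_zsmul]
  obtain ⟨N, hN⟩ := hsol.exists_vanishingMinors hf
  exact PopoviciuIonescu.isExpPoly_of_vanishingMinors hf hN
end
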